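/- For every natural number k there exists a natural number t_k such that for every digraph G, either G contains k pairwise vertex-disjoint directed cycles, or there is a set X of at most t_k vertices of G such that the digraph obtained from G by deleting the vertices in X (together with all incident edges) contains no directed cycle. -/

import Mathlib

/-- `l` is the (cyclically ordered) vertex list of a directed cycle in the digraph `G`:
it has at least two pairwise distinct vertices, and every consecutive pair (including
the wrap-around from the last vertex to the first) is a directed edge of `G`. -/
def Digraph.IsDicycle {V : Type} (G : Digraph V) (l : List V) : Prop :=
  2 ≤ l.length ∧ l.Nodup ∧ ∀ e ∈ l.zip (l.rotate 1), G.Adj e.1 e.2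

/-- The list of directed edges of the directed cycle with vertex list `l`. -/
def cycleEdges {V : Type} (l : List V) : List (V × V) :=
  l.zip (l.rotate 1)

/-- The directed line graph `L(G)` of `G`: its vertices are the directed edges of `G`
(encoded as those pairs in `V × V` that are edges of `G`), and there is a directed edge
from `(a, b)` to `(c, d)` iff both are edges of `G` and `b = c`. -/
def lineDigraph {V : Type} (G : Digraph V) : Digraph (V × V) :=
  ⟨fun e f => G.Adj e.1 e.2 ∧ G.Adj f.1 f.2 ∧ e.2 = f.1⟩

/-! ### Reachability inside a set -/

def Rch {V : Type} (r : V → V → Prop) (S : Set V) (u v : V) : Prop :=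
  u ∈ S ∧ Relation.ReflTransGen (fun x y => r x y ∧ y ∈ S) u v

section Basics
variable {V : Type} {r : V → V → Prop} {S S' : Set V} {u v w x y : V}

theorem Rch.left (h : Rch r S u v) : u ∈ S := h.1

theorem Rch.refl (h : u ∈ S) : Rch r S u u := ⟨h, .refl⟩

theorem Rch.right (h : Rch r S u v) : v ∈ S := by
  obtain ⟨h1, h2⟩ := h
  induction h2 with
  | refl => exact h1
  | tail _ h _ => exact h.2

theorem Rch.trans (h : Rch r S u v) (h' : Rch r S v w) : Rch r S u w :=
  ⟨h.1, h.2.trans h'.2⟩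

theorem Rch.step (hu : u ∈ S) (hv : v ∈ S) (h : r u v) : Rch r S u v :=
  ⟨hu, .single ⟨h, hv⟩⟩

theorem Rch.mono (h : Rch r S u v) (hS : S ⊆ S') : Rch r S' u v :=
  ⟨hS h.1, Relation.ReflTransGen.mono (fun _ _ h => ⟨h.1, hS h.2⟩) _ _ h.2⟩

theorem Rch.mono_rel {r' : V → V → Prop} (h : Rch r S u v) (hr : ∀ x y, r x y → r' x y) :
    Rch r' S u v :=
  ⟨h.1, Relation.ReflTransGen.mono (fun _ _ h => ⟨hr _ _ h.1, h.2⟩) _ _ h.2⟩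

/-- forward induction -/
theorem Rch.ind {P : V → Prop} (h : Rch r S u v) (h0 : P u)
    (hs : ∀ x y, Rch r S u x → P x → r x y → y ∈ S → P y) : P v := by
  obtain ⟨h1, h2⟩ := h
  induction h2 with
  | refl => exact h0
  | tail hab h ih => exact hs _ _ ⟨h1, hab⟩ ih h.1 h.2

/-- backward induction -/
theorem Rch.ind' {P : V → Prop} (h : Rch r S u v) (h0 : P v)
    (hs : ∀ x y, Rch r S y v → P y → r x y → x ∈ S → P x) : P u := by
  have : ∀ x, Rch r S u x → Rch r S x v → (P x → P u) := by
    intro x hx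
    refine Rch.ind (P := fun x => Rch r S x v → (P x → P u)) hx (fun _ h => h) ?_
    intro a b ha ih hab hb hbv hPb
    exact ih ((Rch.step ha.right hb hab).trans hbv) (hs a b hbv hPb hab ha.right)
  exact this v h (Rch.refl h.right) h0

theorem Rch.between (h : Rch r S u v) : Rch r {x | Rch r S u x ∧ Rch r S x v} u v := by
  have : ∀ x, Rch r S x v → Rch r S u x → Rch r {x | Rch r S u x ∧ Rch r S x v} x v := by
    intro x hx
    refine Rch.ind' (P := fun x => Rch r S u x → Rch r {x | Rch r S u x ∧ Rch r S x v} x v) hx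
      (fun h' => Rch.refl ⟨h', Rch.refl hx.right⟩) ?_
    intro a b hb ih hab ha hua
    have hub : Rch r S u b := hua.trans (Rch.step ha hb.left hab)
    exact (Rch.step (S := {x | Rch r S u x ∧ Rch r S x v}) ⟨hua, (Rch.step ha hb.left hab).trans hb⟩ ⟨hub, hb⟩ hab).trans (ih hub)
  exact this u h (Rch.refl h.1)

/-- first vertex in `B` -/
theorem Rch.first {B : Set V} (h : Rch r S u v) (hv : v ∈ B) :
    ∃ w ∈ B, Rch r (S \ B ∪ {w}) u w ∧ Rch r S w v := by
  refine Rch.ind' (P := fun u => ∃ w ∈ B, Rch r (S \ B ∪ {w}) u w ∧ Rch r S w v) h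
    ⟨v, hv, Rch.refl (by simp), Rch.refl h.right⟩ ?_
  rintro x y hy ⟨w, hw, h1, h2⟩ hxy hx
  by_cases hxB : x ∈ B
  · exact ⟨x, hxB, Rch.refl (by simp), (Rch.step hx hy.left hxy).trans hy⟩
  · exact ⟨w, hw, (Rch.step (S := S \ B ∪ {w}) (Or.inl ⟨hx, hxB⟩) h1.left hxy).trans h1, h2⟩

/-- last vertex in `A` -/
theorem Rch.last {A : Set V} (h : Rch r S u v) (hu : u ∈ A) :
    ∃ w ∈ A, Rch r (S \ A ∪ {w}) w v ∧ Rch r S u w := by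
  refine Rch.ind (P := fun v => ∃ w ∈ A, Rch r (S \ A ∪ {w}) w v ∧ Rch r S u w) h
    ⟨u, hu, Rch.refl (by simp), Rch.refl h.left⟩ ?_
  rintro x y hy ⟨w, hw, h1, h2⟩ hxy hx
  by_cases hxB : y ∈ A
  · exact ⟨y, hxB, Rch.refl (by simp), hy.trans (Rch.step hy.right hx hxy)⟩
  · exact ⟨w, hw, h1.trans (Rch.step h1.right (Or.inl ⟨hx, hxB⟩) hxy), h2⟩

/-- if the start is in `Z` and `Z` is never left, the whole reach stays in `Z` -/
theorem Rch.stay {Z : Set V} (h : Rch r S u v) (hu : u ∈ Z)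
    (hZ : ∀ x y, x ∈ Z → x ∈ S → y ∈ S → r x y → y ∈ Z) : Rch r (S ∩ Z) u v := by
  refine Rch.ind (P := fun v => Rch r (S ∩ Z) u v) h (Rch.refl ⟨h.1, hu⟩) ?_
  intro x y _ hx hxy hy
  exact hx.trans (Rch.step hx.right ⟨hy, hZ x y hx.right.2 hx.right.1 hy hxy⟩ hxy)

theorem Rch.path (h : Rch r S u v) : ∃ (L : ℕ) (p : ℕ → V), p 0 = u ∧ p L = v ∧
    (∀ i < L, r (p i) (p (i+1))) ∧ (∀ i ≤ L, p i ∈ S) ∧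
    (∀ i j, i ≤ L → j ≤ L → p i = p j → i = j) := by
  classical
  have ex : ∃ L, ∃ p : ℕ → V, p 0 = u ∧ p L = v ∧
    (∀ i < L, r (p i) (p (i+1))) ∧ (∀ i ≤ L, p i ∈ S) := by
    refine Rch.ind (P := fun v => ∃ L, ∃ p : ℕ → V, p 0 = u ∧ p L = v ∧
      (∀ i < L, r (p i) (p (i+1))) ∧ (∀ i ≤ L, p i ∈ S)) h
      ⟨0, fun _ => u, rfl, rfl, by simp, fun _ _ => h.1⟩ ?_
    rintro x y _ ⟨L, p, h0, hL, hr, hm⟩ hxy hy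
    refine ⟨L+1, fun i => if i ≤ L then p i else y, by simp [h0], by simp, ?_, ?_⟩
    · intro i hi
      rcases Nat.lt_succ_iff_lt_or_eq.1 hi with h | h
      · simp [h.le, Nat.succ_le_of_lt h, hr i h]
      · subst h; simp [hL, hxy]
    · intro i hi
      dsimp
      split_ifs with h
      · exact hm i h
      · exact hy
  obtain ⟨p, h0, hL, hr, hm⟩ := Nat.find_spec ex
  refine ⟨Nat.find ex, p, h0, hL, hr, hm, ?_⟩
  have key : ∀ i j, i < j → j ≤ Nat.find ex → p i ≠ p j := by
    intro i j hij hj he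
    have hlt : Nat.find ex - (j - i) < Nat.find ex := by omega
    apply Nat.find_min ex hlt
    refine ⟨fun k => if k ≤ i then p k else p (k + (j - i)), by simp [h0], ?_, ?_, ?_⟩
    · dsimp
      split_ifs with h
      · have : j = Nat.find ex := by omega
        have h2 : Nat.find ex - (j - i) = i := by omega
        rw [h2, he, this, hL]
      · rw [show Nat.find ex - (j - i) + (j - i) = Nat.find ex by omega, hL]
    · intro k hk
      dsimp
      rcases lt_trichotomy k i with h | h | h
      · simp [h.le, Nat.succ_le_of_lt h, hr k (by omega)]
      · subst h
        simp only [le_refl, if_true, if_neg (show ¬ (k+1 ≤ k) by omega)]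
        rw [he, show k + 1 + (j - k) = j + 1 by omega]
        exact hr j (by omega)
      · rw [if_neg (by omega), if_neg (by omega), show k + 1 + (j - i) = k + (j-i) + 1 by omega]
        exact hr _ (by omega)
    · intro k hk
      dsimp
      split_ifs
      · exact hm _ (by omega)
      · exact hm _ (by omega)
  intro i j hi hj he
  rcases lt_trichotomy i j with h | h | h
  · exact absurd he (key i j h hj)
  · exact h
  · exact absurd he.symm (key j i h hi)

/-- reach along a sequence -/
theorem Rch.of_path {p : ℕ → V} {a b : ℕ} (hab : a ≤ b) (hr : ∀ i, a ≤ i → i < b → r (p i) (p (i+1)))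
    (hS : ∀ i, a ≤ i → i ≤ b → p i ∈ S) : Rch r S (p a) (p b) := by
  induction b, hab using Nat.le_induction with
  | base => exact Rch.refl (hS a le_rfl le_rfl)
  | succ b hb ih =>
    refine (ih (fun i h1 h2 => hr i h1 (by omega)) (fun i h1 h2 => hS i h1 (by omega))).trans
      (Rch.step (hS b hb (by omega)) (hS _ (by omega) le_rfl) (hr b hb (by omega)))

def HasCyc (r : V → V → Prop) (S : Set V) : Prop := ∃ u v, r u v ∧ u ∈ S ∧ Rch r S v u

theorem HasCyc.mono (h : HasCyc r S) (hS : S ⊆ S') : HasCyc r S' := by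
  obtain ⟨u, v, h1, h2, h3⟩ := h
  exact ⟨u, v, h1, hS h2, h3.mono hS⟩

theorem HasCyc.of_rch (h1 : Rch r S u v) (h2 : Rch r S v u) (hne : u ≠ v) : HasCyc r S := by
  obtain ⟨hu, h1⟩ := h1
  rcases Relation.ReflTransGen.cases_head h1 with h | ⟨w, hw, hwv⟩
  · exact absurd h hne
  · exact ⟨u, w, hw.1, hu, Rch.trans ⟨hw.2, hwv⟩ h2⟩

def Pack (r : V → V → Prop) (n : ℕ) : Prop :=
  ∃ f : ℕ → Set V, (∀ i < n, HasCyc r (f i)) ∧ ∀ i < n, ∀ j < n, i ≠ j → Disjoint (f i) (f j)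

structure Trace (r : V → V → Prop) (S : Set V) (s t : V) : Prop where
  tto : ∀ x ∈ S, Rch r S s x
  fro : ∀ x ∈ S, Rch r S x t
  tot : ∀ x ∈ S, ∀ y ∈ S, Rch r S x y ∨ Rch r S y x
  ne : s ∈ S

theorem Trace.rch (h : Trace r S u v) : Rch r S u v := h.fro _ h.ne
theorem Trace.mem_right (h : Trace r S u v) : v ∈ S := h.rch.right

theorem Rch.trace (h : Rch r S u v) : ∃ S' ⊆ S, Trace r S' u v := by
  obtain ⟨L, p, h0, hL, hr, hm, -⟩ := h.path
  have key : ∀ a b, a ≤ b → b ≤ L → Rch r {x | ∃ i ≤ L, x = p i} (p a) (p b) := fun a b hab hb =>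
    Rch.of_path hab (fun i _ h => hr i (by omega)) (fun i _ h => ⟨i, by omega, rfl⟩)
  refine ⟨{x | ∃ i ≤ L, x = p i}, ?_, ?_, ?_, ?_, ?_⟩
  · rintro x ⟨i, hi, rfl⟩; exact hm i hi
  · rintro x ⟨i, hi, rfl⟩; rw [← h0]; exact key _ _ (by omega) hi
  · rintro x ⟨i, hi, rfl⟩; rw [← hL]; exact key _ _ hi le_rfl
  · rintro x ⟨i, hi, rfl⟩ y ⟨j, hj, rfl⟩
    rcases le_total i j with h | h
    · exact Or.inl (key _ _ h hj)
    · exact Or.inr (key _ _ h hi)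
  · exact ⟨0, by omega, h0.symm⟩

theorem HasCyc.dicycle {G : Digraph V} (hG : ∀ v, ¬ G.Adj v v) (h : HasCyc G.Adj S) :
    ∃ l, G.IsDicycle l ∧ ∀ v ∈ l, v ∈ S := by
  obtain ⟨u, v, huv, hu, hvu⟩ := h
  obtain ⟨L, p, h0, hL, hr, hm, hinj⟩ := hvu.path
  have hL0 : L ≠ 0 := by
    rintro rfl
    rw [h0] at hL; subst hL
    exact hG _ huv
  refine ⟨(List.range (L+1)).map p, ⟨by simp; omega, ?_, ?_⟩, ?_⟩
  · refine List.Nodup.map_on ?_ List.nodup_range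
    intro x hx y hy hxy
    simp at hx hy
    exact hinj x y (by omega) (by omega) hxy
  · intro e he
    obtain ⟨i, hi, rfl⟩ := List.mem_iff_getElem.1 he
    simp at hi
    simp only [List.getElem_zip, List.getElem_rotate, List.getElem_map, List.getElem_range,
      List.length_map, List.length_range]
    rcases lt_or_eq_of_le hi with h | h
    · rw [Nat.mod_eq_of_lt (by omega)]; exact hr i h
    · subst h; simp [hL, h0, huv]
  · intro x hx
    simp at hx
    obtain ⟨i, hi, rfl⟩ := hx
    exact hm i (by omega)

theorem HasCyc.of_dicycle {G : Digraph V} {l : List V} (h : G.IsDicycle l) :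
    HasCyc G.Adj {v | v ∈ l} := by
  obtain ⟨h1, h2, h3⟩ := h
  have key : ∀ i (hi : i < l.length), G.Adj l[i] (l[(i+1) % l.length]'(Nat.mod_lt _ (by omega))) := by
    intro i hi
    refine h3 (l[i], (l[(i+1) % l.length]'(Nat.mod_lt _ (by omega)))) ?_
    rw [List.mem_iff_getElem]
    exact ⟨i, by simpa using hi, by simp [List.getElem_rotate]⟩
  refine ⟨l[l.length - 1], l[0], ?_, List.getElem_mem _, ?_⟩
  · have := key (l.length - 1) (by omega)
    simpa [show l.length - 1 + 1 = l.length by omega] using this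
  · have := Rch.of_path (r := G.Adj) (S := {v | v ∈ l}) (p := fun i => if h : i < l.length then l[i] else l[0])
      (a := 0) (b := l.length - 1) (by omega) ?_ ?_
    · simpa [show 0 < l.length by omega, show l.length - 1 < l.length by omega] using this
    · intro i _ hi
      have := key i (by omega)
      simpa [show i < l.length by omega, show i + 1 < l.length by omega, Nat.mod_eq_of_lt (show i + 1 < l.length by omega)] using this
    · intro i _ hi
      simp [show i < l.length by omega]

end Basics

/-! ### Ramsey -/
section Ramsey

theorem enum_finset (A : Finset ℕ) (m : ℕ) (h : m ≤ A.card) :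
    ∃ g : ℕ → ℕ, StrictMono g ∧ ∀ i < m, g i ∈ A := by
  classical
  obtain ⟨B, hB, hc⟩ := Finset.exists_subset_card_eq h
  let e := B.orderEmbOfFin hc
  refine ⟨fun i => if h : i < m then e ⟨i, h⟩ else B.sup id + 1 + i, ?_, ?_⟩
  · intro i j hij
    dsimp
    split_ifs with h1 h2 h2
    · exact e.strictMono (by simpa using hij)
    · have : e ⟨i, h1⟩ ≤ B.sup id := Finset.le_sup (f := id) (B.orderEmbOfFin_mem hc _)
      omega
    · omega
    · omega
  · intro i hi
    simp [hi]
    exact hB (B.orderEmbOfFin_mem hc _)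

theorem pigeon_finset {κ : Type*} [Finite κ] (m : ℕ) : ∃ N : ℕ, ∀ (A : Finset ℕ) (f : ℕ → κ), N ≤ A.card →
    ∃ k, ∃ B ⊆ A, m ≤ B.card ∧ ∀ i ∈ B, f i = k := by
  classical
  cases nonempty_fintype κ
  refine ⟨Fintype.card κ * m + 1, fun A f hA => ?_⟩
  obtain ⟨k, -, hk⟩ := Finset.exists_lt_card_fiber_of_mul_lt_card_of_maps_to (s := A) (t := Finset.univ) (f := f)
    (n := m) (fun _ _ => Finset.mem_univ _) (by rw [Finset.card_univ]; omega)
  exact ⟨k, _, Finset.filter_subset _ _, hk.le, fun i hi => (Finset.mem_filter.1 hi).2⟩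

theorem pigeon (κ : Type*) [Finite κ] (m : ℕ) : ∃ N : ℕ, m ≤ N ∧ ∀ f : ℕ → κ,
    ∃ g : ℕ → ℕ, StrictMono g ∧ (∀ i < m, g i < N) ∧ ∃ k, ∀ i < m, f (g i) = k := by
  obtain ⟨N, hN⟩ := pigeon_finset (κ := κ) m
  refine ⟨max m N, by omega, fun f => ?_⟩
  obtain ⟨k, B, hB, hc, hk⟩ := hN (Finset.range (max m N)) f (by simp)
  obtain ⟨g, hg, hgB⟩ := enum_finset B m hc
  exact ⟨g, hg, fun i hi => Finset.mem_range.1 (hB (hgB i hi)), k, fun i hi => hk _ (hgB i hi)⟩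

theorem ramsey (κ : Type*) [Finite κ] (m : ℕ) : ∃ N : ℕ, m ≤ N ∧ ∀ c : ℕ → ℕ → κ,
    ∃ g : ℕ → ℕ, StrictMono g ∧ (∀ i < m, g i < N) ∧ ∃ k, ∀ i j, i < j → j < m → c (g i) (g j) = k := by
  classical
  have pre : ∀ m : ℕ, ∃ N : ℕ, ∀ (c : ℕ → ℕ → κ) (A : Finset ℕ), N ≤ A.card → ∃ g : ℕ → ℕ, ∃ col : ℕ → κ,
      (∀ i j, i < j → j < m → g i < g j ∧ c (g i) (g j) = col i) ∧ ∀ i < m, g i ∈ A := by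
    intro m
    induction m with
    | zero =>
      refine ⟨1, fun c A hA => ⟨id, fun _ => c 0 0, by omega, by omega⟩⟩
    | succ m ih =>
      obtain ⟨N, hN⟩ := ih
      obtain ⟨M, hM⟩ := pigeon_finset (κ := κ) N
      refine ⟨M + 1, fun c A hA => ?_⟩
      have hne : A.Nonempty := Finset.card_pos.1 (by omega)
      set a := A.min' hne
      obtain ⟨k, B, hB, hc, hk⟩ := hM (A.erase a) (c a)
        (by rw [Finset.card_erase_of_mem (A.min'_mem hne)]; omega)
      obtain ⟨g, col, hg, hgB⟩ := hN c B hc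
      have hlt : ∀ b ∈ B, a < b := fun b hb => by
        have := Finset.mem_erase.1 (hB hb)
        exact lt_of_le_of_ne (A.min'_le _ this.2) (Ne.symm this.1)
      refine ⟨fun i => if i = 0 then a else g (i-1), fun i => if i = 0 then k else col (i-1), ?_, ?_⟩
      · intro i j hij hj
        have hj0 : j ≠ 0 := by omega
        by_cases hi : i = 0
        · subst hi
          simp only [hj0, if_true, if_false]
          exact ⟨hlt _ (hgB _ (by omega)), hk _ (hgB _ (by omega))⟩
        · simp only [hj0, hi, if_false]
          exact hg _ _ (by omega) (by omega)
      · intro i hi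
        by_cases h : i = 0
        · simp [h, a, A.min'_mem hne]
        · simp only [h, if_false]
          exact (Finset.mem_erase.1 (hB (hgB _ (by omega)))).2
  obtain ⟨M, hmM, hM⟩ := pigeon κ m
  obtain ⟨N, hN⟩ := pre M
  refine ⟨max m N, by omega, fun c => ?_⟩
  obtain ⟨g, col, hg, hgB⟩ := hN c (Finset.range (max m N)) (by simp)
  obtain ⟨h, hh, hhM, k, hk⟩ := hM col
  obtain ⟨e, he, heB⟩ := enum_finset ((Finset.range m).image (fun i => g (h i))) m (by
    rw [Finset.card_image_of_injOn, Finset.card_range]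
    intro i hi j hj hij
    simp at hi hj
    by_contra hne
    rcases Nat.lt_or_gt_of_ne hne with h' | h'
    · exact absurd hij (hg _ _ (hh h') (hhM _ hj)).1.ne
    · exact absurd hij (hg _ _ (hh h') (hhM _ hi)).1.ne')
  refine ⟨e, he, ?_, k, ?_⟩
  · intro i hi
    obtain ⟨j, hj, hje⟩ := Finset.mem_image.1 (heB i hi)
    rw [← hje]
    exact Finset.mem_range.1 (hgB _ (hhM _ (by simpa using hj)))
  · intro i j hij hj
    obtain ⟨i', hi', hie⟩ := Finset.mem_image.1 (heB i (by omega))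
    obtain ⟨j', hj', hje⟩ := Finset.mem_image.1 (heB j hj)
    simp at hi' hj'
    have hlt := he hij
    rw [← hie, ← hje] at hlt ⊢
    have : i' < j' := by
      by_contra hle
      rcases Nat.eq_or_lt_of_le (not_lt.1 hle) with h' | h'
      · subst h'; exact lt_irrefl _ hlt
      · exact absurd hlt (hg _ _ (hh h') (hhM _ hi')).1.asymm
    rw [(hg _ _ (hh this) (hhM _ hj')).2, hk _ hi']

theorem independent (s m : ℕ) : ∃ N : ℕ, m ≤ N ∧ ∀ ρ : ℕ → ℕ → Prop,
    (∀ k < N, ∀ A : Finset ℕ, (∀ j ∈ A, j < N ∧ j ≠ k ∧ ρ k j) → A.card < s) →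
    ∃ g : ℕ → ℕ, StrictMono g ∧ (∀ i < m, g i < N) ∧ ∀ i < m, ∀ j < m, i ≠ j → ¬ ρ (g i) (g j) := by
  obtain ⟨N, hmN, hN⟩ := ramsey (Prop × Prop) (m + s + 2)
  refine ⟨N, by omega, fun ρ hρ => ?_⟩
  obtain ⟨g, hg, hgN, k, hk⟩ := hN (fun i j => (ρ i j, ρ j i))
  refine ⟨g, hg, fun i hi => hgN i (by omega), ?_⟩
  have h1 : ¬ k.1 := by
    intro h
    have := hρ (g 0) (hgN 0 (by omega)) ((Finset.range s).image (fun i => g (i+1))) (by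
      intro j hj
      obtain ⟨i, hi, rfl⟩ := Finset.mem_image.1 hj
      simp at hi
      refine ⟨hgN _ (by omega), (hg (by omega : 0 < i+1)).ne', ?_⟩
      have := hk 0 (i+1) (by omega) (by omega)
      rw [← this] at h; exact h)
    rw [Finset.card_image_of_injective, Finset.card_range] at this
    · omega
    · intro a b hab; have := hg.injective hab; omega
  have h2 : ¬ k.2 := by
    intro h
    have := hρ (g s) (hgN s (by omega)) ((Finset.range s).image g) (by
      intro j hj
      obtain ⟨i, hi, rfl⟩ := Finset.mem_image.1 hj
      simp at hi
      refine ⟨hgN _ (by omega), (hg hi).ne, ?_⟩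
      have := hk i s hi (by omega)
      rw [← this] at h; exact h)
    rw [Finset.card_image_of_injective _ hg.injective, Finset.card_range] at this
    omega
  intro i hi j hj hij h
  rcases Nat.lt_or_gt_of_ne hij with h' | h'
  · rw [← hk i j h' (by omega)] at h1; exact h1 h
  · rw [← hk j i h' (by omega)] at h2; exact h2 h

end Ramsey

/-! ### Menger -/
section Menger
variable {V : Type} {r : V → V → Prop} {S S' : Set V} {u v w x y : V}

theorem Rch.mono_rel' {r' : V → V → Prop} (h : Rch r S u v)
    (hr : ∀ x ∈ S, ∀ y ∈ S, r x y → r' x y) : Rch r' S u v := by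
  refine Rch.ind (P := fun v => Rch r' S u v) h (Rch.refl h.1) ?_
  intro x y hx ih hxy hy
  exact ih.trans (Rch.step hx.right hy (hr _ hx.right _ hy hxy))

structure Linkage (r : V → V → Prop) (A B : Set V) (k : ℕ) (S : ℕ → Set V) (s t : ℕ → V) : Prop where
  hs : ∀ i < k, s i ∈ A
  ht : ∀ i < k, t i ∈ B
  hr : ∀ i < k, Rch r (S i) (s i) (t i)
  hd : ∀ i < k, ∀ j < k, i ≠ j → Disjoint (S i) (S j)

theorem Rch.trim {X : Set V} (h : Rch r S u v) (hX : ∀ z ∈ S, z ∈ X → z = v) :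
    ∃ S0 ⊆ S, Rch r S0 u v ∧ ∀ z ∈ S0, z ∉ X → Rch r Xᶜ u z := by
  obtain ⟨L, p, h0, hL, hr, hm, hinj⟩ := h.path
  refine ⟨{z | ∃ i ≤ L, z = p i}, ?_, ?_, ?_⟩
  · rintro z ⟨i, hi, rfl⟩; exact hm i hi
  · rw [← h0, ← hL]
    exact Rch.of_path (by omega) (fun i _ h => hr i h) (fun i _ h => ⟨i, h, rfl⟩)
  · rintro z ⟨i, hi, rfl⟩ hz
    rw [← h0]
    refine Rch.of_path (by omega) (fun i _ h => hr i (by omega)) (fun j _ hj hjX => ?_)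
    have := hX _ (hm j (by omega)) hjX
    rw [← hL] at this
    have := hinj _ _ (by omega) le_rfl this
    have : i = j := by omega
    subst this; exact hz hjX

theorem Rch.trim' {X : Set V} (h : Rch r S u v) (hX : ∀ z ∈ S, z ∈ X → z = u) :
    ∃ S0 ⊆ S, Rch r S0 u v ∧ ∀ z ∈ S0, z ∉ X → Rch r Xᶜ z v := by
  obtain ⟨L, p, h0, hL, hr, hm, hinj⟩ := h.path
  refine ⟨{z | ∃ i ≤ L, z = p i}, ?_, ?_, ?_⟩
  · rintro z ⟨i, hi, rfl⟩; exact hm i hi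
  · rw [← h0, ← hL]
    exact Rch.of_path (by omega) (fun i _ h => hr i h) (fun i _ h => ⟨i, h, rfl⟩)
  · rintro z ⟨i, hi, rfl⟩ hz
    rw [← hL]
    refine Rch.of_path hi (fun i _ h => hr i (by omega)) (fun j hji hj hjX => ?_)
    have := hX _ (hm j (by omega)) hjX
    rw [← h0] at this
    have := hinj _ _ (by omega) (by omega) this
    have : i = j := by omega
    subst this; exact hz hjX

theorem surj_of_inj {k : ℕ} {f : ℕ → V} {C : Finset V} (hC : C.card ≤ k) (hf : ∀ i < k, f i ∈ C)
    (hinj : ∀ i < k, ∀ j < k, f i = f j → i = j) : ∀ c ∈ C, ∃ i < k, f i = c := by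
  classical
  have : (Finset.range k).image f = C := by
    apply Finset.eq_of_subset_of_card_le
    · intro c hc
      obtain ⟨i, hi, rfl⟩ := Finset.mem_image.1 hc
      exact hf i (by simpa using hi)
    · rw [Finset.card_image_of_injOn, Finset.card_range]
      · exact hC
      · intro i hi j hj h; exact hinj i (by simpa using hi) j (by simpa using hj) h
  intro c hc
  rw [← this] at hc
  obtain ⟨i, hi, rfl⟩ := Finset.mem_image.1 hc
  exact ⟨i, by simpa using hi, rfl⟩

theorem menger [Finite V] [Nonempty V] (r : V → V → Prop) (A B : Set V) (k : ℕ) :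
    (∃ S s t, Linkage r A B k S s t) ∨
    ∃ X : Finset V, X.card < k ∧ ∀ a ∈ A, ∀ b ∈ B, ¬ Rch r (↑X : Set V)ᶜ a b := by
  classical
  cases nonempty_fintype V
  obtain ⟨n, hn⟩ : ∃ n, {p : V × V | r p.1 p.2}.ncard = n := ⟨_, rfl⟩
  induction n using Nat.strong_induction_on generalizing r A B with
  | _ n ih =>
  by_cases hE : ∃ x y, r x y
  swap
  · push Not at hE
    set X : Finset V := Finset.univ.filter (fun v => v ∈ A ∧ v ∈ B) with hX
    rcases Nat.lt_or_ge X.card k with h | h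
    · right
      refine ⟨X, h, ?_⟩
      intro a ha b hb hab
      have : a = b := by
        refine Rch.ind (P := fun b => a = b) hab rfl ?_
        intro x y _ _ hxy; exact absurd hxy (hE _ _)
      subst this
      exact hab.left (by simp [hX, ha, hb])
    · left
      obtain ⟨Y, hY, hc⟩ := Finset.exists_subset_card_eq h
      have e := Y.equivFinOfCardEq hc
      by_cases hk : k = 0
      · subst hk
        exact ⟨fun _ => ∅, fun _ => Classical.ofNonempty, fun _ => Classical.ofNonempty,
          ⟨by omega, by omega, by omega, by omega⟩⟩
      · have hkp : 0 < k := by omega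
        let f : ℕ → V := fun i => if h : i < k then e.symm ⟨i, h⟩ else e.symm ⟨0, hkp⟩
        have hf : ∀ i < k, f i ∈ X := by
          intro i hi; simp only [f, hi, dif_pos]; exact hY (e.symm _).2
        refine ⟨fun i => {f i}, f, f, ⟨fun i hi => ?_, fun i hi => ?_, fun i _ => Rch.refl rfl, ?_⟩⟩
        · have := hf i hi; simp [hX] at this; exact this.1
        · have := hf i hi; simp [hX] at this; exact this.2
        · intro i hi j hj hij
          rw [Set.disjoint_singleton]
          intro h
          simp only [f, hi, hj, dif_pos] at h
          have := e.symm.injective (Subtype.ext h)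
          simp at this; exact hij this
  obtain ⟨x, y, hxy⟩ := hE
  set r' : V → V → Prop := fun a b => r a b ∧ ¬ (a = x ∧ b = y) with hr'
  have hlt : {p : V × V | r' p.1 p.2}.ncard < n := by
    rw [← hn]
    apply Set.ncard_lt_ncard
    · refine ⟨fun p hp => hp.1, fun h => ?_⟩
      have := h (show (x, y) ∈ {p : V × V | r p.1 p.2} from hxy)
      exact this.2 ⟨rfl, rfl⟩
    · exact Set.toFinite _
  have hrr : ∀ a b, r' a b → r a b := fun _ _ h => h.1
  have IH := fun A B => ih _ hlt r' A B rfl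
  rcases IH A B with ⟨S, s, t, hl⟩ | ⟨X, hXk, hX⟩
  · exact Or.inl ⟨S, s, t, hl.hs, hl.ht, fun i hi => (hl.hr i hi).mono_rel hrr, hl.hd⟩
  -- crossing facts
  have sepx : ∀ a ∈ A, ∀ b ∈ B, ¬ Rch r (↑(insert x X) : Set V)ᶜ a b := by
    intro a ha b hb hab
    have := (hab.mono_rel' (r' := r') (fun c hc d _ hcd => ⟨hcd, fun h => hc (by simp [h.1])⟩)).mono
      (S' := (↑X : Set V)ᶜ) (by intro z hz hz'; exact hz (by simp at hz' ⊢; exact Or.inr hz'))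
    exact hX a ha b hb this
  have sepy : ∀ a ∈ A, ∀ b ∈ B, ¬ Rch r (↑(insert y X) : Set V)ᶜ a b := by
    intro a ha b hb hab
    have := (hab.mono_rel' (r' := r') (fun c _ d hd hcd => ⟨hcd, fun h => hd (by simp [h.2])⟩)).mono
      (S' := (↑X : Set V)ᶜ) (by intro z hz hz'; exact hz (by simp at hz' ⊢; exact Or.inr hz'))
    exact hX a ha b hb this
  rcases Nat.lt_or_ge (insert x X).card k with h1 | h1
  · exact Or.inr ⟨_, h1, sepx⟩
  rcases Nat.lt_or_ge (insert y X).card k with h2 | h2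
  · exact Or.inr ⟨_, h2, sepy⟩
  have hyX : y ∉ X := fun h => by rw [Finset.insert_eq_of_mem h] at h2; omega
  have hcx := Finset.card_insert_le x X
  have hcy := Finset.card_insert_le y X
  rcases IH A (↑(insert x X) : Set V) with ⟨S, s, t, hl⟩ | ⟨Z, hZk, hZ⟩
  swap
  · refine Or.inr ⟨Z, hZk, fun a ha b hb hab => ?_⟩
    by_cases hm : ∃ c ∈ (↑(insert x X) : Set V), Rch r (↑Z : Set V)ᶜ a c
    · obtain ⟨c, hc, hac⟩ := hm
      obtain ⟨w, hw, h3, h3'⟩ := hac.first hc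
      refine hZ a ha w hw ?_
      obtain ⟨L, p, h0, hL, hr, hm, hinj⟩ := h3.path
      rw [← h0, ← hL]
      refine Rch.of_path (by omega) (fun i _ hi => ⟨hr i hi, fun h => ?_⟩) (fun i _ hi => ?_)
      · rcases hm i hi.le with h4 | h4
        · exact h4.2 (by simp [h.1])
        · have h4 : p i = w := h4
          rw [← hL] at h4
          have := hinj _ _ hi.le le_rfl h4; omega
      · rcases hm i hi with h4 | h4
        · exact h4.1
        · rw [show p i = w from h4]; exact h3'.left
    · push Not at hm
      refine sepx a ha b hb ?_
      refine (hab.between).mono ?_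
      intro z hz hz'
      exact hm z hz' hz.1
  rcases IH (↑(insert y X) : Set V) B with ⟨S', s', t', hl'⟩ | ⟨Z, hZk, hZ⟩
  swap
  · refine Or.inr ⟨Z, hZk, fun a ha b hb hab => ?_⟩
    by_cases hm : ∃ c ∈ (↑(insert y X) : Set V), Rch r (↑Z : Set V)ᶜ c b
    · obtain ⟨c, hc, hac⟩ := hm
      obtain ⟨w, hw, h3, h3'⟩ := hac.last hc
      refine hZ w hw b hb ?_
      obtain ⟨L, p, h0, hL, hr, hm, hinj⟩ := h3.path
      rw [← h0, ← hL]
      refine Rch.of_path (by omega) (fun i _ hi => ⟨hr i hi, fun h => ?_⟩) (fun i _ hi => ?_)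
      · rcases hm (i+1) hi with h4 | h4
        · exact h4.2 (by simp [h.2])
        · have h4 : p (i+1) = w := h4
          rw [← h0] at h4
          have := hinj _ _ hi (by omega) h4; omega
      · rcases hm i hi with h4 | h4
        · exact h4.1
        · rw [show p i = w from h4]; exact h3'.right
    · push Not at hm
      refine sepy a ha b hb ?_
      refine (hab.between).mono ?_
      intro z hz hz'
      exact hm z hz' hz.2
  left
  have tinj : ∀ i < k, ∀ j < k, t i = t j → i = j := by
    intro i hi j hj h
    by_contra hne
    exact Set.disjoint_left.1 (hl.hd i hi j hj hne) (hl.hr i hi).right (h ▸ (hl.hr j hj).right)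
  have sinj : ∀ i < k, ∀ j < k, s' i = s' j → i = j := by
    intro i hi j hj h
    by_contra hne
    exact Set.disjoint_left.1 (hl'.hd i hi j hj hne) (hl'.hr i hi).left (h ▸ (hl'.hr j hj).left)
  have tsurj := surj_of_inj (C := insert x X) (by omega) (fun i hi => by have := hl.ht i hi; simpa using this) tinj
  have ssurj := surj_of_inj (C := insert y X) (by omega) (fun i hi => by have := hl'.hs i hi; simpa using this) sinj
  have tuniq : ∀ i < k, ∀ z ∈ S i, z ∈ (↑X : Set V) → z = t i := by
    intro i hi z hz hzX
    obtain ⟨j, hj, rfl⟩ := tsurj z (by simp at hzX ⊢; exact Or.inr hzX)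
    by_contra hne
    exact Set.disjoint_left.1 (hl.hd i hi j hj (fun h => hne (by rw [h]))) hz (hl.hr j hj).right
  have suniq : ∀ i < k, ∀ z ∈ S' i, z ∈ (↑X : Set V) → z = s' i := by
    intro i hi z hz hzX
    obtain ⟨j, hj, rfl⟩ := ssurj z (by simp at hzX ⊢; exact Or.inr hzX)
    by_contra hne
    exact Set.disjoint_left.1 (hl'.hd i hi j hj (fun h => hne (by rw [h]))) hz (hl'.hr j hj).left
  have T1 : ∀ i, ∃ S0, i < k → S0 ⊆ S i ∧ Rch r' S0 (s i) (t i) ∧ ∀ z ∈ S0, z ∉ (↑X : Set V) → Rch r' (↑X)ᶜ (s i) z := by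
    intro i
    by_cases hi : i < k
    · obtain ⟨S0, h⟩ := (hl.hr i hi).trim (tuniq i hi); exact ⟨S0, fun _ => h⟩
    · exact ⟨∅, fun h => absurd h hi⟩
  have T2 : ∀ i, ∃ S0, i < k → S0 ⊆ S' i ∧ Rch r' S0 (s' i) (t' i) ∧ ∀ z ∈ S0, z ∉ (↑X : Set V) → Rch r' (↑X)ᶜ z (t' i) := by
    intro i
    by_cases hi : i < k
    · obtain ⟨S0, h⟩ := (hl'.hr i hi).trim' (suniq i hi); exact ⟨S0, fun _ => h⟩
    · exact ⟨∅, fun h => absurd h hi⟩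
  choose P hP using T1
  choose Q hQ using T2
  have J : ∀ i, ∃ j, i < k → j < k ∧ s' j = if t i = x then y else t i := by
    intro i
    by_cases hi : i < k
    · obtain ⟨j, h⟩ := ssurj (if t i = x then y else t i) (by
        have := hl.ht i hi
        split_ifs with h
        · simp
        · simp [h] at this ⊢; exact Or.inr this)
      exact ⟨j, fun _ => h⟩
    · exact ⟨0, fun h => absurd h hi⟩
  choose J hJ using J
  have hPQ : ∀ i < k, ∀ j < k, ∀ z ∈ P i, z ∈ Q j → z ∈ X := by
    intro i hi j hj z hz hz'
    by_contra hzX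
    exact hX _ (hl.hs i hi) _ (hl'.ht j hj) (((hP i hi).2.2 z hz hzX).trans ((hQ j hj).2.2 z hz' hzX))
  have cross : ∀ i < k, ∀ j < k, i ≠ j → Disjoint (P i) (Q (J j)) := by
    intro i hi j hj hij
    rw [Set.disjoint_left]
    intro z hz hz'
    obtain ⟨hjk, hjs⟩ := hJ j hj
    have hzX := hPQ i hi _ hjk z hz hz'
    have e1 := tuniq i hi z ((hP i hi).1 hz) hzX
    have e2 := suniq _ hjk z ((hQ _ hjk).1 hz') hzX
    rw [hjs] at e2
    split_ifs at e2 with h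
    · rw [e2] at hzX; exact hyX hzX
    · exact hij (tinj i hi j hj (e1 ▸ e2))
  refine ⟨fun i => P i ∪ Q (J i), s, fun i => t' (J i), hl.hs, fun i hi => hl'.ht _ (hJ i hi).1, ?_, ?_⟩
  · intro i hi
    obtain ⟨hjk, hjs⟩ := hJ i hi
    have a1 : Rch r (P i ∪ Q (J i)) (s i) (t i) := ((hP i hi).2.1.mono_rel hrr).mono Set.subset_union_left
    have a2 : Rch r (P i ∪ Q (J i)) (s' (J i)) (t' (J i)) := ((hQ _ hjk).2.1.mono_rel hrr).mono Set.subset_union_right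
    refine a1.trans (Rch.trans ?_ a2)
    have hm := a2.left
    rw [hjs] at hm ⊢
    split_ifs with h
    · rw [if_pos h] at hm
      exact Rch.step a1.right hm (h ▸ hxy)
    · exact Rch.refl a1.right
  · intro i hi j hj hij
    have hJne : J i ≠ J j := by
      intro h
      have e1 := (hJ i hi).2
      rw [h, (hJ j hj).2] at e1
      have hxt : ∀ i < k, t i ≠ x → t i ≠ y := by
        intro i hi h h'
        have := hl.ht i hi
        simp [h] at this
        rw [h'] at this; exact hyX this
      apply hij
      split_ifs at e1 with h1 h2 h2
      · exact tinj i hi j hj (h2.trans h1.symm)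
      · exact absurd e1.symm (hxt i hi h2)
      · exact absurd e1 (hxt j hj h1)
      · exact tinj i hi j hj e1.symm
    rw [Set.disjoint_union_left, Set.disjoint_union_right, Set.disjoint_union_right]
    refine ⟨⟨(hl.hd i hi j hj hij).mono (hP i hi).1 (hP j hj).1, cross i hi j hj hij⟩,
      (cross j hj i hi (Ne.symm hij)).symm, ?_⟩
    exact (hl'.hd _ (hJ i hi).1 _ (hJ j hj).1 hJne).mono (hQ _ (hJ i hi).1).1 (hQ _ (hJ j hj).1).1
end Menger

/-! ### A minimum hitting set is linked -/
section LinkedSec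
variable {V : Type} {r : V → V → Prop} {S S' : Set V} {u v w x y : V}

theorem HasCyc.split {Z : Set V} (h : HasCyc r S)
    (hZ : ∀ x y, x ∈ Z → x ∈ S → y ∈ S → r x y → y ∈ Z) : HasCyc r (S ∩ Z) ∨ HasCyc r (S \ Z) := by
  obtain ⟨u, v, huv, hu, hvu⟩ := h
  by_cases hv : v ∈ Z
  · left
    have := hvu.stay hv hZ
    exact ⟨u, v, huv, this.right, this⟩
  · right
    have huZ : u ∉ Z := fun h => hv (hZ u v h hu hvu.left huv)
    have : Rch r (S \ Z) v u := by
      refine hvu.between.mono ?_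
      intro z hz
      exact ⟨hz.1.right, fun hzZ => huZ (hz.2.stay hzZ hZ).right.2⟩
    exact ⟨u, v, huv, this.right, this⟩

theorem Linkage.trace {A B : Set V} {k : ℕ} {S : ℕ → Set V} {s t : ℕ → V} (h : Linkage r A B k S s t) :
    ∃ S' : ℕ → Set V, Linkage r A B k S' s t ∧ (∀ i < k, Trace r (S' i) (s i) (t i)) ∧ ∀ i < k, S' i ⊆ S i := by
  have : ∀ i, ∃ S', i < k → S' ⊆ S i ∧ Trace r S' (s i) (t i) := by
    intro i
    by_cases hi : i < k
    · obtain ⟨S', h1, h2⟩ := (h.hr i hi).trace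
      exact ⟨S', fun _ => ⟨h1, h2⟩⟩
    · exact ⟨∅, fun h => absurd h hi⟩
  choose S' hS' using this
  exact ⟨S', ⟨h.hs, h.ht, fun i hi => (hS' i hi).2.rch,
    fun i hi j hj hij => (h.hd i hi j hj hij).mono (hS' i hi).1 (hS' j hj).1⟩,
    fun i hi => (hS' i hi).2, fun i hi => (hS' i hi).1⟩

theorem Linkage.sinj {A B : Set V} {k : ℕ} {S : ℕ → Set V} {s t : ℕ → V} (h : Linkage r A B k S s t) :
    ∀ i < k, ∀ j < k, s i = s j → i = j := by
  intro i hi j hj he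
  by_contra hne
  exact Set.disjoint_left.1 (h.hd i hi j hj hne) (h.hr i hi).left (he ▸ (h.hr j hj).left)

theorem Linkage.tinj {A B : Set V} {k : ℕ} {S : ℕ → Set V} {s t : ℕ → V} (h : Linkage r A B k S s t) :
    ∀ i < k, ∀ j < k, t i = t j → i = j := by
  intro i hi j hj he
  by_contra hne
  exact Set.disjoint_left.1 (h.hd i hi j hj hne) (h.hr i hi).right (he ▸ (h.hr j hj).right)

def Linked (r : V → V → Prop) (T : Finset V) : Prop :=
  ∀ A B : Finset V, A ⊆ T → B ⊆ T → A.card = B.card →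
    ∃ S s t, Linkage r (↑A : Set V) (↑B : Set V) A.card S s t

/-- vertices on closed walks avoiding `X` -/
def Cyc (r : V → V → Prop) (X : Finset V) : Set V :=
  {z | ∃ w, r z w ∧ z ∈ (↑X : Set V)ᶜ ∧ Rch r (↑X : Set V)ᶜ w z}

theorem Cyc.mono {X Y : Finset V} (h : X ⊆ Y) : Cyc r Y ⊆ Cyc r X := by
  rintro z ⟨w, h1, h2, h3⟩
  have : (↑Y : Set V)ᶜ ⊆ (↑X : Set V)ᶜ := fun a ha hx => ha (h hx)
  exact ⟨w, h1, this h2, h3.mono this⟩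

theorem Cyc.conn [Finite V] {n t0 : ℕ}
    (IH : ∀ r' : V → V → Prop, Pack r' n ∨ ∃ X : Finset V, X.card ≤ t0 ∧ ¬ HasCyc r' (↑X : Set V)ᶜ)
    (hP : ¬ Pack r (n+1)) (X : Finset V)
    (hbig : ∀ Y : Finset V, ¬ HasCyc r (↑Y : Set V)ᶜ → X.card + 2 * t0 < Y.card) :
    ∀ z ∈ Cyc r X, ∀ z' ∈ Cyc r X, Rch r (↑X : Set V)ᶜ z z' := by
  classical
  rintro z ⟨w, hzw, hz, hwz⟩ z' ⟨w', hzw', hz', hwz'⟩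
  by_contra hno
  set Z : Set V := {v | Rch r (↑X : Set V)ᶜ z v} with hZ
  have hcl : ∀ x y, x ∈ Z → y ∈ (↑X : Set V)ᶜ → r x y → y ∈ Z := fun x y hx hy hxy =>
    Rch.trans hx (Rch.step hx.right hy hxy)
  have hZX : Z ⊆ (↑X : Set V)ᶜ := fun v hv => hv.right
  have c1 : HasCyc r Z := by
    refine ⟨z, w, hzw, Rch.refl hz, ?_⟩
    exact (hwz.stay (Z := Z) (hcl z w (Rch.refl hz) hwz.left hzw)
      (fun x y hx _ hy h => hcl x y hx hy h)).mono Set.inter_subset_right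
  have c2 : HasCyc r ((↑X : Set V)ᶜ \ Z) := by
    have hout : ∀ v, Rch r (↑X : Set V)ᶜ v z' → v ∉ Z := fun v hv hvZ => hno (Rch.trans hvZ hv)
    refine ⟨z', w', hzw', ⟨hz', hout _ (Rch.refl hz')⟩, ?_⟩
    exact hwz'.between.mono (fun v hv => ⟨hv.1.right, hout v hv.2⟩)
  have key : ∀ W W' : Set V, Disjoint W W' → HasCyc r W' → ∃ Y : Finset V, Y.card ≤ t0 ∧ ¬ HasCyc r (W ∩ (↑Y : Set V)ᶜ) := by
    intro W W' hd hc
    rcases IH (fun a b => r a b ∧ a ∈ W ∧ b ∈ W) with ⟨f, hf, hfd⟩ | ⟨Y, hY, hYc⟩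
    · exfalso
      apply hP
      refine ⟨fun i => if i < n then f i ∩ W else W', ?_, ?_⟩
      · intro i hi
        dsimp
        split_ifs with h
        · obtain ⟨u, v, huv, hu, hvu⟩ := hf i h
          refine ⟨u, v, huv.1, ⟨hu, huv.2.1⟩, ?_⟩
          exact (hvu.stay (Z := W) huv.2.2 (fun x y _ _ _ h => h.2.2)).mono_rel (fun _ _ h => h.1)
        · exact hc
      · intro i hi j hj hij
        dsimp
        split_ifs with h1 h2 h2
        · exact (hfd i h1 j h2 hij).mono Set.inter_subset_left Set.inter_subset_left
        · exact hd.mono_left Set.inter_subset_right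
        · exact (hd.mono_left Set.inter_subset_right).symm
        · omega
    · refine ⟨Y, hY, fun h => hYc ?_⟩
      obtain ⟨u, v, huv, hu, hvu⟩ := h
      exact ⟨u, v, ⟨huv, hu.1, hvu.left.1⟩, hu.2,
        (hvu.mono_rel' (fun x hx y hy h => ⟨h, hx.1, hy.1⟩)).mono Set.inter_subset_right⟩
  have hdis : Disjoint Z ((↑X : Set V)ᶜ \ Z) := Set.disjoint_sdiff_right
  obtain ⟨Y1, hY1, hc1⟩ := key Z _ hdis c2
  obtain ⟨Y2, hY2, hc2⟩ := key _ Z hdis.symm c1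
  have hlt := hbig (X ∪ Y1 ∪ Y2) (fun h => by
    rcases h.split (Z := Z) (by
      intro x y hx _ hy hxy
      exact hcl x y hx (fun h => hy (by simp at h ⊢; exact Or.inl h)) hxy) with h' | h'
    · exact hc1 (h'.mono (fun v hv => ⟨hv.2, fun hy => hv.1 (by simp at hy ⊢; tauto)⟩))
    · exact hc2 (h'.mono (fun v hv => ⟨⟨fun hy => hv.1 (by simp at hy ⊢; tauto), hv.2⟩,
        fun hy => hv.1 (by simp at hy ⊢; tauto)⟩)))
  have := Finset.card_union_le (X ∪ Y1) Y2
  have := Finset.card_union_le X Y1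
  omega

structure IsPath (r : V → V → Prop) (p : ℕ → V) (L : ℕ) : Prop where
  step : ∀ i < L, r (p i) (p (i+1))
  inj : ∀ i ≤ L, ∀ j ≤ L, p i = p j → i = j

/-- an injective path meeting all the bramble elements of order `y` -/
theorem bramble_path [Finite V] (y : ℕ)
    (hne : ∀ X : Finset V, X.card ≤ 2 * y → (Cyc r X).Nonempty)
    (hcn : ∀ X : Finset V, X.card ≤ 2 * y → ∀ z ∈ Cyc r X, ∀ z' ∈ Cyc r X, Rch r (↑X : Set V)ᶜ z z') :
    ∃ p L, IsPath r p L ∧ ∀ X : Finset V, X.card ≤ y → ∃ i ≤ L, p i ∈ Cyc r X := by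
  classical
  cases nonempty_fintype V
  -- states
  let St : ℕ → Prop := fun L => ∃ p, IsPath r p L ∧ ∃ Y : Finset V, Y.card ≤ y ∧ p L ∈ Cyc r Y ∧
    ∀ i < L, p i ∉ Cyc r Y
  have hbd : ∀ L, St L → L ≤ Fintype.card V := by
    rintro L ⟨p, hp, -⟩
    have := Finset.card_le_card_of_injOn (s := Finset.range (L+1)) (t := Finset.univ) p (by simp) (by
      intro i hi j hj h
      simp at hi hj
      exact hp.inj i (by omega) j (by omega) h)
    simp at this; omega
  have h0 : St 0 := by
    obtain ⟨v, hv⟩ := hne ∅ (by simp)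
    exact ⟨fun _ => v, ⟨by omega, by omega⟩, ∅, by simp, hv, by omega⟩
  have hfin : (Finset.filter St (Finset.range (Fintype.card V + 1))).Nonempty :=
    ⟨0, by simp [h0]⟩
  set L := Finset.max' _ hfin with hL
  have hLmem := Finset.max'_mem _ hfin
  rw [← hL, Finset.mem_filter] at hLmem
  obtain ⟨-, p, hp, Y, hY, hpL, hpY⟩ := hLmem
  refine ⟨p, L, hp, ?_⟩
  by_contra hcon
  push Not at hcon
  obtain ⟨X, hX, hXp⟩ := hcon
  have hXY : (X ∪ Y).card ≤ 2 * y := by have := Finset.card_union_le X Y; omega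
  obtain ⟨z, hz⟩ := hne _ hXY
  have hzX : z ∈ Cyc r X := Cyc.mono Finset.subset_union_left hz
  have hzY : z ∈ Cyc r Y := Cyc.mono Finset.subset_union_right hz
  have h1 := hcn Y (by omega) _ hpL _ hzY
  have h1' := hcn Y (by omega) _ hzY _ hpL
  have h2 : Rch r (Cyc r Y) (p L) z := by
    by_cases he : p L = z
    · rw [he]; exact Rch.refl hzY
    refine h1.between.mono ?_
    intro v hv
    have hvp := hv.2.trans h1'
    by_cases hvL : v = p L
    · rw [hvL]; exact hpL
    · obtain ⟨hvX, hrt⟩ := hvp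
      rcases Relation.ReflTransGen.cases_head hrt with h | ⟨w, hw, hwv⟩
      · exact absurd h hvL
      · exact ⟨w, hw.1, hvX, Rch.trans ⟨hw.2, hwv⟩ hv.1⟩
  obtain ⟨z', hz', h3, h3'⟩ := h2.first hzX
  obtain ⟨L', p', h0', hL', hr', hm', hinj'⟩ := h3.path
  have hL'pos : 0 < L' := by
    rcases Nat.eq_zero_or_pos L' with h | h
    · subst h
      rw [h0'] at hL'
      exact absurd (hL' ▸ hz') (hXp L le_rfl)
    · exact h
  have hY' : ∀ i ≤ L', p' i ∈ Cyc r Y := by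
    intro i hi
    rcases hm' i hi with h | h
    · exact h.1
    · have h : p' i = z' := h
      rw [h]; exact h3'.left
  have hX' : ∀ i < L', p' i ∉ Cyc r X := by
    intro i hi hc
    rcases hm' i (by omega) with h | h
    · exact h.2 hc
    · have h : p' i = z' := h
      have := hinj' i L' (by omega) le_rfl (by rw [h, hL'])
      omega
  have hst : St (L + L') := by
    refine ⟨fun i => if i ≤ L then p i else p' (i - L), ⟨?_, ?_⟩, X, by omega, ?_, ?_⟩
    · intro i hi
      by_cases h : i < L
      · rw [if_pos (by omega), if_pos (by omega)]; exact hp.step i h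
      · rw [if_neg (show ¬ i + 1 ≤ L by omega)]
        have e : (if i ≤ L then p i else p' (i - L)) = p' (i - L) := by
          split_ifs with h'
          · have : i = L := by omega
            subst this; simp [h0']
          · rfl
        rw [e, show i + 1 - L = i - L + 1 by omega]
        exact hr' _ (by omega)
    · have aux : ∀ i ≤ L, ∀ j, L < j → j ≤ L + L' → p i ≠ p' (j - L) := by
        intro i hi j hj hj' he
        by_cases h : i = L
        · rw [h, ← h0'] at he
          have := hinj' 0 (j-L) (by omega) (by omega) he
          omega
        · exact hpY i (by omega) (he ▸ hY' (j - L) (by omega))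
      intro i hi j hj he
      split_ifs at he with h1 h2 h2
      · exact hp.inj i h1 j h2 he
      · exact absurd he (aux i h1 j (by omega) hj)
      · exact absurd he.symm (aux j h2 i (by omega) hi)
      · have := hinj' _ _ (by omega) (by omega) he
        omega
    · show (if L + L' ≤ L then p (L+L') else p' (L+L'-L)) ∈ _
      rw [if_neg (by omega), show L + L' - L = L' by omega, hL']; exact hz'
    · intro i hi
      dsimp
      split_ifs with h
      · exact hXp i h
      · exact hX' _ (by omega)
  have := Finset.le_max' (Finset.filter St (Finset.range (Fintype.card V + 1))) (L + L') (by
    rw [Finset.mem_filter, Finset.mem_range]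
    exact ⟨by have := hbd _ hst; omega, hst⟩)
  omega

def Hits (r : V → V → Prop) (p : ℕ → V) (i j y : ℕ) : Prop :=
  ∀ X : Finset V, X.card ≤ y → ∃ k, i ≤ k ∧ k < j ∧ p k ∈ Cyc r X

theorem Hits.cut {p : ℕ → V} {L i x y : ℕ} (hinj : ∀ i < L, ∀ j < L, p i = p j → i = j)
    (h : Hits r p i L (x + 1 + y)) :
    ∃ j, i < j ∧ j ≤ L ∧ Hits r p i j x ∧ Hits r p j L y := by
  classical
  have hL : i < L := by
    obtain ⟨k, h1, h2, -⟩ := h ∅ (by simp)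
    omega
  have hex : ∃ j, i < j ∧ Hits r p i j x := ⟨L, hL, fun X hX => h X (by omega)⟩
  obtain ⟨hj1, hj2⟩ := Nat.find_spec hex
  have hmin := fun m hm => Nat.find_min (H := hex) (m := m) hm
  have hjL : Nat.find hex ≤ L := Nat.find_min' hex ⟨hL, fun X hX => h X (by omega)⟩
  set j := Nat.find hex
  have hX1 : ∃ X1 : Finset V, X1.card ≤ x ∧ ∀ k, i ≤ k → k < j - 1 → p k ∉ Cyc r X1 := by
    by_cases hji : i < j - 1
    · have := hmin (j-1) (by omega)
      simp only [Hits] at this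
      push Not at this
      obtain ⟨X, hX, h⟩ := this hji
      exact ⟨X, hX, fun k h1 h2 => h k h1 h2⟩
    · exact ⟨∅, by simp, by omega⟩
  obtain ⟨X1, hX1, hX1'⟩ := hX1
  refine ⟨j, hj1, hjL, hj2, ?_⟩
  intro Y hY
  obtain ⟨k, hk1, hk2, hk3⟩ := h (X1 ∪ Y ∪ {p (j-1)}) (by
    have := Finset.card_union_le (X1 ∪ Y) {p (j-1)}
    have := Finset.card_union_le X1 Y
    simp at *; omega)
  refine ⟨k, ?_, hk2, Cyc.mono (fun a ha => by simp [ha]) hk3⟩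
  by_contra hlt
  by_cases hkj : k = j - 1
  · obtain ⟨w, -, hm, -⟩ := hk3
    exact hm (by simp [hkj])
  · exact hX1' k hk1 (by omega) (Cyc.mono (fun a ha => by simp [ha]) hk3)

theorem Hits.iter {p : ℕ → V} {L x : ℕ} (hinj : ∀ i < L, ∀ j < L, p i = p j → i = j) (m : ℕ) :
    ∀ i, Hits r p i L (m * (x + 1)) → i ≤ L → ∃ c : ℕ → ℕ, c 0 = i ∧
      ∀ k < m, c k < c (k+1) ∧ c (k+1) ≤ L ∧ Hits r p (c k) (c (k+1)) x := by
  induction m with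
  | zero => intro i _ _; exact ⟨fun _ => i, rfl, by omega⟩
  | succ m ih =>
    intro i h hi
    rw [show (m + 1) * (x + 1) = x + 1 + m * (x + 1) by ring] at h
    obtain ⟨j, h1, h2, h3, h4⟩ := h.cut hinj
    obtain ⟨c, hc0, hc⟩ := ih j h4 h2
    refine ⟨fun k => if k = 0 then i else c (k - 1), by simp, ?_⟩
    intro k hk
    rcases k with _ | k
    · simp [hc0]; exact ⟨h1, h2, h3⟩
    · simpa using hc k (by omega)

theorem base_path [Finite V] [Nonempty V] {n t0 : ℕ} (K : ℕ)
    (IH : ∀ r' : V → V → Prop, Pack r' n ∨ ∃ X : Finset V, X.card ≤ t0 ∧ ¬ HasCyc r' (↑X : Set V)ᶜ)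
    (hP : ¬ Pack r (n+1))
    (hbig : ∀ Y : Finset V, ¬ HasCyc r (↑Y : Set V)ᶜ → 2 * (2 * K * (K+1)) + 2 * t0 < Y.card) :
    ∃ p L, IsPath r p L ∧ ∃ pos : ℕ → ℕ, (∀ i j, i < j → j < K → pos i < pos j) ∧ (∀ i < K, pos i ≤ L) ∧
      ∀ T : Finset V, (∀ v ∈ T, ∃ i < K, v = p (pos i)) → Linked r T := by
  classical
  obtain ⟨p, L, hp, hh⟩ := bramble_path (r := r) (2 * K * (K+1)) (by
      intro X hX
      by_contra hne
      have := hbig X (by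
        rintro ⟨u, v, h1, h2, h3⟩
        exact hne ⟨u, v, h1, h2, h3⟩)
      omega) (by
      intro X hX
      refine Cyc.conn IH hP X (fun Y hY => ?_)
      have := hbig Y hY
      omega)
  have hh' : Hits r p 0 (L+1) (2 * K * (K+1)) := fun X hX => by
    obtain ⟨i, hi, h⟩ := hh X hX
    exact ⟨i, by omega, by omega, h⟩
  obtain ⟨c, hc0, hc⟩ := Hits.iter (x := K) (fun i hi j hj => hp.inj i (by omega) j (by omega)) (2*K) 0 hh' (by omega)
  have hmono : ∀ i j, i ≤ j → j ≤ 2 * K → c i ≤ c j := by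
    intro i j hij
    induction j, hij using Nat.le_induction with
    | base => intro _; exact le_rfl
    | succ j hj ih => intro h; have := ih (by omega); have := (hc j (by omega)).1; omega
  refine ⟨p, L, hp, fun i => c (2*i+1), ?_, ?_, ?_⟩
  · intro i j hij hj
    have := (hc (2*i+1) (by omega)).1
    have := hmono (2*i+1+1) (2*j+1) (by omega) (by omega)
    dsimp; omega
  · intro i hi
    have := (hc (2*i+1) (by omega)).1
    have := (hc (2*i+1) (by omega)).2.1
    dsimp; omega
  intro T hT A B hA hB hAB
  have hav : ∀ (D X : Finset V), D ⊆ T → X.card < D.card → ∃ i < K, p (c (2*i+1)) ∈ D ∧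
      ∀ k, c (2*i) ≤ k → k < c (2*i+1+1) → p k ∉ X := by
    intro D X hD hX
    by_contra hcon
    push Not at hcon
    choose! f hf hf' using fun v (hv : v ∈ D) => hT v (hD hv)
    choose! g hg1 hg2 hg3 using hcon
    have hfin : ∀ v ∈ D, p (c (2 * f v + 1)) ∈ D := fun v hv => by rw [← hf' v hv]; exact hv
    have := Finset.card_le_card_of_injOn (s := D) (t := X) (fun v => p (g (f v))) (by
      intro v hv
      exact hg3 _ (hf v hv) (hfin v hv)) (by
      intro v hv w hw he
      dsimp at he
      have hv' : v ∈ D := hv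
      have hw' : w ∈ D := hw
      have a1 := hg1 _ (hf v hv) (hfin v hv)
      have a2 := hg2 _ (hf v hv) (hfin v hv)
      have b1 := hg1 _ (hf w hw) (hfin w hw)
      have b2 := hg2 _ (hf w hw) (hfin w hw)
      have a3 := (hc (2 * f v + 1) (by have := hf v hv; omega)).2.1
      have b3 := (hc (2 * f w + 1) (by have := hf w hw; omega)).2.1
      have hfv := hf v hv'
      have hfw := hf w hw'
      have e := hp.inj _ (by omega) _ (by omega) he
      have : f v = f w := by
        rcases lt_trichotomy (f v) (f w) with h | h | h
        · have := hmono (2 * f v + 1 + 1) (2 * f w) (by omega) (by omega); omega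
        · exact h
        · have := hmono (2 * f w + 1 + 1) (2 * f v) (by omega) (by omega); omega
      rw [hf' v hv, hf' w hw, this])
    omega
  have hTc : T.card ≤ K := by
    choose! f hf hf' using hT
    have := Finset.card_le_card_of_injOn (s := T) (t := Finset.range K) f (by
      intro v hv; simp; exact hf v hv) (by
      intro v hv w hw he
      rw [hf' v hv, hf' w hw, he])
    simpa using this
  rcases menger r (↑A : Set V) (↑B : Set V) A.card with h | ⟨X, hX, hsep⟩
  · exact h
  exfalso
  have hXK : X.card ≤ K := by have := Finset.card_le_card hA; omega
  obtain ⟨i, hi, hiA, hiX⟩ := hav A X hA hX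
  obtain ⟨j, hj, hjB, hjX⟩ := hav B X hB (by omega)
  obtain ⟨k1, h1, h2, h3⟩ := (hc (2*i+1) (by omega)).2.2 X hXK
  obtain ⟨k2, g1, g2, g3⟩ := (hc (2*j) (by omega)).2.2 X hXK
  have hcc := Cyc.conn IH hP X (fun Y hY => by have := hbig Y hY; nlinarith) _ h3 _ g3
  have m1 := hmono (2*i) (2*i+1) (by omega) (by omega)
  have m2 := (hc (2*j+1) (by omega)).1
  have m3 := (hc (2*j+1) (by omega)).2.1
  have m4 := (hc (2*i+1) (by omega)).2.1
  refine hsep _ hiA _ hjB (Rch.trans (Rch.trans ?_ hcc) ?_)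
  · exact Rch.of_path h1 (fun k _ _ => hp.step k (by omega)) (fun k _ _ => hiX k (by omega) (by omega))
  · exact Rch.of_path (by omega) (fun k _ _ => hp.step k (by omega)) (fun k _ _ => hjX k (by omega) (by omega))
end LinkedSec

/-! ### Three-uniform Ramsey -/
section Ramsey3

theorem ramsey3 (κ : Type*) [Finite κ] (m : ℕ) : ∃ N : ℕ, m ≤ N ∧ ∀ c : ℕ → ℕ → ℕ → κ,
    ∃ g : ℕ → ℕ, (∀ i j, i < j → j < m → g i < g j) ∧ (∀ i < m, g i < N) ∧
      ∃ k, ∀ i j l, i < j → j < l → l < m → c (g i) (g j) (g l) = k := by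
  classical
  have pre : ∀ m : ℕ, ∃ N : ℕ, ∀ (c : ℕ → ℕ → ℕ → κ) (A : Finset ℕ), N ≤ A.card →
      ∃ g : ℕ → ℕ, ∃ col : ℕ → κ, (∀ i j, i < j → j < m → g i < g j) ∧
      (∀ i j l, i < j → j < l → l < m → c (g i) (g j) (g l) = col i) ∧ ∀ i < m, g i ∈ A := by
    intro m
    induction m with
    | zero =>
      refine ⟨1, fun c A hA => ⟨id, fun _ => c 0 0 0, by omega, by omega, by omega⟩⟩
    | succ m ih =>
      obtain ⟨N, hN⟩ := ih
      obtain ⟨M, hNM, hM⟩ := ramsey κ N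
      refine ⟨M + 1, fun c A hA => ?_⟩
      have hne : A.Nonempty := Finset.card_pos.1 (by omega)
      set a := A.min' hne
      obtain ⟨e, he, heA⟩ := enum_finset (A.erase a) M
        (by rw [Finset.card_erase_of_mem (A.min'_mem hne)]; omega)
      obtain ⟨g', hg', hg'M, k, hk⟩ := hM (fun x y => c a (e x) (e y))
      obtain ⟨g, col, hg, hgc, hgB⟩ := hN c ((Finset.range N).image (fun i => e (g' i))) (by
        rw [Finset.card_image_of_injective _ (show Function.Injective (fun i => e (g' i)) from (he.comp hg').injective)]; simp)
      have hgB' : ∀ i < m, ∃ x < N, g i = e (g' x) := by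
        intro i hi
        obtain ⟨x, hx, h⟩ := Finset.mem_image.1 (hgB i hi)
        exact ⟨x, by simpa using hx, h.symm⟩
      have hlt : ∀ i < m, a < g i := fun b hb => by
        obtain ⟨x, hx, h⟩ := hgB' b hb
        have := Finset.mem_erase.1 (heA (g' x) (hg'M x hx))
        rw [h]
        exact lt_of_le_of_ne (A.min'_le _ this.2) (Ne.symm this.1)
      refine ⟨fun i => if i = 0 then a else g (i-1), fun i => if i = 0 then k else col (i-1), ?_, ?_, ?_⟩
      · intro i j hij hj
        have hj0 : j ≠ 0 := by omega
        by_cases hi : i = 0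
        · subst hi
          simp only [hj0, if_true, if_false]
          exact hlt _ (by omega)
        · simp only [hj0, hi, if_false]
          exact hg _ _ (by omega) (by omega)
      · intro i j l hij hjl hl
        have hj0 : j ≠ 0 := by omega
        have hl0 : l ≠ 0 := by omega
        by_cases hi : i = 0
        · subst hi
          simp only [hj0, hl0, if_true, if_false]
          obtain ⟨x, hx, h1⟩ := hgB' (j-1) (by omega)
          obtain ⟨y, hy, h2⟩ := hgB' (l-1) (by omega)
          have hlt := hg (j-1) (l-1) (by omega) (by omega)
          rw [h1, h2] at hlt ⊢
          have : x < y := by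
            by_contra hle
            have := (he.comp hg').monotone (not_lt.1 hle)
            simp at this; omega
          exact hk x y this hy
        · simp only [hj0, hi, hl0, if_false]
          exact hgc _ _ _ (by omega) (by omega) (by omega)
      · intro i hi
        by_cases h : i = 0
        · simp [h, a, A.min'_mem hne]
        · simp only [h, if_false]
          obtain ⟨x, hx, h1⟩ := hgB' (i-1) (by omega)
          rw [h1]
          exact (Finset.mem_erase.1 (heA (g' x) (hg'M x hx))).2
  obtain ⟨M, hmM, hM⟩ := pigeon κ m
  obtain ⟨N, hN⟩ := pre M
  refine ⟨max m N, by omega, fun c => ?_⟩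
  obtain ⟨g, col, hg, hgc, hgB⟩ := hN c (Finset.range (max m N)) (by simp)
  obtain ⟨h, hh, hhM, k, hk⟩ := hM col
  refine ⟨fun i => g (h i), fun i j hij hj => hg _ _ (hh hij) (hhM j hj), fun i hi => ?_, k, ?_⟩
  · simpa using hgB _ (hhM i hi)
  · intro i j l hij hjl hl
    rw [hgc _ _ _ (hh hij) (hh hjl) (hhM _ hl), hk _ (by omega)]
end Ramsey3

section Web
variable {V : Type} {r : V → V → Prop}

/-- disjoint paths minimizing the set of edges outside the `P`s -/
theorem minweb [Finite V] [Nonempty V] {N K : ℕ} {P : ℕ → Set V} {A B : Set V} {S : ℕ → Set V} {s t : ℕ → V}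
    (hPd : ∀ i < N, ∀ j < N, i ≠ j → Disjoint (P i) (P j)) (hl : Linkage r A B K S s t) :
    ∃ (q : ℕ → ℕ → V) (len : ℕ → ℕ),
      (∀ j < K, IsPath r (q j) (len j) ∧ q j 0 ∈ A ∧ q j (len j) ∈ B ∧
        ∀ u ≤ len j, q j u ∈ {x | (∃ i < N, x ∈ P i) ∨ ∃ i < K, x ∈ S i}) ∧
      (∀ j < K, ∀ j' < K, ∀ u ≤ len j, ∀ u' ≤ len j', q j u = q j' u' → j = j') ∧
      ∀ j < K, ∀ i < N, ∀ i' < N, i ≠ i' → ∀ u u', u < u' → u' ≤ len j → q j u ∈ P i → q j u' ∈ P i' →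
        ∃ w, u ≤ w ∧ w < u' ∧ ∃ X : Finset V, X.card < K ∧ ∃ L : Set V,
          (∀ u ≤ len j, q j u ∈ L ↔ u ≤ w) ∧
          ∀ i < N, (∀ x ∈ P i, x ∉ X) → ∀ x ∈ P i, ∀ y ∈ P i, r x y → x ∈ L → y ∈ L := by
  classical
  cases nonempty_fintype V
  set W : Set V := {x | (∃ i < N, x ∈ P i) ∨ ∃ i < K, x ∈ S i} with hW
  let H : V → V → Prop := fun x y => r x y ∧ ∃ i < N, x ∈ P i ∧ y ∈ P i
  let rel : Finset (V × V) → V → V → Prop := fun F x y => r x y ∧ x ∈ W ∧ y ∈ W ∧ (H x y ∨ (x, y) ∈ F)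
  let ok : ℕ → Prop := fun m => ∃ F : Finset (V × V), F.card = m ∧ ∃ S s t, Linkage (rel F) (A ∩ W) (B ∩ W) K S s t
  have hex : ∃ m, ok m := by
    refine ⟨_, Finset.univ, rfl, S, s, t, ?_, ?_, ?_, hl.hd⟩
    · exact fun i hi => ⟨hl.hs i hi, Or.inr ⟨i, hi, (hl.hr i hi).left⟩⟩
    · exact fun i hi => ⟨hl.ht i hi, Or.inr ⟨i, hi, (hl.hr i hi).right⟩⟩
    · exact fun i hi => (hl.hr i hi).mono_rel' (fun x hx y hy h =>
        ⟨h, Or.inr ⟨i, hi, hx⟩, Or.inr ⟨i, hi, hy⟩, Or.inr (Finset.mem_univ _)⟩)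
  obtain ⟨F, hFc, S1, s1, t1, hl1⟩ := Nat.find_spec hex
  have hmin := fun m hm => Nat.find_min (H := hex) (m := m) hm
  rw [← hFc] at hmin
  have hcut : ∀ e ∈ F, ∃ X : Finset V, X.card < K ∧ ∀ a ∈ A ∩ W, ∀ b ∈ B ∩ W, ¬ Rch (rel (F.erase e)) (↑X : Set V)ᶜ a b := by
    intro e he
    rcases menger (rel (F.erase e)) (A ∩ W) (B ∩ W) K with h | h
    · exact absurd ⟨F.erase e, rfl, h⟩ (hmin _ (Finset.card_erase_lt_of_mem he))
    · exact h
  have hpath : ∀ j, ∃ (L : ℕ) (p : ℕ → V), j < K → p 0 = s1 j ∧ p L = t1 j ∧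
    (∀ i < L, rel F (p i) (p (i+1))) ∧ (∀ i ≤ L, p i ∈ S1 j) ∧
    (∀ i j, i ≤ L → j ≤ L → p i = p j → i = j) := by
    intro j
    by_cases hj : j < K
    · obtain ⟨L, p, h⟩ := (hl1.hr j hj).path
      exact ⟨L, p, fun _ => h⟩
    · exact ⟨0, fun _ => Classical.arbitrary V, fun h => absurd h hj⟩
  choose len q hq using hpath
  have hdis : ∀ j < K, ∀ j' < K, ∀ u ≤ len j, ∀ u' ≤ len j', q j u = q j' u' → j = j' := by
    intro j hj j' hj' u hu u' hu' he
    by_contra hne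
    exact Set.disjoint_left.1 (hl1.hd j hj j' hj' hne) ((hq j hj).2.2.2.1 u hu) (he ▸ (hq j' hj').2.2.2.1 u' hu')
  have hqA : ∀ j < K, q j 0 ∈ A ∩ W := fun j hj => by rw [(hq j hj).1]; exact hl1.hs j hj
  have hqB : ∀ j < K, q j (len j) ∈ B ∩ W := fun j hj => by rw [(hq j hj).2.1]; exact hl1.ht j hj
  have hqinj : ∀ j < K, ∀ u ≤ len j, ∀ u' ≤ len j, q j u = q j u' → u = u' :=
    fun j hj u hu u' hu' h => (hq j hj).2.2.2.2 u u' hu hu' h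
  refine ⟨q, len, ?_, hdis, ?_⟩
  · intro j hj
    refine ⟨⟨fun i hi => ((hq j hj).2.2.1 i hi).1, hqinj j hj⟩, (hqA j hj).1, (hqB j hj).1, ?_⟩
    intro u hu
    by_cases h : u = len j
    · rw [h]; exact (hqB j hj).2
    · exact ((hq j hj).2.2.1 u (by omega)).2.1
  intro j hj i hi i' hi' hii u u' huu hu' hu hu2
  -- an F edge
  have hFe : ∃ w, u ≤ w ∧ w < u' ∧ ¬ H (q j w) (q j (w+1)) := by
    by_contra hcon
    push Not at hcon
    have : ∀ w, u ≤ w → w ≤ u' → q j w ∈ P i := by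
      intro w hw
      induction w, hw using Nat.le_induction with
      | base => intro _; exact hu
      | succ w hw ih =>
        intro hw'
        obtain ⟨-, i2, hi2, h1, h2⟩ := hcon w hw (by omega)
        by_cases h : i2 = i
        · rw [← h]; exact h2
        · exact absurd (ih (by omega)) (Set.disjoint_left.1 (hPd i2 hi2 i hi h) h1)
    exact Set.disjoint_left.1 (hPd i hi i' hi' hii) (this u' (by omega) le_rfl) hu2
  obtain ⟨w, hw1, hw2, hwH⟩ := hFe
  have heF : (q j w, q j (w+1)) ∈ F := (((hq j hj).2.2.1 w (by omega)).2.2.2).resolve_left hwH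
  obtain ⟨X, hX, hsep⟩ := hcut _ heF
  set e := (q j w, q j (w+1)) with he
  have hrel : ∀ j' < K, ∀ v, v < len j' → (j' ≠ j ∨ v ≠ w) → rel (F.erase e) (q j' v) (q j' (v+1)) := by
    intro j' hj' v hv hne
    obtain ⟨h1, h2, h3, h4⟩ := (hq j' hj').2.2.1 v hv
    refine ⟨h1, h2, h3, h4.imp id fun h => Finset.mem_erase.2 ⟨?_, h⟩⟩
    intro h'
    rw [he] at h'
    have h5 : q j' v = q j w := congrArg Prod.fst h'
    have h6 := hdis j' hj' j hj v (by omega) w (by omega) h5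
    subst h6
    have := hqinj j' hj' v (by omega) w (by omega) h5
    omega
  have hmeet : ∀ j' < K, j' ≠ j → ∃ v ≤ len j', q j' v ∈ X := by
    intro j' hj' hne
    by_contra hcon
    push Not at hcon
    refine hsep _ (hqA j' hj') _ (hqB j' hj') ?_
    exact Rch.of_path (by omega) (fun v _ hv => hrel j' hj' v hv (Or.inl hne)) (fun v _ hv => hcon v hv)
  have hXj : ∀ v ≤ len j, q j v ∉ X := by
    intro v hv hvX
    have hm : ∀ j' < K, ∃ v ≤ len j', q j' v ∈ X := by
      intro j' hj'
      by_cases h : j' = j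
      · subst h; exact ⟨v, hv, hvX⟩
      · exact hmeet j' hj' h
    choose! f hf hf' using hm
    have := Finset.card_le_card_of_injOn (s := Finset.range K) (t := X) (fun j' => q j' (f j'))
      (by intro a ha; simp at ha; exact hf' a ha) (by
      intro a ha b hb hab
      simp at ha hb
      exact hdis a ha b hb _ (hf a ha) _ (hf b hb) hab)
    simp at this; omega
  refine ⟨w, hw1, hw2, X, hX, {z | ∃ a ∈ A ∩ W, Rch (rel (F.erase e)) (↑X : Set V)ᶜ a z}, ?_, ?_⟩
  · intro v hv
    constructor
    · rintro ⟨a, ha, har⟩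
      by_contra hvw
      refine hsep a ha _ (hqB j hj) (har.trans ?_)
      exact Rch.of_path hv (fun k h1 h2 => hrel j hj k h2 (Or.inr (by omega))) (fun k _ h2 => hXj k h2)
    · intro hvw
      refine ⟨q j 0, hqA j hj, ?_⟩
      exact Rch.of_path (by omega) (fun k h1 h2 => hrel j hj k (by omega) (Or.inr (by omega)))
        (fun k _ h2 => hXj k (by omega))
  · rintro k hk hkX x hx y hy hxy ⟨a, ha, har⟩
    refine ⟨a, ha, har.trans (Rch.step har.right (fun h => hkX y hy h) ?_)⟩
    exact ⟨hxy, Or.inl ⟨k, hk, hx⟩, Or.inl ⟨k, hk, hy⟩, Or.inl ⟨hxy, k, hk, hx, hy⟩⟩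
end Web

section Grid
variable {V : Type} {r : V → V → Prop}

structure GridStar (r : V → V → Prop) (T : Set V) (q M : ℕ) (Q : ℕ → ℕ → V) (len : ℕ → ℕ)
    (ω : ℕ → ℕ → ℕ) (R : ℕ → Set V) : Prop where
  path : ∀ j < q, IsPath r (Q j) (len j)
  st : ∀ j < q, Q j 0 ∈ T
  en : ∀ j < q, Q j (len j) ∈ T
  dis : ∀ j < q, ∀ j' < q, ∀ u ≤ len j, ∀ u' ≤ len j', Q j u = Q j' u' → j = j'
  om : ∀ j < q, ∀ a < M, ω j a < ω j (a+1)
  oml : ∀ j < q, ω j M ≤ len j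
  tr : ∀ a < M, ∃ s t, Trace r (R a) s t
  rd : ∀ a < M, ∀ b < M, a ≠ b → Disjoint (R a) (R b)
  meet : ∀ j < q, ∀ a < M, ∃ u, ω j a < u ∧ u ≤ ω j (a+1) ∧ Q j u ∈ R a
  loc : ∀ j < q, ∀ a < M, ∀ u, ω j 0 < u → u ≤ ω j M → Q j u ∈ R a → ω j a < u ∧ u ≤ ω j (a+1)

def HasGrid (r : V → V → Prop) (T : Set V) (q M : ℕ) : Prop := ∃ Q len ω R, GridStar r T q M Q len ω R

theorem rch_closed {R L : Set V} {x y : V} (h : Rch r R x y) (hx : x ∈ L)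
    (hf : ∀ x ∈ R, ∀ y ∈ R, r x y → x ∈ L → y ∈ L) : y ∈ L :=
  (h.stay hx (fun a b ha haS hb hab => hf a haS b hb hab ha)).right.2

theorem visits_pack {n : ℕ} {R : Set V} {s t : V} (hR : Trace r R s t) {Q : ℕ → V} {len : ℕ}
    (hQ : IsPath r Q len) {u w : ℕ → ℕ} {L : ℕ → Set V}
    (hu : ∀ k < 2 * n, u k ≤ len ∧ Q (u k) ∈ R)
    (huw : ∀ k, k + 1 < 2 * n → u k ≤ w k ∧ w k < u (k+1))
    (hL : ∀ k < 2 * n, ∀ v ≤ len, Q v ∈ L k ↔ v ≤ w k)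
    (hf : ∀ k < 2 * n, ∀ x ∈ R, ∀ y ∈ R, r x y → x ∈ L k → y ∈ L k) : Pack r n := by
  have hmono : ∀ i j, i ≤ j → j < 2 * n → u i ≤ u j := by
    intro i j hij
    induction j, hij using Nat.le_induction with
    | base => intro _; exact le_rfl
    | succ j hj ih => intro h; have := ih (by omega); have := huw j (by omega); omega
  have hback : ∀ k, k + 1 < 2 * n → Rch r R (Q (u (k+1))) (Q (u k)) := by
    intro k hk
    rcases hR.tot _ (hu k (by omega)).2 _ (hu (k+1) hk).2 with h | h
    · exfalso
      have h1 := (hL k (by omega) _ (hu k (by omega)).1).2 (huw k hk).1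
      have h2 := (hL k (by omega) _ (hu (k+1) hk).1).1 (rch_closed h h1 (hf k (by omega)))
      have := (huw k hk).2
      omega
    · exact h
  let C : ℕ → Set V := fun c => {z | (Rch r R (Q (u (2*c+1))) z ∧ Rch r R z (Q (u (2*c)))) ∨
    ∃ v, u (2*c) ≤ v ∧ v ≤ u (2*c+1) ∧ z = Q v}
  have hC1 : ∀ c, ∀ k, k + 1 < 2 * n → 2 * c + 1 ≤ k → C c ⊆ L k := by
    intro c k hk hck z hz
    rcases hz with ⟨h1, h2⟩ | ⟨v, h1, h2, rfl⟩
    · refine rch_closed h1 ?_ (hf k (by omega))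
      refine (hL k (by omega) _ (hu _ (by omega)).1).2 ?_
      have := hmono (2*c+1) k hck (by omega)
      have := huw k hk
      omega
    · have := hu (2*c+1) (by omega)
      refine (hL k (by omega) _ (by omega)).2 ?_
      have := hmono (2*c+1) k hck (by omega)
      have := huw k hk
      omega
  have hC2 : ∀ c < n, ∀ k, k < 2 * c → Disjoint (C c) (L k) := by
    intro c hc k hk
    rw [Set.disjoint_left]
    intro z hz hzL
    have h3 := hmono (k+1) (2*c) (by omega) (by omega)
    have h4 := huw k (by omega)
    rcases hz with ⟨h1, h2⟩ | ⟨v, h1, h2, rfl⟩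
    · have := (hL k (by omega) _ (hu _ (by omega)).1).1 (rch_closed h2 hzL (hf k (by omega)))
      omega
    · have := hu (2*c+1) (by omega)
      have := (hL k (by omega) _ (by omega)).1 hzL
      omega
  have hlt : ∀ c < n, ∀ c' < n, c < c' → Disjoint (C c) (C c') := by
    intro c hc c' hc' hcc
    exact (hC2 c' hc' (2*c+1) (by omega)).symm.mono_left (hC1 c (2*c+1) (by omega) le_rfl)
  refine ⟨C, ?_, ?_⟩
  · intro c hc
    have h1 : Rch r (C c) (Q (u (2*c+1))) (Q (u (2*c))) := (hback (2*c) (by omega)).between.mono (fun z hz => Or.inl hz)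
    have hw := huw (2*c) (by omega)
    have hl := hu (2*c+1) (by omega)
    have h2 : Rch r (C c) (Q (u (2*c))) (Q (u (2*c+1))) :=
      Rch.of_path (by omega) (fun i _ h => hQ.step i (by omega)) (fun i h1 h2 => Or.inr ⟨i, h1, h2, rfl⟩)
    refine HasCyc.of_rch h1 h2 (fun h => ?_)
    have := hQ.inj _ hl.1 _ (by omega) h
    omega
  · intro c hc c' hc' hne
    rcases Nat.lt_or_gt_of_ne hne with h | h
    · exact hlt c hc c' hc' h
    · exact (hlt c' hc' c hc h).symm

theorem grid_of_lweb (n q M : ℕ) : ∃ N : ℕ, ∀ {V : Type} {r : V → V → Prop} {T : Set V} {Q : ℕ → ℕ → V}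
    {len : ℕ → ℕ} {w : ℕ → ℕ → ℕ} {R : ℕ → Set V} {L : ℕ → ℕ → Set V}
    (_ : ∀ j < q, IsPath r (Q j) (len j)) (_ : ∀ j < q, Q j 0 ∈ T) (_ : ∀ j < q, Q j (len j) ∈ T)
    (_ : ∀ j < q, ∀ j' < q, ∀ u ≤ len j, ∀ u' ≤ len j', Q j u = Q j' u' → j = j')
    (_ : ∀ j < q, ∀ b < N, w j b < w j (b+1)) (_ : ∀ j < q, w j N ≤ len j)
    (_ : ∀ a < N, ∃ s t, Trace r (R a) s t) (_ : ∀ a < N, ∀ b < N, a ≠ b → Disjoint (R a) (R b))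
    (_ : ∀ j < q, ∀ a < N, ∃ u, w j a < u ∧ u ≤ w j (a+1) ∧ Q j u ∈ R a)
    (_ : ∀ j < q, ∀ b ≤ N, ∀ u ≤ len j, Q j u ∈ L j b ↔ u ≤ w j b)
    (_ : ∀ j < q, ∀ b ≤ N, ∀ a < N, ∀ x ∈ R a, ∀ y ∈ R a, r x y → x ∈ L j b → y ∈ L j b),
    Pack r n ∨ HasGrid r T q M := by
  obtain ⟨N, hmN, hN⟩ := ramsey3 (Fin q → Prop × Prop) (2 * n + 2 * M + 3)
  refine ⟨N, ?_⟩
  intro V r T Q len w R L hQ hst hen hdis hw hwl hR hRd hmeet hL hf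
  have hwm : ∀ j < q, ∀ a b, a ≤ b → b ≤ N → w j a ≤ w j b := by
    intro j hj a b hab
    induction b, hab using Nat.le_induction with
    | base => intro _; exact le_rfl
    | succ b hb ih => intro h; have := ih (by omega); have := hw j hj b (by omega); omega
  obtain ⟨g, hg, hgN, k, hk⟩ := hN (fun a b c j =>
    (∃ u, w j b < u ∧ u ≤ w j c ∧ Q j u ∈ R a, ∃ u, w j a < u ∧ u ≤ w j b ∧ Q j u ∈ R c))
  by_cases h1 : ∃ j, (k j).1
  · left
    obtain ⟨j, hkj⟩ := h1
    have hv : ∀ t < 2 * n, ∃ u, w j (g (t+1)) < u ∧ u ≤ w j (g (t+2)) ∧ Q j u ∈ R (g 0) := by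
      intro t ht
      have := congrFun (hk 0 (t+1) (t+2) (by omega) (by omega) (by omega)) j
      rw [← this] at hkj; exact hkj
    choose! u hu1 hu2 hu3 using hv
    obtain ⟨s, t, htr⟩ := hR (g 0) (hgN 0 (by omega))
    refine visits_pack htr (hQ j j.2) (u := u) (w := fun t => w j (g (t+2))) (L := fun t => L j (g (t+2))) ?_ ?_ ?_ ?_
    · intro t ht
      have := hu2 t ht
      have := hwm j j.2 (g (t+2)) N (hgN _ (by omega)).le le_rfl
      have := hwl j j.2
      exact ⟨by omega, hu3 t ht⟩
    · intro t ht
      exact ⟨hu2 t (by omega), hu1 (t+1) ht⟩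
    · intro t ht v hv
      exact hL j j.2 _ (hgN _ (by omega)).le v hv
    · intro t ht
      exact hf j j.2 _ (hgN _ (by omega)).le _ (hgN _ (by omega))
  by_cases h2 : ∃ j, (k j).2
  · left
    obtain ⟨j, hkj⟩ := h2
    have hv : ∀ t < 2 * n, ∃ u, w j (g t) < u ∧ u ≤ w j (g (t+1)) ∧ Q j u ∈ R (g (2*n+2)) := by
      intro t ht
      have := congrFun (hk t (t+1) (2*n+2) (by omega) (by omega) (by omega)) j
      rw [← this] at hkj; exact hkj
    choose! u hu1 hu2 hu3 using hv
    obtain ⟨s, t, htr⟩ := hR (g (2*n+2)) (hgN _ (by omega))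
    refine visits_pack htr (hQ j j.2) (u := u) (w := fun t => w j (g (t+1))) (L := fun t => L j (g (t+1))) ?_ ?_ ?_ ?_
    · intro t ht
      have := hu2 t ht
      have := hwm j j.2 (g (t+1)) N (hgN _ (by omega)).le le_rfl
      have := hwl j j.2
      exact ⟨by omega, hu3 t ht⟩
    · intro t ht
      exact ⟨hu2 t (by omega), hu1 (t+1) ht⟩
    · intro t ht v hv
      exact hL j j.2 _ (hgN _ (by omega)).le v hv
    · intro t ht
      exact hf j j.2 _ (hgN _ (by omega)).le _ (hgN _ (by omega))
  right
  have hno1 : ∀ j < q, ∀ a b c, a < b → b < c → c < 2 * n + 2 * M + 3 → ∀ u, w j (g b) < u → u ≤ w j (g c) → Q j u ∉ R (g a) := by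
    intro j hj a b c hab hbc hc u hu1 hu2 hu3
    have := congrFun (hk a b c hab hbc hc) ⟨j, hj⟩
    apply h1
    refine ⟨⟨j, hj⟩, ?_⟩
    rw [← this]
    exact ⟨u, hu1, hu2, hu3⟩
  have hno2 : ∀ j < q, ∀ a b c, a < b → b < c → c < 2 * n + 2 * M + 3 → ∀ u, w j (g a) < u → u ≤ w j (g b) → Q j u ∉ R (g c) := by
    intro j hj a b c hab hbc hc u hu1 hu2 hu3
    have := congrFun (hk a b c hab hbc hc) ⟨j, hj⟩
    apply h2
    refine ⟨⟨j, hj⟩, ?_⟩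
    rw [← this]
    exact ⟨u, hu1, hu2, hu3⟩
  have hwlt : ∀ j < q, ∀ a b, a < b → b < N → w j a < w j b := by
    intro j hj a b hab hb
    have := hw j hj a (by omega)
    have := hwm j hj (a+1) b (by omega) (by omega)
    omega
  refine ⟨Q, len, fun j a => w j (g (2*a)), fun a => R (g (2*a+1)), hQ, hst, hen, hdis, ?_, ?_, ?_, ?_, ?_, ?_⟩
  · intro j hj a ha
    exact hwlt j hj _ _ (hg _ _ (by omega) (by omega)) (hgN _ (by omega))
  · intro j hj
    exact (hwm j hj _ N (hgN _ (by omega)).le le_rfl).trans (hwl j hj)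
  · intro a ha; exact hR _ (hgN _ (by omega))
  · intro a ha b hb hab
    refine hRd _ (hgN _ (by omega)) _ (hgN _ (by omega)) ?_
    rcases Nat.lt_or_gt_of_ne hab with h | h
    · exact (hg (2*a+1) (2*b+1) (by omega) (by omega)).ne
    · exact (hg (2*b+1) (2*a+1) (by omega) (by omega)).ne'
  · intro j hj a ha
    obtain ⟨u, hu1, hu2, hu3⟩ := hmeet j hj (g (2*a+1)) (hgN _ (by omega))
    have := hwm j hj (g (2*a)) (g (2*a+1)) (hg _ _ (by omega) (by omega)).le (hgN _ (by omega)).le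
    have := hwm j hj (g (2*a+1)+1) (g (2*(a+1))) (hg _ _ (by omega) (by omega)) (hgN _ (by omega)).le
    exact ⟨u, by omega, by omega, hu3⟩
  · intro j hj a ha u hu1 hu2 hu3
    constructor
    · by_contra hcon
      rcases Nat.eq_zero_or_pos a with h | h
      · subst h; exact hcon hu1
      · exact hno2 j hj 0 (2*a) (2*a+1) (by omega) (by omega) (by omega) u hu1 (by omega) hu3
    · by_contra hcon
      by_cases h : 2 * (a+1) < 2 * M
      · exact hno1 j hj (2*a+1) (2*(a+1)) (2*M) (by omega) h (by omega) u (by omega) hu2 hu3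
      · have : a + 1 = M := by omega
        rw [this] at hcon; omega

theorem web_grid (n q M : ℕ) : ∃ q' : ℕ, ∀ K : ℕ, ∃ φ : ℕ, ∀ {V : Type} {r : V → V → Prop} {T : Set V}
    {Q : ℕ → ℕ → V} {len : ℕ → ℕ} {P : ℕ → Set V}
    (_ : ∀ j < q', IsPath r (Q j) (len j)) (_ : ∀ j < q', Q j 0 ∈ T) (_ : ∀ j < q', Q j (len j) ∈ T)
    (_ : ∀ j < q', ∀ j' < q', ∀ u ≤ len j, ∀ u' ≤ len j', Q j u = Q j' u' → j = j')
    (_ : ∀ a < φ, ∃ s t, Trace r (P a) s t) (_ : ∀ a < φ, ∀ b < φ, a ≠ b → Disjoint (P a) (P b))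
    (_ : ∀ j < q', ∀ a < φ, ∃ u ≤ len j, Q j u ∈ P a)
    (_ : ∀ j < q', ∀ i < φ, ∀ i' < φ, i ≠ i' → ∀ u u', u < u' → u' ≤ len j → Q j u ∈ P i → Q j u' ∈ P i' →
        ∃ w, u ≤ w ∧ w < u' ∧ ∃ X : Finset V, X.card < K ∧ ∃ L : Set V,
          (∀ u ≤ len j, Q j u ∈ L ↔ u ≤ w) ∧
          ∀ i < φ, (∀ x ∈ P i, x ∉ X) → ∀ x ∈ P i, ∀ y ∈ P i, r x y → x ∈ L → y ∈ L),
    Pack r n ∨ HasGrid r T q M := by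
  classical
  obtain ⟨q', hqq, hq'⟩ := pigeon Prop q
  obtain ⟨N, hN⟩ := grid_of_lweb n q M
  refine ⟨q', fun K => ?_⟩
  obtain ⟨g, hgdef⟩ : ∃ g, g = q * (N + 1) * K + 1 := ⟨_, rfl⟩
  obtain ⟨m1, hm1⟩ : ∃ m1, m1 = g * (N + 1) + 2 := ⟨_, rfl⟩
  obtain ⟨φ, hφm, hφ⟩ := ramsey (Fin q' → Prop) m1
  refine ⟨φ, ?_⟩
  intro V r T Q len P hQ hst hen hdis hP hPd hmeet hcut
  haveI : Nonempty V := ⟨Q 0 0⟩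
  choose! μ hμ1 hμ2 using hmeet
  obtain ⟨g1, hg1, hg1φ, k, hk⟩ := hφ (fun i i' j => μ j i < μ j i')
  obtain ⟨g2, hg2, hg2q, c, hc⟩ := hq' (fun j => ∃ h : j < q', k ⟨j, h⟩)
  have hstep : ∃ ρ : ℕ → ℕ, (∀ i < m1, ρ i < φ) ∧ (∀ i < m1, ∀ j < m1, i ≠ j → ρ i ≠ ρ j) ∧
      ∀ j < q, ∀ i i', i < i' → i' < m1 → μ (g2 j) (ρ i) < μ (g2 j) (ρ i') := by
    by_cases hcc : c
    · refine ⟨g1, hg1φ, fun i _ j _ h h' => h (hg1.injective h'), ?_⟩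
      intro j hj i i' hii hi'
      have h1 := hc j hj
      rw [← h1] at hcc
      obtain ⟨h2, h3⟩ := hcc
      rw [← hk i i' hii hi'] at h3
      exact h3
    · refine ⟨fun i => g1 (m1 - 1 - i), fun i hi => hg1φ _ (by omega), fun i hi j hj h h' => h (by have := hg1.injective h'; omega), ?_⟩
      intro j hj i i' hii hi'
      have h1 := hc j hj
      rw [← h1] at hcc
      have h3 : ¬ k ⟨g2 j, hg2q j hj⟩ := fun h => hcc ⟨_, h⟩
      rw [← hk (m1 - 1 - i') (m1 - 1 - i) (by omega) (by omega)] at h3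
      dsimp at h3 ⊢
      have hne : μ (g2 j) (g1 (m1-1-i)) ≠ μ (g2 j) (g1 (m1-1-i')) := by
        intro he
        have a1 := hμ2 (g2 j) (hg2q j hj) (g1 (m1-1-i)) (hg1φ _ (by omega))
        have a2 := hμ2 (g2 j) (hg2q j hj) (g1 (m1-1-i')) (hg1φ _ (by omega))
        rw [he] at a1
        refine Set.disjoint_left.1 (hPd _ (hg1φ (m1-1-i) (by omega)) _ (hg1φ (m1-1-i') (by omega)) ?_) a1 a2
        intro h'; have := hg1.injective h'; omega
      omega
  obtain ⟨ρ, hρφ, hρi, hρ⟩ := hstep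
  have hgN : ∀ b ≤ N, g * b + g + 1 < m1 := by
    intro b hb
    have := Nat.mul_le_mul_left g hb
    rw [hm1, Nat.mul_succ]; omega
  have hmark : ∀ j b, ∃ w, ∃ X : Finset V, ∃ L : Set V, j < q → b ≤ N →
      μ (g2 j) (ρ (g*b)) ≤ w ∧ w < μ (g2 j) (ρ (g*b+1)) ∧ X.card < K ∧
      (∀ u ≤ len (g2 j), Q (g2 j) u ∈ L ↔ u ≤ w) ∧
          ∀ i < φ, (∀ x ∈ P i, x ∉ X) → ∀ x ∈ P i, ∀ y ∈ P i, r x y → x ∈ L → y ∈ L := by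
    intro j b
    by_cases hjb : j < q ∧ b ≤ N
    · obtain ⟨hj, hb⟩ := hjb
      have := hgN b hb
      obtain ⟨w, h1, h2, X, h3, L, h4, h5⟩ := hcut (g2 j) (hg2q j hj) (ρ (g*b)) (hρφ _ (by omega)) (ρ (g*b+1)) (hρφ _ (by omega))
        (hρi _ (by omega) _ (by omega) (by omega)) _ _ (hρ j hj (g*b) (g*b+1) (by omega) (by omega))
        (hμ1 _ (hg2q j hj) _ (hρφ _ (by omega))) (hμ2 _ (hg2q j hj) _ (hρφ _ (by omega))) (hμ2 _ (hg2q j hj) _ (hρφ _ (by omega)))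
      exact ⟨w, X, L, fun _ _ => ⟨h1, h2, h3, h4, h5⟩⟩
    · exact ⟨0, ∅, ∅, fun h1 h2 => absurd ⟨h1, h2⟩ hjb⟩
  choose w X L hm using hmark
  have hsurv : ∀ b < N, ∃ i, g * b + 1 ≤ i ∧ i ≤ g * b + g ∧ ∀ j < q, ∀ b' ≤ N, ∀ x ∈ P (ρ i), x ∉ X j b' := by
    intro b hb
    by_contra hcon
    push Not at hcon
    have hb2 := hgN b hb.le
    set XX : Finset V := (Finset.range q ×ˢ Finset.range (N+1)).biUnion (fun p => X p.1 p.2) with hXX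
    have hcard : XX.card ≤ q * (N+1) * K := by
      refine (Finset.card_biUnion_le_card_mul _ _ K ?_).trans ?_
      · intro p hp
        simp at hp
        exact (hm p.1 p.2 hp.1 (by omega)).2.2.1.le
      · simp
    choose! f1 hf1 f2 hf2 x hx1 hx2 using hcon
    have := Finset.card_le_card_of_injOn (s := Finset.Icc (g*b+1) (g*b+g)) (t := XX) x (by
      intro i hi
      simp at hi
      have := hf1 i hi.1 hi.2
      have := hf2 i hi.1 hi.2
      have := hx2 i hi.1 hi.2
      simp only [hXX, Finset.coe_biUnion, Set.mem_iUnion]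
      exact ⟨(f1 i, f2 i), by simp; omega, this⟩) (by
      intro i hi j hj hij
      simp at hi hj
      by_contra hne
      refine Set.disjoint_left.1 (hPd _ (hρφ i (by omega)) _ (hρφ j (by omega)) (hρi i (by omega) j (by omega) hne))
        (hx1 i hi.1 hi.2) (hij ▸ hx1 j hj.1 hj.2))
    simp at this
    omega
  choose! ι hι1 hι2 hι3 using hsurv
  have hlast : ∀ b < N, ι b < m1 := fun b hb => by
    have := hι2 b hb; have := hgN b hb.le; omega
  have hρle : ∀ j < q, ∀ i i', i ≤ i' → i' < m1 → μ (g2 j) (ρ i) ≤ μ (g2 j) (ρ i') := by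
    intro j hj i i' h h'
    rcases Nat.eq_or_lt_of_le h with h1 | h1
    · rw [h1]
    · exact (hρ j hj i i' h1 h').le
  have hsucc : ∀ b, g * (b+1) = g * b + g := fun b => by ring
  have hbet : ∀ j < q, ∀ b < N, w j b < μ (g2 j) (ρ (ι b)) ∧ μ (g2 j) (ρ (ι b)) ≤ w j (b+1) := by
    intro j hj b hb
    have h1 := (hm j b hj hb.le).2.1
    have h2 := (hm j (b+1) hj hb).1
    have h3 := hρle j hj (g*b+1) (ι b) (hι1 b hb) (hlast b hb)
    have h4 := hgN b hb.le
    have h5 := hρle j hj (ι b) (g*(b+1)) (by rw [hsucc]; exact hι2 b hb) (by rw [hsucc]; omega)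
    omega
  refine hN (Q := fun j => Q (g2 j)) (len := fun j => len (g2 j)) (w := w) (R := fun b => P (ρ (ι b))) (L := L)
    (fun j hj => hQ _ (hg2q j hj)) (fun j hj => hst _ (hg2q j hj)) (fun j hj => hen _ (hg2q j hj)) ?_ ?_ ?_ ?_ ?_ ?_ ?_ ?_
  · intro j hj j' hj' u hu u' hu' h
    exact hg2.injective (hdis _ (hg2q j hj) _ (hg2q j' hj') u hu u' hu' h)
  · intro j hj b hb
    have := hbet j hj b hb; omega
  · intro j hj
    have h1 := (hm j N hj le_rfl).2.1
    have h2 := hgN N le_rfl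
    have := hμ1 _ (hg2q j hj) (ρ (g*N+1)) (hρφ _ (by omega))
    omega
  · intro a ha
    exact hP _ (hρφ _ (hlast a ha))
  · intro a ha b hb hab
    refine hPd _ (hρφ _ (hlast a ha)) _ (hρφ _ (hlast b hb)) (hρi _ (hlast a ha) _ (hlast b hb) ?_)
    have := hι1 a ha
    have := hι2 a ha
    have := hι1 b hb
    have := hι2 b hb
    rcases Nat.lt_or_gt_of_ne hab with h | h
    · have := Nat.mul_le_mul_left g (show a + 1 ≤ b from h)
      rw [hsucc] at this; omega
    · have := Nat.mul_le_mul_left g (show b + 1 ≤ a from h)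
      rw [hsucc] at this; omega
  · intro j hj a ha
    exact ⟨_, (hbet j hj a ha).1, (hbet j hj a ha).2, hμ2 _ (hg2q j hj) _ (hρφ _ (hlast a ha))⟩
  · intro j hj b hb u hu
    exact (hm j b hj hb).2.2.2.1 u hu
  · intro j hj b hb a ha
    exact (hm j b hj hb).2.2.2.2 _ (hρφ _ (hlast a ha)) (fun x hx => hι3 a ha j hj b hb x hx)

theorem disjointify (n q M : ℕ) : ∃ q' : ℕ, ∀ K p' : ℕ, ∃ N : ℕ, ∀ {V : Type} [Finite V] [Nonempty V]
    {r : V → V → Prop} {T A B : Set V} {P S : ℕ → Set V} {s t : ℕ → V}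
    (_ : ∀ a < N, ∃ s t, Trace r (P a) s t) (_ : ∀ a < N, ∀ b < N, a ≠ b → Disjoint (P a) (P b))
    (_ : A ⊆ T) (_ : B ⊆ T) (_ : Linkage r A B K S s t),
    (Pack r n ∨ HasGrid r T q M) ∨ ∃ S' s' t', Linkage r A B (K - q') S' s' t' ∧
      (∀ j < K - q', S' j ⊆ {x | (∃ i < N, x ∈ P i) ∨ ∃ i < K, x ∈ S i}) ∧
      ∃ g : ℕ → ℕ, StrictMono g ∧ (∀ i < p', g i < N) ∧ ∀ i < p', ∀ j < K - q', Disjoint (S' j) (P (g i)) := by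
  classical
  obtain ⟨q', hq'⟩ := web_grid n q M
  refine ⟨q', fun K p' => ?_⟩
  obtain ⟨φ, hφ⟩ := hq' K
  obtain ⟨N, hN1, hN⟩ := pigeon (Set (Fin K)) (max p' φ)
  refine ⟨N, ?_⟩
  intro V _ _ r T A B P S s t hP hPd hA hB hl
  obtain ⟨Q, len, hQ, hdis, hcut⟩ := minweb (N := N) hPd hl
  obtain ⟨g, hg, hgN, Z, hZ⟩ := hN (fun i => {j : Fin K | ∃ u ≤ len j, Q j u ∈ P i})
  let Z' : Finset ℕ := (Finset.range K).filter (fun j => ∃ h : j < K, (⟨j, h⟩ : Fin K) ∈ Z)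
  by_cases hc : q' ≤ Z'.card
  · left
    obtain ⟨e, he, heZ⟩ := enum_finset Z' q' hc
    have heK : ∀ j < q', e j < K := fun j hj => by simpa using (Finset.mem_filter.1 (heZ j hj)).1
    refine hφ (Q := fun j => Q (e j)) (len := fun j => len (e j)) (P := fun i => P (g i))
      (fun j hj => (hQ _ (heK j hj)).1) (fun j hj => hA (hQ _ (heK j hj)).2.1) (fun j hj => hB (hQ _ (heK j hj)).2.2.1)
      ?_ ?_ ?_ ?_ ?_
    · intro j hj j' hj' u hu u' hu' h
      exact he.injective (hdis _ (heK j hj) _ (heK j' hj') u hu u' hu' h)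
    · intro a ha; exact hP _ (hgN a (by omega))
    · intro a ha b hb hab
      exact hPd _ (hgN a (by omega)) _ (hgN b (by omega)) (fun h => hab (hg.injective h))
    · intro j hj a ha
      obtain ⟨h1, h2⟩ := (Finset.mem_filter.1 (heZ j hj)).2
      rw [← hZ a (by omega)] at h2
      exact h2
    · intro j hj i hi i' hi' hii u u' huu hu' h1 h2
      obtain ⟨w, a1, a2, X, a3, L, a4, a5⟩ := hcut (e j) (heK j hj) (g i) (hgN i (by omega)) (g i') (hgN i' (by omega))
        (fun h => hii (hg.injective h)) u u' huu hu' h1 h2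
      exact ⟨w, a1, a2, X, a3, L, a4, fun i hi => a5 (g i) (hgN i (by omega))⟩
  · right
    obtain ⟨e, he, heZ⟩ := enum_finset (Finset.range K \ Z') (K - q') (by
      have := Finset.le_card_sdiff Z' (Finset.range K)
      simp at this; omega)
    have heK : ∀ j < K - q', e j < K := fun j hj => by simpa using (Finset.mem_sdiff.1 (heZ j hj)).1
    refine ⟨fun j => {x | ∃ u ≤ len (e j), x = Q (e j) u}, fun j => Q (e j) 0, fun j => Q (e j) (len (e j)), ?_, ?_, g, hg, fun i hi => hgN i (by omega), ?_⟩
    · refine ⟨fun j hj => (hQ _ (heK j hj)).2.1, fun j hj => (hQ _ (heK j hj)).2.2.1, ?_, ?_⟩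
      · intro j hj
        exact Rch.of_path (by omega) (fun i _ h => (hQ _ (heK j hj)).1.step i h) (fun i _ h => ⟨i, h, rfl⟩)
      · intro j hj j' hj' hne
        rw [Set.disjoint_left]
        rintro x ⟨u, hu, rfl⟩ ⟨u', hu', h⟩
        exact hne (he.injective (hdis _ (heK j hj) _ (heK j' hj') u hu u' hu' h))
    · rintro j hj x ⟨u, hu, rfl⟩
      exact (hQ _ (heK j hj)).2.2.2 u hu
    · intro i hi j hj
      rw [Set.disjoint_left]
      rintro x ⟨u, hu, rfl⟩ hx
      have h1 := (Finset.mem_sdiff.1 (heZ j hj)).2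
      apply h1
      refine Finset.mem_filter.2 ⟨by simpa using heK j hj, heK j hj, ?_⟩
      rw [← hZ i (by omega)]
      exact ⟨u, hu, hx⟩
end Grid

section Stages
variable {V : Type} {r : V → V → Prop}

def LinkIn (r : V → V → Prop) (D A B : Set V) (K : ℕ) : Prop :=
  ∃ S s t, Linkage r A B K S s t ∧ ∀ j < K, S j ⊆ D

theorem LinkIn.mono {D D' A B : Set V} {K : ℕ} (h : LinkIn r D A B K) (hD : D ⊆ D') : LinkIn r D' A B K := by
  obtain ⟨S, s, t, h1, h2⟩ := h
  exact ⟨S, s, t, h1, fun j hj => (h2 j hj).trans hD⟩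

theorem LinkIn.take {D A B : Set V} {K K' : ℕ} (h : LinkIn r D A B K) (hK : K' ≤ K) : LinkIn r D A B K' := by
  obtain ⟨S, s, t, h1, h2⟩ := h
  exact ⟨S, s, t, ⟨fun i hi => h1.hs i (by omega), fun i hi => h1.ht i (by omega), fun i hi => h1.hr i (by omega),
    fun i hi j hj => h1.hd i (by omega) j (by omega)⟩, fun j hj => h2 j (by omega)⟩

def DisProp (n q M q' : ℕ) : Prop := ∀ K p' : ℕ, ∃ N : ℕ, ∀ {V : Type} [Finite V] [Nonempty V]
    {r : V → V → Prop} {T A B D : Set V} {P : ℕ → Set V}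
    (_ : ∀ a < N, ∃ s t, Trace r (P a) s t) (_ : ∀ a < N, ∀ b < N, a ≠ b → Disjoint (P a) (P b))
    (_ : ∀ a < N, P a ⊆ D)
    (_ : A ⊆ T) (_ : B ⊆ T) (_ : LinkIn r D A B K),
    (Pack r n ∨ HasGrid r T q M) ∨ ∃ g : ℕ → ℕ, StrictMono g ∧ (∀ i < p', g i < N) ∧
      LinkIn r (D \ {x | ∃ i < p', x ∈ P (g i)}) A B (K - q')

theorem disProp (n q M : ℕ) : ∃ q', DisProp n q M q' := by
  obtain ⟨q', hq'⟩ := disjointify n q M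
  refine ⟨q', fun K p' => ?_⟩
  obtain ⟨N, hN⟩ := hq' K p'
  refine ⟨N, ?_⟩
  intro V _ _ r T A B D P h1 h2 h3 h4 h5 ⟨S, s, t, h6, h7⟩
  rcases hN h1 h2 h4 h5 h6 with h | ⟨S', s', t', a1, a2, g, a3, a4, a5⟩
  · exact Or.inl h
  · refine Or.inr ⟨g, a3, a4, S', s', t', a1, ?_⟩
    intro j hj x hx
    refine ⟨?_, ?_⟩
    · rcases a2 j hj hx with ⟨i, hi, h⟩ | ⟨i, hi, h⟩
      · exact h3 i hi h
      · exact h7 i hi h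
    · rintro ⟨i, hi, h⟩
      exact Set.disjoint_left.1 (a5 i hi j hj) hx h

theorem seq_dis {n q M q' : ℕ} (hd : DisProp n q M q') (K : ℕ) : ∀ R p' : ℕ, ∃ N : ℕ,
    ∀ {V : Type} [Finite V] [Nonempty V] {r : V → V → Prop} {T D : Set V} {A B : ℕ → Set V} {P : ℕ → Set V}
    (_ : ∀ a < N, ∃ s t, Trace r (P a) s t) (_ : ∀ a < N, ∀ b < N, a ≠ b → Disjoint (P a) (P b))
    (_ : ∀ a < N, P a ⊆ D)
    (_ : ∀ i < R, A i ⊆ T ∧ B i ⊆ T ∧ LinkIn r D (A i) (B i) K),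
    (Pack r n ∨ HasGrid r T q M) ∨ ∃ g : ℕ → ℕ, StrictMono g ∧ (∀ i < p', g i < N) ∧
      ∀ i < R, LinkIn r (D \ {x | ∃ e < p', x ∈ P (g e)}) (A i) (B i) (K - q') := by
  intro R p'
  induction R with
  | zero =>
    refine ⟨p', ?_⟩
    intro V _ _ r T D A B P h1 h2 h3 h4
    exact Or.inr ⟨id, strictMono_id, fun i hi => hi, by omega⟩
  | succ R ih =>
    obtain ⟨N1, hN1⟩ := ih
    obtain ⟨N, hN⟩ := hd K N1
    refine ⟨N, ?_⟩
    intro V _ _ r T D A B P h1 h2 h3 h4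
    obtain ⟨a1, a2, a3⟩ := h4 R (by omega)
    rcases hN h1 h2 h3 a1 a2 a3 with h | ⟨g0, b1, b2, b3⟩
    · exact Or.inl h
    rcases hN1 (P := fun i => P (g0 i)) (fun a ha => h1 _ (b2 a ha))
      (fun a ha b hb hab => h2 _ (b2 a ha) _ (b2 b hb) (fun h => hab (b1.injective h)))
      (fun a ha => h3 _ (b2 a ha)) (fun i hi => h4 i (by omega)) with h | ⟨g1, c1, c2, c3⟩
    · exact Or.inl h
    refine Or.inr ⟨fun i => g0 (g1 i), b1.comp c1, fun i hi => b2 _ (c2 i hi), ?_⟩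
    intro i hi
    by_cases hiR : i < R
    · exact c3 i hiR
    · have : i = R := by omega
      subst this
      refine b3.mono ?_
      rintro x ⟨hx, hx'⟩
      exact ⟨hx, fun ⟨e, he, h⟩ => hx' ⟨g1 e, c2 e he, h⟩⟩

theorem jump {U S : Set V} {s t a b : V} (hU : Trace r U s t) (hno : ¬ HasCyc r U) (hba : Rch r U b a) (hne : a ≠ b)
    (h : Rch r S a b) : ∃ J ⊆ S, (∃ s t, Trace r J s t) ∧ Disjoint J U ∧ HasCyc r (U ∪ J) := by
  classical
  obtain ⟨L, p, h0, hL, hr, hm, hinj⟩ := h.path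
  set I : Finset ℕ := (Finset.range (L+1)).filter (fun i => Rch r U a (p i)) with hI
  have hIne : I.Nonempty := ⟨0, by simp [hI, h0]; exact Rch.refl hba.right⟩
  obtain ⟨i, hi⟩ : ∃ i, i = I.max' hIne := ⟨_, rfl⟩
  have hiI : i ∈ I := hi ▸ Finset.max'_mem _ _
  have hmax : ∀ k ≤ L, Rch r U a (p k) → k ≤ i := by
    intro k hk hk'
    rw [hi]
    exact Finset.le_max' I k (by simp [hI]; exact ⟨by omega, hk'⟩)
  have hi1 : i ≤ L ∧ Rch r U a (p i) := by
    have := Finset.mem_filter.1 hiI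
    simp at this; exact ⟨by omega, this.2⟩
  have hLno : ¬ Rch r U a (p L) := by
    rw [hL]; intro h'; exact hno (HasCyc.of_rch h' hba hne)
  have hiL : i < L := by
    rcases Nat.eq_or_lt_of_le hi1.1 with h' | h'
    · rw [h'] at hi1; exact absurd hi1.2 hLno
    · exact h'
  have hex : ∃ k, i < k ∧ p k ∈ U := ⟨L, hiL, hL ▸ hba.left⟩
  obtain ⟨hk1, hk2⟩ := Nat.find_spec hex
  have hkmin : ∀ m, i < m → m < Nat.find hex → p m ∉ U := fun m h1 h2 h3 => Nat.find_min hex h2 ⟨h1, h3⟩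
  have hkL : Nat.find hex ≤ L := Nat.find_min' hex ⟨hiL, hL ▸ hba.left⟩
  generalize Nat.find hex = k at *
  have hnok : ¬ Rch r U a (p k) := fun h' => by have := hmax k hkL h'; omega
  have hik : i + 1 < k := by
    by_contra hcon
    have : k = i + 1 := by omega
    subst this
    exact hnok (hi1.2.trans (Rch.step hi1.2.right hk2 (hr i (by omega))))
  have hka : Rch r U (p k) a := (hU.tot _ hba.right _ hk2).resolve_left hnok
  have hJ : Rch r {x | ∃ m, i < m ∧ m < k ∧ x = p m} (p (i+1)) (p (k-1)) :=
    Rch.of_path (by omega) (fun m _ _ => hr m (by omega)) (fun m _ _ => ⟨m, by omega, by omega, rfl⟩)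
  obtain ⟨J, hJs, hJt⟩ := hJ.trace
  refine ⟨J, ?_, ⟨_, _, hJt⟩, ?_, ?_⟩
  · intro x hx
    obtain ⟨m, h1, h2, rfl⟩ := hJs hx
    exact hm m (by omega)
  · rw [Set.disjoint_left]
    intro x hx hxU
    obtain ⟨m, h1, h2, rfl⟩ := hJs hx
    exact hkmin m h1 h2 hxU
  · have e1 : Rch r (U ∪ J) (p i) (p k) := by
      refine (Rch.step (S := U ∪ J) (Or.inl hi1.2.right) (Or.inr hJt.ne) (hr i (by omega))).trans
        ((hJt.rch.mono Set.subset_union_right).trans (Rch.step (Or.inr hJt.mem_right) (Or.inl hk2) ?_))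
      have := hr (k-1) (by omega)
      rwa [show k - 1 + 1 = k by omega] at this
    have e2 : Rch r (U ∪ J) (p k) (p i) := (hka.trans hi1.2).mono Set.subset_union_left
    refine HasCyc.of_rch e1 e2 (fun h' => hnok ?_)
    rw [← h']; exact hi1.2

structure UnitSys (r : V → V → Prop) (T D : Set V) (N M : ℕ) (U A B : ℕ → Set V) : Prop where
  tr : ∀ e < N, ∃ s t, Trace r (U e) s t
  sub : ∀ e < N, U e ⊆ D
  dis : ∀ e < N, ∀ e' < N, e ≠ e' → Disjoint (U e) (U e')
  AT : ∀ e < N, A e ⊆ T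
  BT : ∀ e < N, B e ⊆ T
  ba : ∀ e < N, ∀ b ∈ B e, ∀ a ∈ A e, Rch r (U e) b a ∧ a ≠ b
  link : ∀ e < N, LinkIn r D (A e) (B e) M

theorem stages (n q M k : ℕ) : ∃ N Ms : ℕ, ∀ {V : Type} [Finite V] [Nonempty V] {r : V → V → Prop} {T D : Set V}
    {U A B : ℕ → Set V} (_ : UnitSys r T D N Ms U A B), (Pack r n ∨ HasGrid r T q M) ∨
    ∃ f : ℕ → Set V, (∀ i < k, HasCyc r (f i) ∧ f i ⊆ D) ∧ ∀ i < k, ∀ j < k, i ≠ j → Disjoint (f i) (f j) := by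
  classical
  induction k with
  | zero => exact ⟨0, 0, fun _ => Or.inr ⟨fun _ => ∅, by omega, by omega⟩⟩
  | succ k ih =>
    obtain ⟨N', M', hstep⟩ := ih
    obtain ⟨q', hd⟩ := disProp n q M
    obtain ⟨K, hK⟩ : ∃ K, K = M' + 2 * q' := ⟨_, rfl⟩
    obtain ⟨R, hR⟩ := hd K 1
    obtain ⟨M1, hM1⟩ := hd (K - q') 1
    obtain ⟨N2, hN'2, hN2⟩ := pigeon (Fin (R+1) × Fin (M1+1)) (N'+1)
    obtain ⟨N3, hN3⟩ := seq_dis hd (M1 + q') R N2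
    refine ⟨R + N3, M1 + q' + K, ?_⟩
    intro V _ _ r T D U A B hU
    rcases hN3 (r := r) (T := T) (D := D) (A := A) (B := B) (P := fun e => U (R + e))
      (fun a ha => hU.tr _ (by omega)) (fun a ha b hb hab => hU.dis _ (by omega) _ (by omega) (by omega))
      (fun a ha => hU.sub _ (by omega))
      (fun i hi => ⟨hU.AT i (by omega), hU.BT i (by omega), (hU.link i (by omega)).take (by omega)⟩) with h | ⟨g, hg, hgN, hlink⟩
    · exact Or.inl h
    rw [Nat.add_sub_cancel] at hlink
    by_cases hgood : Pack r n ∨ HasGrid r T q M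
    · exact Or.inl hgood
    right
    -- jumps
    have hJ : ∀ i, ∃ J : ℕ → Set V, i < R → ¬ HasCyc r (U i) →
        (∀ x < M1, J x ⊆ D \ {x | ∃ e < N2, x ∈ U (R + g e)} ∧
        (∃ s t, Trace r (J x) s t) ∧ Disjoint (J x) (U i) ∧ HasCyc r (U i ∪ J x)) ∧
        ∀ x < M1, ∀ y < M1, x ≠ y → Disjoint (J x) (J y) := by
      intro i
      by_cases hi : i < R ∧ ¬ HasCyc r (U i)
      · obtain ⟨hi, hno⟩ := hi
        obtain ⟨S, s, t, hl, hS⟩ := hlink i hi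
        obtain ⟨a, b, hab⟩ := hU.tr i (by omega)
        have : ∀ x, ∃ J : Set V, x < M1 → J ⊆ S x ∧ (∃ s t, Trace r J s t) ∧ Disjoint J (U i) ∧ HasCyc r (U i ∪ J) := by
          intro x
          by_cases hx : x < M1
          · have hb := hU.ba i (by omega) _ (hl.ht x hx) _ (hl.hs x hx)
            obtain ⟨J, h1, h2⟩ := jump hab hno hb.1 hb.2 (hl.hr x hx)
            exact ⟨J, fun _ => ⟨h1, h2⟩⟩
          · exact ⟨∅, fun h => absurd h hx⟩
        choose J hJ using this
        refine ⟨J, fun _ _ => ⟨fun x hx => ⟨(hJ x hx).1.trans (hS x hx), (hJ x hx).2⟩, ?_⟩⟩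
        intro x hx y hy hxy
        exact (hl.hd x hx y hy hxy).mono (hJ x hx).1 (hJ y hy).1
      · exact ⟨fun _ => ∅, fun h1 h2 => absurd ⟨h1, h2⟩ hi⟩
    choose J hJ using hJ
    let C : ℕ → ℕ → Set V := fun i x => if HasCyc r (U i) then U i else U i ∪ J i x
    have hsel : ∀ e, ∃ c : Fin (R+1) × Fin (M1+1), e < N2 → (c.1 : ℕ) < R ∧ (HasCyc r (U c.1) ∨ (c.2 : ℕ) < M1) ∧
        LinkIn r (D \ C c.1 c.2) (A (R + g e)) (B (R + g e)) M' := by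
      intro e
      by_cases he : e < N2
      swap
      · exact ⟨⟨0, 0⟩, fun h => absurd h he⟩
      have hge := hgN e he
      rcases hR (r := r) (T := T) (D := D) (P := U) (A := A (R + g e)) (B := B (R + g e)) (fun a ha => hU.tr _ (by omega))
        (fun a ha b hb hab => hU.dis _ (by omega) _ (by omega) hab)
        (fun a ha => hU.sub _ (by omega)) (hU.AT _ (by omega)) (hU.BT _ (by omega))
        ((hU.link _ (by omega)).take (by omega)) with h | ⟨h, h1, h2, h3⟩
      · exact absurd h hgood
      have hi := h2 0 (by omega)
      have h4 : LinkIn r (D \ U (h 0)) (A (R + g e)) (B (R + g e)) (K - q') :=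
        h3.mono (fun x hx => ⟨hx.1, fun hxU => hx.2 ⟨0, by omega, hxU⟩⟩)
      by_cases hc : HasCyc r (U (h 0))
      · refine ⟨⟨⟨h 0, by omega⟩, 0⟩, fun _ => ⟨hi, Or.inl hc, ?_⟩⟩
        simp only [C, hc, if_true]
        exact h4.take (by omega)
      · obtain ⟨hJ1, hJ2⟩ := hJ (h 0) hi hc
        rcases hM1 (r := r) (T := T) (D := D \ U (h 0)) (P := J (h 0)) (A := A (R + g e)) (B := B (R + g e))
          (fun a ha => (hJ1 a ha).2.1) hJ2
          (fun a ha x hx => ⟨((hJ1 a ha).1 hx).1, Set.disjoint_left.1 (hJ1 a ha).2.2.1 hx⟩)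
          (hU.AT _ (by omega)) (hU.BT _ (by omega)) h4 with h' | ⟨h', h1', h2', h3'⟩
        · exact absurd h' hgood
        have hx := h2' 0 (by omega)
        refine ⟨⟨⟨h 0, by omega⟩, ⟨h' 0, by omega⟩⟩, fun _ => ⟨hi, Or.inr hx, ?_⟩⟩
        simp only [C, hc, if_false]
        refine (h3'.take (by omega)).mono ?_
        rintro x ⟨⟨a1, a2⟩, a3⟩
        exact ⟨a1, fun a4 => a4.elim a2 (fun a5 => a3 ⟨0, by omega, a5⟩)⟩
    choose sel hsel using hsel
    obtain ⟨g', hg', hg'N, c, hc⟩ := hN2 sel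
    have hsel' : ∀ e < N' + 1, (c.1 : ℕ) < R ∧ (HasCyc r (U c.1) ∨ (c.2 : ℕ) < M1) ∧
        LinkIn r (D \ C c.1 c.2) (A (R + g (g' e))) (B (R + g (g' e))) M' := by
      intro e he
      have := hsel (g' e) (hg'N e he)
      rwa [hc e he] at this
    obtain ⟨hcR, hc2, -⟩ := hsel' 0 (by omega)
    have hCc : HasCyc r (C c.1 c.2) := by
      by_cases h : HasCyc r (U c.1)
      · simp only [C, h, if_true]
      · simp only [C, h, if_false]
        exact ((hJ _ hcR h).1 _ (hc2.resolve_left h)).2.2.2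
    have hCD : C c.1 c.2 ⊆ D := by
      by_cases h : HasCyc r (U c.1)
      · simp only [C, h, if_true]; exact hU.sub _ (by omega)
      · simp only [C, h, if_false]
        exact Set.union_subset (hU.sub _ (by omega)) (fun x hx => (((hJ _ hcR h).1 _ (hc2.resolve_left h)).1 hx).1)
    have hCU : ∀ e < N2, Disjoint (U (R + g e)) (C c.1 c.2) := by
      intro e he
      have hge := hgN e he
      have h1 : Disjoint (U (R + g e)) (U c.1) := hU.dis _ (by omega) _ (by omega) (by omega)
      by_cases h : HasCyc r (U c.1)
      · simp only [C, h, if_true]; exact h1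
      · simp only [C, h, if_false]
        refine Set.disjoint_union_right.2 ⟨h1, ?_⟩
        rw [Set.disjoint_left]
        intro x hx hx'
        exact (((hJ _ hcR h).1 _ (hc2.resolve_left h)).1 hx').2 ⟨e, he, hx⟩
    have hidx : ∀ e < N', R + g (g' e) < R + N3 := fun e he => by
      have := hgN _ (hg'N e (by omega)); omega
    rcases hstep (r := r) (T := T) (D := D \ C c.1 c.2) (U := fun e => U (R + g (g' e))) (A := fun e => A (R + g (g' e)))
      (B := fun e => B (R + g (g' e))) ⟨fun e he => hU.tr _ (hidx e he),
        fun e he x hx => ⟨hU.sub _ (hidx e he) hx, Set.disjoint_left.1 (hCU _ (hg'N e (by omega))) hx⟩,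
        fun e he e' he' hne => hU.dis _ (hidx e he) _ (hidx e' he') (fun h => hne (by
          exact hg'.injective (hg.injective (by omega)))),
        fun e he => hU.AT _ (hidx e he), fun e he => hU.BT _ (hidx e he),
        fun e he => hU.ba _ (hidx e he), fun e he => (hsel' e (by omega)).2.2⟩ with h | ⟨f, hf, hfd⟩
    · exact absurd h hgood
    refine ⟨fun i => if i < k then f i else C c.1 c.2, ?_, ?_⟩
    · intro i hi
      by_cases h : i < k
      · simp only [h, if_true]
        exact ⟨(hf i h).1, (hf i h).2.trans Set.diff_subset⟩
      · simp only [h, if_false]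
        exact ⟨hCc, hCD⟩
    · have hdis : ∀ i < k, Disjoint (f i) (C c.1 c.2) := fun i hi =>
        Set.disjoint_left.2 (fun x hx => ((hf i hi).2 hx).2)
      intro i hi j hj hij
      by_cases h1 : i < k
      · by_cases h2 : j < k
        · simp only [h1, h2, if_true]; exact hfd i h1 j h2 hij
        · simp only [h1, h2, if_true, if_false]; exact hdis i h1
      · by_cases h2 : j < k
        · simp only [h1, h2, if_true, if_false]; exact (hdis j h2).symm
        · omega

theorem stages' (n q M k : ℕ) : ∃ N Ms : ℕ, 0 < Ms ∧ ∀ {V : Type} [Finite V] [Nonempty V] {r : V → V → Prop} {T D : Set V}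
    {U A B : ℕ → Set V} (_ : UnitSys r T D N Ms U A B), (Pack r n ∨ HasGrid r T q M) ∨
    ∃ f : ℕ → Set V, (∀ i < k, HasCyc r (f i) ∧ f i ⊆ D) ∧ ∀ i < k, ∀ j < k, i ≠ j → Disjoint (f i) (f j) := by
  obtain ⟨N, Ms, hst⟩ := stages n q M k
  refine ⟨N, Ms + 1, by omega, ?_⟩
  intro V _ _ r T D U A B h
  exact hst ⟨h.tr, h.sub, h.dis, h.AT, h.BT, h.ba, fun e he => (h.link e he).take (by omega)⟩

theorem grid_exists (n q M : ℕ) : ∃ K : ℕ, ∀ {V : Type} [Finite V] [Nonempty V] {r : V → V → Prop} {n0 t0 : ℕ}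
    (_ : ∀ r' : V → V → Prop, Pack r' n0 ∨ ∃ X : Finset V, X.card ≤ t0 ∧ ¬ HasCyc r' (↑X : Set V)ᶜ)
    (_ : ¬ Pack r (n0+1))
    (_ : ∀ Y : Finset V, ¬ HasCyc r (↑Y : Set V)ᶜ → K + 2 * t0 < Y.card),
    Pack r n ∨ ∃ T : Finset V, (∀ T' ⊆ T, Linked r T') ∧ HasGrid r (↑T : Set V) q M := by
  classical
  obtain ⟨N, Ms, hMs0, hst⟩ := stages' n q M n
  obtain ⟨K, hK⟩ : ∃ K, K = N * (2 * Ms) + 1 := ⟨_, rfl⟩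
  refine ⟨2 * (2 * K * (K+1)), ?_⟩
  intro V _ _ r n0 t0 IH hP hbig
  obtain ⟨p, L, hp, pos, hpos, hposL, hlinked⟩ := base_path K IH hP hbig
  let T : Finset V := (Finset.range K).image (fun i => p (pos i))
  have hT : ∀ v ∈ T, ∃ i < K, v = p (pos i) := by
    intro v hv
    obtain ⟨i, hi, rfl⟩ := Finset.mem_image.1 hv
    exact ⟨i, by simpa using hi, rfl⟩
  have hTm : ∀ i < K, p (pos i) ∈ T := fun i hi => Finset.mem_image.2 ⟨i, by simpa using hi, rfl⟩
  let idx : ℕ → ℕ → ℕ := fun e i => e * (2 * Ms) + i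
  have hidx : ∀ e < N, ∀ i < 2 * Ms, idx e i < K := by
    intro e he i hi
    have := Nat.mul_le_mul_right (2 * Ms) (show e + 1 ≤ N from he)
    rw [Nat.succ_mul] at this
    simp only [idx]; omega
  have hle : ∀ i j, i ≤ j → j < K → pos i ≤ pos j := by
    intro i j h1 h2
    rcases Nat.eq_or_lt_of_le h1 with h | h
    · rw [h]
    · exact (hpos i j h h2).le
  have hpinj : ∀ i < K, ∀ j < K, p (pos i) = p (pos j) → i = j := by
    intro i hi j hj h
    have := hp.inj _ (hposL i hi) _ (hposL j hj) h
    rcases lt_trichotomy i j with h' | h' | h'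
    · have := hpos i j h' hj; omega
    · exact h'
    · have := hpos j i h' hi; omega
  let U : ℕ → Set V := fun e => {x | ∃ u, pos (idx e 0) ≤ u ∧ u ≤ pos (idx e (2*Ms-1)) ∧ x = p u}
  let B : ℕ → Finset V := fun e => (Finset.range Ms).image (fun i => p (pos (idx e i)))
  let A : ℕ → Finset V := fun e => (Finset.range Ms).image (fun i => p (pos (idx e (Ms + i))))
  have hBm : ∀ e, ∀ v ∈ B e, ∃ i < Ms, v = p (pos (idx e i)) := by
    intro e v hv
    obtain ⟨i, hi, rfl⟩ := Finset.mem_image.1 hv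
    exact ⟨i, by simpa using hi, rfl⟩
  have hAm : ∀ e, ∀ v ∈ A e, ∃ i < Ms, v = p (pos (idx e (Ms + i))) := by
    intro e v hv
    obtain ⟨i, hi, rfl⟩ := Finset.mem_image.1 hv
    exact ⟨i, by simpa using hi, rfl⟩
  have hBT : ∀ e < N, B e ⊆ T := by
    intro e he v hv
    obtain ⟨i, hi, rfl⟩ := hBm e v hv
    exact hTm _ (hidx e he i (by omega))
  have hAT : ∀ e < N, A e ⊆ T := by
    intro e he v hv
    obtain ⟨i, hi, rfl⟩ := hAm e v hv
    exact hTm _ (hidx e he _ (by omega))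
  have hBc : ∀ e < N, (B e).card = Ms := by
    intro e he
    rw [Finset.card_image_of_injOn, Finset.card_range]
    intro i hi j hj h
    simp at hi hj
    have := hpinj _ (hidx e he i (by omega)) _ (hidx e he j (by omega)) h
    simp only [idx] at this; omega
  have hAc : ∀ e < N, (A e).card = Ms := by
    intro e he
    rw [Finset.card_image_of_injOn, Finset.card_range]
    intro i hi j hj h
    simp at hi hj
    have := hpinj _ (hidx e he _ (by omega)) _ (hidx e he _ (by omega)) h
    simp only [idx] at this; omega
  have hUle : ∀ e < N, pos (idx e 0) ≤ pos (idx e (2*Ms-1)) ∧ pos (idx e (2*Ms-1)) ≤ L := fun e he =>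
    ⟨hle _ _ (by simp only [idx]; omega) (hidx e he _ (by omega)), hposL _ (hidx e he _ (by omega))⟩
  have hseg : ∀ e < N, ∀ u v, pos (idx e 0) ≤ u → u ≤ v → v ≤ pos (idx e (2*Ms-1)) → Rch r (U e) (p u) (p v) := by
    intro e he u v h1 h2 h3
    have := (hUle e he).2
    exact Rch.of_path h2 (fun i _ _ => hp.step i (by omega)) (fun i _ _ => ⟨i, by omega, by omega, rfl⟩)
  have hsys : UnitSys r (↑T : Set V) Set.univ N Ms U (fun e => ↑(A e)) (fun e => ↑(B e)) := by
    refine ⟨?_, fun _ _ => Set.subset_univ _, ?_, fun e he => hAT e he, fun e he => hBT e he, ?_, ?_⟩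
    · intro e he
      have hl := hUle e he
      refine ⟨p (pos (idx e 0)), p (pos (idx e (2*Ms-1))), ?_, ?_, ?_, ?_⟩
      · rintro x ⟨u, h1, h2, rfl⟩; exact hseg e he _ _ le_rfl h1 h2
      · rintro x ⟨u, h1, h2, rfl⟩; exact hseg e he _ _ h1 h2 le_rfl
      · rintro x ⟨u, h1, h2, rfl⟩ y ⟨v, h3, h4, rfl⟩
        rcases le_total u v with h | h
        · exact Or.inl (hseg e he _ _ h1 h h4)
        · exact Or.inr (hseg e he _ _ h3 h h2)
      · exact ⟨_, le_rfl, hl.1, rfl⟩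
    · have key : ∀ e e', e < e' → e' < N → Disjoint (U e) (U e') := by
        intro e e' h he'
        rw [Set.disjoint_left]
        rintro x ⟨u, h1, h2, rfl⟩ ⟨v, h3, h4, h5⟩
        have a1 := (hUle e (by omega)).2
        have a2 := (hUle e' he').2
        have := hp.inj u (by omega) v (by omega) h5
        have : idx e (2*Ms-1) < idx e' 0 := by
          have := Nat.mul_le_mul_right (2 * Ms) (show e + 1 ≤ e' from h)
          rw [Nat.succ_mul] at this
          simp only [idx]; omega
        have := hpos _ _ this (hidx e' he' 0 (by omega))
        omega
      intro e he e' he' hne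
      rcases Nat.lt_or_gt_of_ne hne with h | h
      · exact key e e' h he'
      · exact (key e' e h he).symm
    · intro e he b hb a ha
      obtain ⟨i, hi, rfl⟩ := hBm e b hb
      obtain ⟨j, hj, rfl⟩ := hAm e a ha
      have h0 := hle (idx e 0) (idx e i) (by simp only [idx]; omega) (hidx e he i (by omega))
      have h1 := hpos (idx e i) (idx e (Ms+j)) (by simp only [idx]; omega) (hidx e he _ (by omega))
      have h2 := hle (idx e (Ms+j)) (idx e (2*Ms-1)) (by simp only [idx]; omega) (hidx e he _ (by omega))
      refine ⟨hseg e he _ _ h0 h1.le h2, fun h => ?_⟩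
      have := hp.inj _ (hposL _ (hidx e he _ (by omega))) _ (hposL _ (hidx e he _ (by omega))) h
      omega
    · intro e he
      obtain ⟨S, s, t, h⟩ := hlinked T hT (A e) (B e) (hAT e he) (hBT e he) (by rw [hAc e he, hBc e he])
      rw [hAc e he] at h
      exact ⟨S, s, t, h, fun _ _ => Set.subset_univ _⟩
  rcases hst hsys with (h | h) | ⟨f, hf, hfd⟩
  · exact Or.inl h
  · exact Or.inr ⟨T, fun T' hT' => hlinked T' (fun v hv => hT v (hT' hv)), h⟩
  · exact Or.inl ⟨f, fun i hi => (hf i hi).1, hfd⟩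
end Stages

section Weave
variable {V : Type} {r : V → V → Prop}

theorem weave {n : ℕ} {Co Reg X : ℕ → Set V} {Low Up : ℕ → V → Prop} {p : ℕ → V} {L : ℕ}
    (hp : IsPath r p L)
    (hpX : ∀ k < 2 * n, ∀ u ≤ L, p u ∉ X k)
    (hL : ∀ k < 2 * n, ∀ w v, Low k w → r w v → v ∉ X k → v ∉ Co k → Low k v)
    (hU : ∀ k < 2 * n, ∀ w v, Up k v → r w v → w ∉ X k → w ∉ Co k → Up k w)
    (hLU : ∀ k < 2 * n, ∀ w, Low k w → Up k w → False)
    (hp0 : ∀ k < 2 * n, Low k (p 0)) (hpL : ∀ k < 2 * n, Up k (p L))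
    (hup : ∀ j k, j < k → k < 2 * n → ∀ w ∈ Co j, Up k w)
    (hlow : ∀ k j, k < j → j < 2 * n → ∀ w ∈ Co j, Low k w)
    (hT : ∀ k, k + 1 < 2 * n → ∀ w ∈ Co k, ∀ v ∈ Co (k+1), ∃ T ⊆ Reg k, Rch r T w v ∧
      ∀ j < 2 * n, j ≠ k → j ≠ k + 1 → Disjoint T (X j))
    (hRC : ∀ k < 2 * n, ∀ j < 2 * n, j ≠ k → j ≠ k + 1 → Disjoint (Reg k) (Co j))
    (hRR : ∀ k i, k + 2 ≤ i → i < 2 * n → Disjoint (Reg k) (Reg i))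
    (hCC : ∀ k j, k < j → j < 2 * n → Disjoint (Co k) (Co j)) : Pack r n := by
  classical
  have plow : ∀ k < 2 * n, ∀ a b, a ≤ b → b ≤ L → Low k (p a) → (∀ u, a < u → u ≤ b → p u ∉ Co k) →
      Low k (p b) := by
    intro k hk a b hab
    induction b, hab using Nat.le_induction with
    | base => intro _ h _; exact h
    | succ b hb ih =>
      intro hbL h h2
      exact hL k hk _ _ (ih (by omega) h (fun u h3 h4 => h2 u h3 (by omega))) (hp.step b (by omega))
        (hpX k hk _ hbL) (h2 _ (by omega) le_rfl)
  have pup : ∀ k < 2 * n, ∀ d a, a + d ≤ L → Up k (p (a + d)) → (∀ u, a ≤ u → u < a + d → p u ∉ Co k) →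
      Up k (p a) := by
    intro k hk d
    induction d with
    | zero => intro a _ h _; exact h
    | succ d ih =>
      intro a hbL h h2
      refine hU k hk _ _ (ih (a+1) (by omega) (by rwa [show a + 1 + d = a + (d+1) by omega])
        (fun u h3 h4 => h2 u (by omega) (by omega))) (hp.step a (by omega))
        (hpX k hk _ (by omega)) (h2 _ le_rfl (by omega))
  have hτ : ∀ k, ∃ τ, k < 2 * n → τ ≤ L ∧ p τ ∈ Co k ∧ ∀ u < τ, p u ∉ Co k := by
    intro k
    by_cases hk : k < 2 * n
    · have ex : ∃ u, u ≤ L ∧ p u ∈ Co k := by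
        by_contra hcon
        push Not at hcon
        exact hLU k hk _ (plow k hk 0 L (by omega) le_rfl (hp0 k hk) (fun u _ h => hcon u h)) (hpL k hk)
      refine ⟨Nat.find ex, fun _ => ⟨(Nat.find_spec ex).1, (Nat.find_spec ex).2, ?_⟩⟩
      intro u hu h
      have := (Nat.find_spec ex).1
      exact Nat.find_min ex hu ⟨by omega, h⟩
    · exact ⟨0, fun h => absurd h hk⟩
  choose τ hτ using hτ
  have hcd : ∀ k j, k < j → j < 2 * n → ∀ w, w ∈ Co k → w ∈ Co j → False :=
    fun k j h1 h2 w h3 h4 => Set.disjoint_left.1 (hCC k j h1 h2) h3 h4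
  have hord : ∀ k j, k < j → j < 2 * n → τ j < τ k := by
    intro k j hkj hj
    by_contra hcon
    obtain ⟨h1, h2, h3⟩ := hτ k (by omega)
    obtain ⟨h4, h5, h6⟩ := hτ j hj
    refine hLU j hj (p (τ k)) (plow j hj 0 _ (by omega) h1 (hp0 j hj) ?_) (hup k j hkj hj _ h2)
    intro u _ hu hc
    rcases Nat.lt_or_ge u (τ j) with h | h
    · exact h6 u h hc
    · have : u = τ k := by omega
      subst this
      exact hcd k j hkj hj _ h2 hc
  have hlam : ∀ k, ∃ l, k + 1 < 2 * n → τ (k+1) ≤ l ∧ l < τ k ∧ p l ∈ Co (k+1) ∧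
      ∀ u, l < u → u ≤ τ k → p u ∉ Co (k+1) := by
    intro k
    by_cases hk : k + 1 < 2 * n
    · have h0 := hord k (k+1) (by omega) hk
      have hm := (hτ (k+1) hk).2.1
      have hspec := Nat.findGreatest_spec (P := fun u => p u ∈ Co (k+1)) h0.le hm
      refine ⟨Nat.findGreatest (fun u => p u ∈ Co (k+1)) (τ k), fun _ => ⟨Nat.le_findGreatest h0.le hm, ?_, hspec, ?_⟩⟩
      · refine lt_of_le_of_ne (Nat.findGreatest_le _) ?_
        intro he
        rw [he] at hspec
        exact hcd k (k+1) (by omega) hk _ (hτ k (by omega)).2.1 hspec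
      · intro u h1 h2
        exact Nat.findGreatest_is_greatest h1 h2
    · exact ⟨0, fun h => absurd h hk⟩
  choose l hl using hlam
  have hT' : ∀ k, ∃ T, k + 1 < 2 * n → T ⊆ Reg k ∧ Rch r T (p (τ k)) (p (l k)) ∧
      (∀ j, k + 1 < j → j < 2 * n → ∀ x ∈ T, Up j x) ∧ (∀ j < k, ∀ x ∈ T, Low j x) := by
    intro k
    by_cases hk : k + 1 < 2 * n
    · obtain ⟨T, h1, h2, h3⟩ := hT k hk _ (hτ k (by omega)).2.1 _ (hl k hk).2.2.1
      refine ⟨_, fun _ => ⟨?_, h2.between, ?_, ?_⟩⟩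
      · rintro x ⟨hx, -⟩; exact h1 hx.right
      · rintro j hj hj2 x ⟨-, hx⟩
        refine Rch.ind' (P := fun x => Up j x) hx (hup (k+1) j hj hj2 _ (hl k hk).2.2.1) ?_
        intro a b _ hb hab ha
        exact hU j hj2 a b hb hab (Set.disjoint_left.1 (h3 j hj2 (by omega) (by omega)) ha)
          (Set.disjoint_left.1 (hRC k (by omega) j hj2 (by omega) (by omega)) (h1 ha))
      · rintro j hj x ⟨hx, -⟩
        refine Rch.ind (P := fun x => Low j x) hx (hlow j k hj (by omega) _ (hτ k (by omega)).2.1) ?_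
        intro a b _ ha hab hb
        exact hL j (by omega) a b ha hab (Set.disjoint_left.1 (h3 j (by omega) (by omega) (by omega)) hb)
          (Set.disjoint_left.1 (hRC k (by omega) j (by omega) (by omega) (by omega)) (h1 hb))
    · exact ⟨∅, fun h => absurd h hk⟩
  choose T hT' using hT'
  let S : ℕ → Set V := fun k => {x | ∃ u, l k ≤ u ∧ u ≤ τ k ∧ x = p u}
  have key : ∀ k i, k + 2 ≤ i → i + 1 < 2 * n → Disjoint (T k ∪ S k) (T i ∪ S i) := by
    intro k i hki hi
    have hk : k + 1 < 2 * n := by omega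
    obtain ⟨a1, a2, a3, a4⟩ := hT' k hk
    obtain ⟨b1, b2, b3, b4⟩ := hT' i hi
    obtain ⟨c1, c2, c3, c4⟩ := hl k hk
    obtain ⟨d1, d2, d3, d4⟩ := hl i hi
    obtain ⟨e1, e2, e3⟩ := hτ k (by omega)
    obtain ⟨f1, f2, f3⟩ := hτ i (by omega)
    have ho := hord (k+1) i (by omega) (by omega)
    rw [Set.disjoint_left]
    rintro x (hx | ⟨u, hu1, hu2, rfl⟩) (hx' | ⟨u', hu1', hu2', he⟩)
    · exact Set.disjoint_left.1 (hRR k i hki (by omega)) (a1 hx) (b1 hx')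
    · subst he
      rcases Nat.eq_or_lt_of_le hu2' with h | h
      · subst h
        exact Set.disjoint_left.1 (hRC k (by omega) i (by omega) (by omega) (by omega)) (a1 hx) f2
      · refine hLU i (by omega) _ (plow i (by omega) (l i) u' hu1' (by omega) (hlow i (i+1) (by omega) hi _ d3) ?_)
          (a3 i (by omega) (by omega) _ hx)
        intro v _ hv
        exact f3 v (by omega)
    · rcases Nat.eq_or_lt_of_le hu1 with h | h
      · subst h
        exact Set.disjoint_left.1 (hRC i (by omega) (k+1) (by omega) (by omega) (by omega)) (b1 hx') c3
      · refine hLU (k+1) (by omega) _ (b4 (k+1) (by omega) _ hx') (pup (k+1) (by omega) (τ k - u) u (by omega) ?_ ?_)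
        · rw [show u + (τ k - u) = τ k by omega]
          exact hup k (k+1) (by omega) hk _ e2
        · intro v hv1 hv2
          exact c4 v (by omega) (by omega)
    · have := hp.inj u (by omega) u' (by omega) he
      omega
  refine ⟨fun i => T (2*i) ∪ S (2*i), ?_, ?_⟩
  · intro i hi
    have hk : 2 * i + 1 < 2 * n := by omega
    obtain ⟨a1, a2, a3, a4⟩ := hT' (2*i) hk
    obtain ⟨c1, c2, c3, c4⟩ := hl (2*i) hk
    obtain ⟨e1, e2, e3⟩ := hτ (2*i) (by omega)
    refine HasCyc.of_rch (u := p (τ (2*i))) (v := p (l (2*i))) (a2.mono Set.subset_union_left) ?_ ?_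
    · exact Rch.of_path c2.le (fun v _ h => hp.step v (by omega)) (fun v h1 h2 => Or.inr ⟨v, h1, h2, rfl⟩)
    · intro he
      exact hcd (2*i) (2*i+1) (by omega) hk _ e2 (he ▸ c3)
  · intro i hi j hj hij
    rcases Nat.lt_or_gt_of_ne hij with h | h
    · exact key _ _ (by omega) (by omega)
    · exact (key _ _ (by omega) (by omega)).symm

end Weave

/-- Step 7 -/
theorem seven (m : ℕ) : ∃ q : ℕ, ∀ D : ℕ → ℕ → Prop,
    (∀ c < q, ∀ c' < q, Rch D {x | x < q} c c' ∨ Rch D {x | x < q} c' c) →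
    ∃ J : ℕ → ℕ, (∀ k < m, J k < q) ∧ (∀ k < m, ∀ k' < m, J k = J k' → k = k') ∧
      ∀ k, k + 1 < m → Rch D {x | x < q ∧ ∀ i < m, i ≠ k → i ≠ k + 1 → x ≠ J i} (J k) (J (k+1)) := by
  classical
  obtain ⟨N, hmN, hN⟩ := independent (2 * m + 1) m
  obtain ⟨q, hq, hram⟩ := ramsey (Prop × Prop) (N + 1 + m)
  refine ⟨q, fun D hD => ?_⟩
  obtain ⟨g, hg, hgq, ⟨p1, p2⟩, hk⟩ := hram (fun i j => (Rch D {x | x < q} i j, Rch D {x | x < q} j i))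
  by_cases h2 : p1 ∧ p2
  · -- strongly connected
    have hsc : ∀ i < N+1+m, ∀ j < N+1+m, Rch D {x | x < q} (g i) (g j) := by
      intro i hi j hj
      rcases lt_trichotomy i j with h | h | h
      · have := hk i j h hj
        simp only [Prod.mk.injEq] at this
        rw [this.1]; exact h2.1
      · subst h; exact Rch.refl (hgq i hi)
      · have := hk j i h hi
        simp only [Prod.mk.injEq] at this
        rw [this.2]; exact h2.2
    by_cases hlong : ∃ p : ℕ → ℕ, (∀ i, i + 1 < m → D (p i) (p (i+1))) ∧ (∀ i < m, p i < q) ∧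
        (∀ i < m, ∀ j < m, p i = p j → i = j)
    · obtain ⟨p, h1, h3, h4⟩ := hlong
      refine ⟨p, h3, h4, fun k hk => Rch.step ⟨h3 k (by omega), ?_⟩ ⟨h3 _ hk, ?_⟩ (h1 k hk)⟩
      · intro i hi hik _ he
        exact hik (h4 k (by omega) i hi he).symm
      · intro i hi _ hik he
        exact hik (h4 _ hk i hi he).symm
    · have hshort : ∀ i < N+1+m, ∀ j < N+1+m, ∃ S : Finset ℕ, S.card ≤ m ∧ (∀ x ∈ S, x < q) ∧ Rch D (↑S : Set ℕ) (g i) (g j) := by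
        intro i hi j hj
        obtain ⟨L, p, h0, hL, hr, hm, hinj⟩ := (hsc i hi j hj).path
        have hLm : L + 1 ≤ m := by
          by_contra hcon
          exact hlong ⟨p, fun i hi => hr i (by omega), fun i hi => hm i (by omega), fun i hi j hj h => hinj i j (by omega) (by omega) h⟩
        refine ⟨(Finset.range (L+1)).image p, Finset.card_image_le.trans (by simpa using hLm), ?_, ?_⟩
        · intro x hx
          obtain ⟨i, hi, rfl⟩ := Finset.mem_image.1 hx
          exact hm i (by have := Finset.mem_range.1 hi; omega)
        · rw [← h0, ← hL]
          refine Rch.of_path (by omega) (fun i _ h => hr i h) (fun i _ h => ?_)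
          exact Finset.mem_coe.2 (Finset.mem_image_of_mem _ (Finset.mem_range.2 (by omega)))
      have hA : ∀ c, ∃ A B : Finset ℕ, c < N → A.card ≤ m ∧ B.card ≤ m ∧ (∀ x ∈ A, x < q) ∧ (∀ x ∈ B, x < q) ∧
          Rch D (↑A : Set ℕ) (g (c+1)) (g 0) ∧ Rch D (↑B : Set ℕ) (g 0) (g (c+1)) := by
        intro c
        by_cases hc : c < N
        · obtain ⟨A, a1, a2, a3⟩ := hshort (c+1) (by omega) 0 (by omega)
          obtain ⟨B, b1, b2, b3⟩ := hshort 0 (by omega) (c+1) (by omega)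
          exact ⟨A, B, fun _ => ⟨a1, b1, a2, b2, a3, b3⟩⟩
        · exact ⟨∅, ∅, fun h => absurd h hc⟩
      choose A B hAB using hA
      obtain ⟨e, he, heN, hind⟩ := hN (fun c c' => g (c'+1) ∈ A c ∪ B c) (by
        intro c hc S hS
        have : (S.image (fun c' => g (c'+1))).card ≤ (A c ∪ B c).card := by
          apply Finset.card_le_card
          intro x hx
          obtain ⟨c', hc', rfl⟩ := Finset.mem_image.1 hx
          exact (hS c' hc').2.2
        rw [Finset.card_image_of_injective _ (fun a b h => by have := hg.injective h; omega)] at this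
        have h3 := Finset.card_union_le (A c) (B c)
        have := hAB c hc
        omega)
      refine ⟨fun k => g (e k + 1), fun k hk => hgq _ (by have := heN k hk; omega), ?_, ?_⟩
      · intro k hk k' hk' h
        have := hg.injective h
        exact he.injective (by omega)
      · intro k hk
        obtain ⟨a1, a2, a3, a4, a5, a6⟩ := hAB (e k) (heN k (by omega))
        obtain ⟨b1, b2, b3, b4, b5, b6⟩ := hAB (e (k+1)) (heN _ hk)
        refine (a5.mono ?_).trans (b6.mono ?_)
        · intro x hx
          refine ⟨a3 x hx, fun i hi hik _ hxe => ?_⟩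
          subst hxe
          exact hind k (by omega) i hi (Ne.symm hik) (Finset.mem_union_left _ hx)
        · intro x hx
          refine ⟨b4 x hx, fun i hi _ hik hxe => ?_⟩
          subst hxe
          exact hind (k+1) hk i hi (Ne.symm hik) (Finset.mem_union_right _ hx)
  · by_cases hp1 : p1
    · -- only forward
      have hf : ∀ i j, i < j → j < m → Rch D {x | x < q} (g i) (g j) := by
        intro i j h hj
        have := hk i j h (by omega)
        simp only [Prod.mk.injEq] at this
        rw [this.1]; exact hp1
      have hnb : ∀ i j, i < j → j < m → ¬ Rch D {x | x < q} (g j) (g i) := by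
        intro i j h hj
        have := hk i j h (by omega)
        simp only [Prod.mk.injEq] at this
        rw [this.2]; exact fun h => h2 ⟨hp1, h⟩
      refine ⟨g, fun k hk => hgq k (by omega), fun k _ k' _ h => hg.injective h, fun k hk => ?_⟩
      refine (hf k (k+1) (by omega) hk).between.mono ?_
      rintro x ⟨hx1, hx2⟩
      refine ⟨hx1.right, fun i hi hik hik' hxe => ?_⟩
      subst hxe
      rcases Nat.lt_or_ge i k with h | h
      · exact hnb i k h (by omega) hx1
      · exact hnb (k+1) i (by omega) hi hx2
    · have hnb : ∀ i j, i < j → j < m → ¬ Rch D {x | x < q} (g i) (g j) := by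
        intro i j h hj
        have := hk i j h (by omega)
        simp only [Prod.mk.injEq] at this
        rw [this.1]; exact hp1
      have hf : ∀ i j, i < j → j < m → Rch D {x | x < q} (g j) (g i) := by
        intro i j h hj
        exact (hD _ (hgq i (by omega)) _ (hgq j (by omega))).resolve_left (hnb i j h hj)
      refine ⟨fun k => g (m - 1 - k), fun k hk => hgq _ (by omega), fun k _ k' _ h => by have := hg.injective h; omega, fun k hk => ?_⟩
      refine (hf (m - 1 - (k+1)) (m-1-k) (by omega) (by omega)).between.mono ?_
      rintro x ⟨hx1, hx2⟩
      refine ⟨hx1.right, fun i hi hik hik' hxe => ?_⟩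
      subst hxe
      rcases Nat.lt_or_ge i k with h | h
      · exact hnb (m-1-k) (m-1-i) (by omega) (by omega) hx1
      · exact hnb (m-1-i) (m-1-(k+1)) (by omega) (by omega) hx2

section DMesh
variable {V : Type} {r : V → V → Prop}

structure DM (r : V → V → Prop) (q M : ℕ) (Q : ℕ → ℕ → V) (len : ℕ → ℕ) (D : ℕ → ℕ → Prop) (Aux : ℕ → Set V)
    (W : ℕ → ℕ → ℕ) : Prop where
  wlt : ∀ j < q, ∀ a < M, W j a < W j (a+1)
  wle : ∀ j < q, W j M ≤ len j
  edge : ∀ c < q, ∀ c' < q, D c c' → ∀ a < M, ∃ u u', W c a < u ∧ u ≤ W c (a+1) ∧ W c' a < u' ∧ u' ≤ W c' (a+1) ∧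
    Rch r (Aux a ∪ {Q c u, Q c' u'}) (Q c u) (Q c' u')
  adis : ∀ a < M, ∀ b < M, a ≠ b → Disjoint (Aux a) (Aux b)
  aux : ∀ a < M, ∀ j < q, ∀ u, W j 0 < u → u ≤ W j M → Q j u ∉ Aux a
  semi : ∀ c < q, ∀ c' < q, Rch D {x | x < q} c c' ∨ Rch D {x | x < q} c' c

theorem GridStar.mono {T : Set V} {q M : ℕ} {Q : ℕ → ℕ → V} {len : ℕ → ℕ} {ω : ℕ → ℕ → ℕ} {R : ℕ → Set V}
    (h : GridStar r T q M Q len ω R) {j : ℕ} (hj : j < q) {a b : ℕ} (hab : a ≤ b) (hb : b ≤ M) : ω j a ≤ ω j b := by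
  induction b, hab using Nat.le_induction with
  | base => exact le_rfl
  | succ b hb ih => exact (ih (by omega)).trans (h.om j hj b (by omega)).le

theorem dmesh (q M0 : ℕ) : ∃ M : ℕ, ∀ {V : Type} {r : V → V → Prop} {T : Set V} {Q : ℕ → ℕ → V} {len : ℕ → ℕ}
    {ω : ℕ → ℕ → ℕ} {R : ℕ → Set V} (_ : GridStar r T q M Q len ω R), ∃ D Aux W, DM r q M0 Q len D Aux W := by
  classical
  obtain ⟨M, hM, hpig⟩ := pigeon (Fin q → Fin q → Prop) (M0 + 1)
  refine ⟨M, ?_⟩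
  intro V r T Q len ω R h
  let A : ℕ → Set V := fun a => {z | z ∈ R a ∧ ∀ j < q, ∀ u, ω j 0 < u → u ≤ ω j M → z ≠ Q j u}
  let D : ℕ → ℕ → ℕ → Prop := fun a c c' => ∃ u u', ω c a < u ∧ u ≤ ω c (a+1) ∧ ω c' a < u' ∧ u' ≤ ω c' (a+1) ∧
    Rch r (A a ∪ {Q c u, Q c' u'}) (Q c u) (Q c' u')
  obtain ⟨g, hg, hgM, k, hk⟩ := hpig (fun a c c' => D a c c')
  have hgle : ∀ a < M0, g a + 1 ≤ g (a+1) ∧ g (a+1) < M := fun a ha => ⟨hg (by omega), hgM _ (by omega)⟩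
  have hmono : ∀ j < q, ∀ a b, a ≤ b → b ≤ M → ω j a ≤ ω j b := fun j hj a b h1 h2 => h.mono hj h1 h2
  refine ⟨fun c c' => D (g 0) c c', fun a => A (g a), fun j a => ω j (g a), ?_, ?_, ?_, ?_, ?_, ?_⟩
  · intro j hj a ha
    have := hgle a ha
    exact (h.om j hj (g a) (by omega)).trans_le (hmono j hj _ _ this.1 this.2.le)
  · intro j hj
    exact (hmono j hj _ _ (hgM M0 (by omega)).le le_rfl).trans (h.oml j hj)
  · intro c hc c' hc' hD a ha
    have h1 : D (g a) c c' := by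
      have e0 := congrFun (congrFun (hk 0 (by omega)) ⟨c, hc⟩) ⟨c', hc'⟩
      have e1 := congrFun (congrFun (hk a (by omega)) ⟨c, hc⟩) ⟨c', hc'⟩
      have e2 := e1.trans e0.symm
      dsimp only at e2
      rw [e2]; exact hD
    obtain ⟨u, u', a1, a2, a3, a4, a5⟩ := h1
    have := hgle a ha
    exact ⟨u, u', a1, a2.trans (hmono c hc _ _ this.1 this.2.le), a3, a4.trans (hmono c' hc' _ _ this.1 this.2.le), a5⟩
  · intro a ha b hb hab
    exact (h.rd (g a) (hgM _ (by omega)) (g b) (hgM _ (by omega)) (fun e => hab (hg.injective e))).mono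
      (fun x hx => hx.1) (fun x hx => hx.1)
  · intro a ha j hj u h1 h2 hc
    refine hc.2 j hj u (lt_of_le_of_lt (hmono j hj 0 _ (by omega) (hgM 0 (by omega)).le) h1) (h2.trans (hmono j hj _ _ (hgM M0 (by omega)).le le_rfl)) rfl
  · have h0 := hgM 0 (by omega)
    have key : ∀ c < q, ∀ u, ω c (g 0) < u → u ≤ ω c (g 0 + 1) → ∀ y, Rch r (R (g 0)) (Q c u) y →
        ∃ c' < q, Rch (fun c c' => D (g 0) c c') {x | x < q} c c' ∧ ∃ u', ω c' (g 0) < u' ∧ u' ≤ ω c' (g 0 + 1) ∧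
          Rch r (A (g 0) ∪ {Q c' u'}) (Q c' u') y ∧ (y ∉ A (g 0) → y = Q c' u') := by
      intro c hc u hu1 hu2 y hy
      refine Rch.ind (P := fun y => ∃ c' < q, Rch (fun c c' => D (g 0) c c') {x | x < q} c c' ∧ ∃ u', ω c' (g 0) < u' ∧ u' ≤ ω c' (g 0 + 1) ∧
          Rch r (A (g 0) ∪ {Q c' u'}) (Q c' u') y ∧ (y ∉ A (g 0) → y = Q c' u')) hy
        ⟨c, hc, Rch.refl hc, u, hu1, hu2, Rch.refl (by simp), fun _ => rfl⟩ ?_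
      rintro x y _ ⟨c', hc', h1, u', h2, h3, h4, -⟩ hxy hyR
      by_cases hyA : y ∈ A (g 0)
      · exact ⟨c', hc', h1, u', h2, h3, h4.trans (Rch.step h4.right (Or.inl hyA) hxy), fun h => absurd hyA h⟩
      · have : ∃ j < q, ∃ v, ω j 0 < v ∧ v ≤ ω j M ∧ y = Q j v := by
          by_contra hcon
          push Not at hcon
          exact hyA ⟨hyR, fun j hj v h1 h2 => hcon j hj v h1 h2⟩
        obtain ⟨j, hj, v, hv1, hv2, rfl⟩ := this
        have hv := h.loc j hj (g 0) h0 v hv1 hv2 hyR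
        have hD : D (g 0) c' j := by
          refine ⟨u', v, h2, h3, hv.1, hv.2, (h4.mono ?_).trans (Rch.step (h4.right.imp id (by simp +contextual)) (by simp) hxy)⟩
          rintro z (hz | hz)
          · exact Or.inl hz
          · exact Or.inr (Or.inl hz)
        exact ⟨j, hj, h1.trans (Rch.step hc' hj hD), v, hv.1, hv.2, Rch.refl (by simp), fun _ => rfl⟩
    have key2 : ∀ c < q, ∀ u, ω c (g 0) < u → u ≤ ω c (g 0 + 1) → ∀ d < q, ∀ v, ω d (g 0) < v → v ≤ ω d (g 0 + 1) →
        Rch r (R (g 0)) (Q c u) (Q d v) → Rch (fun c c' => D (g 0) c c') {x | x < q} c d := by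
      intro c hc u hu1 hu2 d hd v hv1 hv2 hy
      obtain ⟨c', hc', h1, u', h2, h3, h4, h5⟩ := key c hc u hu1 hu2 _ hy
      have hb := hmono d hd (g 0 + 1) M h0 le_rfl
      have hb' := hmono c' hc' (g 0 + 1) M h0 le_rfl
      have hnA : Q d v ∉ A (g 0) := fun hA => hA.2 d hd v
        (lt_of_le_of_lt (hmono d hd 0 _ (by omega) h0.le) hv1) (by omega) rfl
      have h6 := h.dis d hd c' hc' v (by have := h.oml d hd; omega) u' (by have := h.oml c' hc'; omega) (h5 hnA)
      rw [h6]; exact h1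
    intro c hc c' hc'
    obtain ⟨u, h1, h2, h3⟩ := h.meet c hc (g 0) h0
    obtain ⟨v, h4, h5, h6⟩ := h.meet c' hc' (g 0) h0
    obtain ⟨s, t, htr⟩ := h.tr (g 0) h0
    exact (htr.tot _ h3 _ h6).imp (key2 c hc u h1 h2 c' hc' v h4 h5) (key2 c' hc' v h4 h5 c hc u h1 h2)

end DMesh

section MeshSec

structure Mesh {V : Type} (r : V → V → Prop) (adj : ℕ → ℕ → Prop) (T : Set V) (m N : ℕ) (P : ℕ → ℕ → V)
    (U : ℕ → ℕ → ℕ → Set V) : Prop where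
  rch : ∀ τ < N, ∀ x < m, ∀ y < m, adj x y → Rch r (U τ x y) (P τ x) (P (τ+1) y)
  tto : ∀ τ < N, ∀ x < m, ∀ y < m, adj x y → ∀ w ∈ U τ x y, Rch r (U τ x y) (P τ x) w
  fro : ∀ τ < N, ∀ x < m, ∀ y < m, adj x y → ∀ w ∈ U τ x y, Rch r (U τ x y) w (P (τ+1) y)
  same : ∀ τ < N, ∀ x < m, ∀ y < m, ∀ x' < m, ∀ y' < m, adj x y → adj x' y' → x < x' → y < y' →
    ∀ z, z ∈ U τ x y → z ∈ U τ x' y' → False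
  next : ∀ τ, τ + 1 < N → ∀ x < m, ∀ y < m, ∀ x' < m, ∀ y' < m, adj x y → adj x' y' →
    ∀ z, z ∈ U τ x y → z ∈ U (τ+1) x' y' → x' = y ∧ z = P (τ+1) x'
  far : ∀ τ τ', τ + 2 ≤ τ' → τ' < N → ∀ x < m, ∀ y < m, ∀ x' < m, ∀ y' < m, adj x y → adj x' y' →
    ∀ z, z ∈ U τ x y → z ∈ U τ' x' y' → False
  dn : ∃ (E : ℕ → Set V) (b : ℕ → V), (∀ x < m, b x ∈ T ∧ Rch r (E x) (P N x) (b x)) ∧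
    ∀ x < m, ∀ x' < m, x ≠ x' → Disjoint (E x) (E x')
  up : ∃ (E : ℕ → Set V) (b : ℕ → V), (∀ x < m, b x ∈ T ∧ Rch r (E x) (b x) (P 0 x)) ∧
    ∀ x < m, ∀ x' < m, x ≠ x' → Disjoint (E x) (E x')

variable {V : Type} {r : V → V → Prop}

theorem DM.mono {q M : ℕ} {Q : ℕ → ℕ → V} {len : ℕ → ℕ} {D : ℕ → ℕ → Prop} {Aux : ℕ → Set V}
    {W : ℕ → ℕ → ℕ} (h : DM r q M Q len D Aux W) {j : ℕ} (hj : j < q) {a b : ℕ} (hab : a ≤ b) (hb : b ≤ M) :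
    W j a ≤ W j b := by
  induction b, hab using Nat.le_induction with
  | base => exact le_rfl
  | succ b hb ih => exact (ih (by omega)).trans (h.wlt j hj b (by omega)).le

theorem DM.smono {q M : ℕ} {Q : ℕ → ℕ → V} {len : ℕ → ℕ} {D : ℕ → ℕ → Prop} {Aux : ℕ → Set V}
    {W : ℕ → ℕ → ℕ} (h : DM r q M Q len D Aux W) {j : ℕ} (hj : j < q) {a b : ℕ} (hab : a < b) (hb : b ≤ M) :
    W j a < W j b :=
  (h.wlt j hj a (by omega)).trans_le (h.mono hj hab hb)

/-- realise a `D`-path in `q` consecutive rows -/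
theorem DM.conn {T : Set V} {q M M' : ℕ} {Q : ℕ → ℕ → V} {len : ℕ → ℕ} {D : ℕ → ℕ → Prop} {Aux : ℕ → Set V}
    {W : ℕ → ℕ → ℕ} (h : DM r q M Q len D Aux W) {ω : ℕ → ℕ → ℕ} {R : ℕ → Set V} (hG : GridStar r T q M' Q len ω R)
    {C : Set ℕ} {c c' : ℕ} (hC : ∀ x ∈ C, x < q) (hcc : Rch D C c c') {b : ℕ} (hb : b + q ≤ M) :
    Rch r {z | (∃ d ∈ C, ∃ u, W d b < u ∧ u ≤ W d (b+q) ∧ z = Q d u) ∨ z = Q c (W c b) ∨ ∃ a, b ≤ a ∧ a < b + q ∧ z ∈ Aux a}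
      (Q c (W c b)) (Q c' (W c' (b+q))) := by
  classical
  obtain ⟨L, p, h0, hL, hr, hm, hinj⟩ := hcc.path
  have hLq : L + 1 ≤ q := by
    have : ((Finset.range (L+1)).image p).card ≤ (Finset.range q).card := by
      apply Finset.card_le_card
      intro x hx
      obtain ⟨i, hi, rfl⟩ := Finset.mem_image.1 hx
      have := Finset.mem_range.1 hi
      exact Finset.mem_range.2 (hC _ (hm i (by omega)))
    rw [Finset.card_image_of_injOn] at this
    · simpa using this
    · intro i hi j hj he
      simp at hi hj
      exact hinj i j (by omega) (by omega) he
  set S : Set V := {z | (∃ d ∈ C, ∃ u, W d b < u ∧ u ≤ W d (b+q) ∧ z = Q d u) ∨ z = Q c (W c b) ∨ ∃ a, b ≤ a ∧ a < b + q ∧ z ∈ Aux a} with hS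
  have hcol : ∀ d ∈ C, ∀ u v, W d b < u → u ≤ v → v ≤ W d (b+q) → Rch r S (Q d u) (Q d v) := by
    intro d hd u v h1 h2 h3
    have h4 := h.mono (hC d hd) hb le_rfl
    have h5 := h.wle d (hC d hd)
    exact Rch.of_path h2 (fun i _ _ => (hG.path d (hC d hd)).step i (by omega))
      (fun i _ _ => Or.inl ⟨d, hd, i, by omega, by omega, rfl⟩)
  have hcol0 : ∀ v, W c b ≤ v → v ≤ W c (b+q) → Rch r S (Q c (W c b)) (Q c v) := by
    intro v h2 h3
    have h4 := h.mono (hC c hcc.left) hb le_rfl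
    have h5 := h.wle c (hC c hcc.left)
    refine Rch.of_path h2 (fun i _ _ => (hG.path c (hC c hcc.left)).step i (by omega)) (fun i h6 _ => ?_)
    rcases Nat.eq_or_lt_of_le h6 with h7 | h7
    · right; left; rw [← h7]
    · exact Or.inl ⟨c, hcc.left, i, by omega, by omega, rfl⟩
  have main : ∀ i ≤ L, Rch r S (Q c (W c b)) (Q (p i) (W (p i) (b+i))) := by
    intro i hi
    induction i with
    | zero => rw [h0]; exact hcol0 _ le_rfl (h.mono (hC c hcc.left) (by omega) hb)
    | succ i ih =>
      have hpi := hm i (by omega)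
      have hpi' := hm (i+1) hi
      obtain ⟨u, u', a1, a2, a3, a4, a5⟩ := h.edge _ (hC _ hpi) _ (hC _ hpi') (hr i (by omega)) (b+i) (by omega)
      have m1 := h.mono (hC _ hpi) (show b ≤ b + i by omega) (by omega)
      have m2 := h.mono (hC _ hpi) (show b+i+1 ≤ b + q by omega) (by omega)
      have m3 := h.mono (hC _ hpi') (show b ≤ b + i by omega) (by omega)
      have m4 := h.mono (hC _ hpi') (show b+i+1 ≤ b + q by omega) (by omega)
      have s1 : Rch r S (Q c (W c b)) (Q (p i) u) := by
        rcases Nat.eq_zero_or_pos i with h7 | h7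
        · subst h7; rw [h0] at a1 m2 a2 ⊢
          exact hcol0 u (by simpa using a1.le) (by omega)
        · have := h.smono (hC _ hpi) (show b < b + i by omega) (by omega)
          exact (ih (by omega)).trans (hcol _ hpi _ _ this a1.le (by omega))
      refine (s1.trans (a5.mono ?_)).trans (hcol _ hpi' _ _ (by omega) a4 (by omega))
      rintro z (hz | hz | hz)
      · exact Or.inr (Or.inr ⟨b+i, by omega, by omega, hz⟩)
      · exact Or.inl ⟨_, hpi, u, by omega, by omega, hz⟩
      · exact Or.inl ⟨_, hpi', u', by omega, by omega, hz⟩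
  have h1 := main L le_rfl
  rw [hL] at h1
  have hc' := hC _ hcc.right
  rcases Nat.eq_zero_or_pos L with h7 | h7
  · subst h7
    have : c = c' := by rw [← h0, hL]
    subst this
    exact hcol0 _ (h.mono hc' (by omega) hb) le_rfl
  · exact h1.trans (hcol _ hcc.right _ _ (h.smono hc' (by omega) (by omega)) (h.mono hc' (by omega) hb) le_rfl)

theorem mesh_of_grid (m N : ℕ) : ∃ q M : ℕ, ∀ {V : Type} {r : V → V → Prop} {T : Set V},
    HasGrid r T q M → ∃ P U, Mesh r (fun x y => x ≤ y ∧ y ≤ x + 1) T m N P U := by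
  classical
  obtain ⟨q, hseven⟩ := seven m
  obtain ⟨H, hH⟩ : ∃ H, H = m * q + 1 := ⟨_, rfl⟩
  obtain ⟨B, hB0, hB1⟩ : ∃ B : ℕ → ℕ, B 0 = 1 ∧ ∀ τ, B (τ+1) = B τ + H :=
    ⟨fun τ => 1 + τ * H, by simp, fun τ => by simp only [Nat.succ_mul]; omega⟩
  obtain ⟨M, hdm⟩ := dmesh q (B N)
  refine ⟨q, M, ?_⟩
  rintro V r T ⟨Q, len, ω, R, hG⟩
  obtain ⟨D, Aux, W, h⟩ := hdm hG
  obtain ⟨J, hJq, hJinj, hJ⟩ := hseven D h.semi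
  have hBm : ∀ a b, a ≤ b → B a ≤ B b := by
    intro a b hab
    induction b, hab using Nat.le_induction with
    | base => exact le_rfl
    | succ b hb ih => rw [hB1]; omega
  have hBp : ∀ a, 1 ≤ B a := fun a => by have := hBm 0 a (by omega); omega
  have hBlt : ∀ τ < N, B τ + H ≤ B N := by
    intro τ hτ; rw [← hB1]; exact hBm _ _ hτ
  obtain ⟨off, ho1, ho2⟩ : ∃ off : ℕ → ℕ, (∀ x, x + 1 < m → off x + q < H) ∧
      (∀ x x', x < x' → x' + 1 < m → off x' + q ≤ off x) := by
    refine ⟨fun x => (m-2-x)*q, ?_, ?_⟩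
    · intro x hx
      have := Nat.mul_le_mul_right q (show m - 2 - x + 1 ≤ m by omega)
      rw [Nat.succ_mul] at this
      dsimp only; omega
    · intro x x' hx hx'
      have := Nat.mul_le_mul_right q (show m - 2 - x' + 1 ≤ m - 2 - x by omega)
      rw [Nat.succ_mul] at this
      dsimp only; omega
  let Cell : ℕ → ℕ → ℕ → ℕ → ℕ → Prop := fun τ x y c u =>
    c < q ∧ W c (B τ) ≤ u ∧ u ≤ W c (B τ + H) ∧
      ((c = J x ∧ (y = x + 1 → u ≤ W c (B τ + off x + q))) ∨ (c = J y ∧ (y = x + 1 → W c (B τ + off x) < u)) ∨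
       (y = x + 1 ∧ (∀ i < m, c ≠ J i) ∧ W c (B τ + off x) < u ∧ u ≤ W c (B τ + off x + q)))
  let S : ℕ → ℕ → ℕ → Set V := fun τ x y => {z | (∃ c u, Cell τ x y c u ∧ z = Q c u) ∨
    ∃ a, y = x + 1 ∧ B τ + off x ≤ a ∧ a < B τ + off x + q ∧ z ∈ Aux a}
  let P : ℕ → ℕ → V := fun τ x => Q (J x) (W (J x) (B τ))
  have hpath : ∀ c < q, ∀ a b, a ≤ b → b ≤ W c (B N) → ∀ Z : Set V, (∀ u, a ≤ u → u ≤ b → Q c u ∈ Z) →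
      Rch r Z (Q c a) (Q c b) := by
    intro c hc a b hab hb Z hZ
    have := h.wle c hc
    exact Rch.of_path hab (fun i _ _ => (hG.path c hc).step i (by omega)) hZ
  have hreach : ∀ τ < N, ∀ x < m, ∀ y < m, (x ≤ y ∧ y ≤ x + 1) → Rch r (S τ x y) (P τ x) (P (τ+1) y) := by
    rintro τ hτ x hx y hy ⟨h1, h2⟩
    have hb := hBlt τ hτ
    have hjx := hJq x hx
    have hjy := hJq y hy
    rcases Nat.eq_or_lt_of_le h1 with h3 | h3
    · subst h3
      simp only [P]
      rw [hB1]
      refine hpath _ hjx _ _ (h.mono hjx (by omega) (by omega)) (h.mono hjx (by omega) (by omega)) _ ?_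
      intro u hu1 hu2
      exact Or.inl ⟨J x, u, ⟨hjx, hu1, hu2, Or.inl ⟨rfl, by omega⟩⟩, rfl⟩
    · have h4 : y = x + 1 := by omega
      subst h4
      have ho := ho1 x hy
      simp only [P]
      rw [hB1]
      have m1 := h.mono hjx (show B τ ≤ B τ + off x by omega) (by omega)
      have m2 := h.mono hjx (show B τ + off x ≤ B τ + off x + q by omega) (by omega)
      have m3 := h.mono hjx (show B τ + off x + q ≤ B τ + H by omega) (by omega)
      have m4 := h.mono hjy (show B τ ≤ B τ + off x by omega) (by omega)
      have m5 := h.smono hjy (show B τ + off x < B τ + off x + q by omega) (by omega)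
      have m6 := h.mono hjy (show B τ + off x + q ≤ B τ + H by omega) (by omega)
      have s1 : Rch r (S τ x (x+1)) (Q (J x) (W (J x) (B τ))) (Q (J x) (W (J x) (B τ + off x))) := by
        refine hpath _ hjx _ _ m1 (h.mono hjx (by omega) (by omega)) _ ?_
        intro u hu1 hu2
        exact Or.inl ⟨J x, u, ⟨hjx, hu1, by omega, Or.inl ⟨rfl, by omega⟩⟩, rfl⟩
      have s3 : Rch r (S τ x (x+1)) (Q (J (x+1)) (W (J (x+1)) (B τ + off x + q))) (Q (J (x+1)) (W (J (x+1)) (B τ + H))) := by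
        refine hpath _ hjy _ _ m6 (h.mono hjy (by omega) (by omega)) _ ?_
        intro u hu1 hu2
        exact Or.inl ⟨J (x+1), u, ⟨hjy, by omega, by omega, Or.inr (Or.inl ⟨rfl, by omega⟩)⟩, rfl⟩
      have s2 := h.conn hG (C := {c | c < q ∧ ∀ i < m, i ≠ x → i ≠ x + 1 → c ≠ J i}) (fun c hc => hc.1) (hJ x hy)
        (b := B τ + off x) (by omega)
      refine (s1.trans (s2.mono ?_)).trans s3
      rintro z (⟨c, ⟨hcq, hc⟩, u, hu1, hu2, rfl⟩ | rfl | ⟨a, ha1, ha2, ha3⟩)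
      · have m7 := h.mono hcq (show B τ ≤ B τ + off x by omega) (by omega)
        have m8 := h.mono hcq (show B τ + off x + q ≤ B τ + H by omega) (by omega)
        refine Or.inl ⟨c, u, ⟨hcq, by omega, by omega, ?_⟩, rfl⟩
        by_cases e1 : c = J x
        · exact Or.inl ⟨e1, fun _ => hu2⟩
        by_cases e2 : c = J (x+1)
        · exact Or.inr (Or.inl ⟨e2, fun _ => hu1⟩)
        refine Or.inr (Or.inr ⟨rfl, fun i hi he => ?_, hu1, hu2⟩)
        by_cases e3 : i = x
        · exact e1 (e3 ▸ he)
        by_cases e4 : i = x + 1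
        · exact e2 (e4 ▸ he)
        exact hc i hi e3 e4 he
      · exact Or.inl ⟨J x, _, ⟨hjx, m1, by omega, Or.inl ⟨rfl, by omega⟩⟩, rfl⟩
      · exact Or.inr ⟨a, rfl, ha1, ha2, ha3⟩
  -- common points of two sets
  have hcommon : ∀ τ < N, ∀ τ' < N, ∀ x y x' y', y < m → y' < m → ∀ z, z ∈ S τ x y → z ∈ S τ' x' y' →
      (∃ c u, z = Q c u ∧ Cell τ x y c u ∧ Cell τ' x' y' c u) ∨
      (∃ a, (y = x + 1 ∧ B τ + off x ≤ a ∧ a < B τ + off x + q) ∧ (y' = x' + 1 ∧ B τ' + off x' ≤ a ∧ a < B τ' + off x' + q)) := by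
    have hrow : ∀ τ < N, ∀ x y a, y < m → y = x + 1 → a < B τ + off x + q → a < B N := by
      intro τ hτ x y a hy e ha
      have := ho1 x (by omega); have := hBlt τ hτ; omega
    have hne : ∀ τ < N, ∀ x y c u a, Cell τ x y c u → a < B N → Q c u ∈ Aux a → False := by
      rintro τ hτ x y c u a ⟨hc, h1, h2, -⟩ ha hm
      have m1 := h.smono hc (hBp τ) (by have := hBlt τ hτ; omega)
      have m2 := h.mono hc (hBlt τ hτ) le_rfl
      exact h.aux a ha c hc u (by omega) (by omega) hm
    intro τ hτ τ' hτ' x y x' y' hy hy' z hz hz'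
    rcases hz with ⟨c, u, hcu, rfl⟩ | ⟨a, e, ha1, ha2, ha3⟩
    · rcases hz' with ⟨c', u', hcu', he⟩ | ⟨a', e', ha1', ha2', ha3'⟩
      · have l1 : u ≤ len c := hcu.2.2.1.trans ((h.mono hcu.1 (hBlt τ hτ) le_rfl).trans (h.wle c hcu.1))
        have l2 : u' ≤ len c' := hcu'.2.2.1.trans ((h.mono hcu'.1 (hBlt τ' hτ') le_rfl).trans (h.wle c' hcu'.1))
        have e1 := hG.dis c hcu.1 c' hcu'.1 u l1 u' l2 he
        subst e1
        have e2 := (hG.path c hcu.1).inj u l1 u' l2 he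
        subst e2
        exact Or.inl ⟨c, u, rfl, hcu, hcu'⟩
      · exact (hne τ hτ x y c u a' hcu (hrow τ' hτ' x' y' a' hy' e' ha2') ha3').elim
    · rcases hz' with ⟨c', u', hcu', rfl⟩ | ⟨a', e', ha1', ha2', ha3'⟩
      · exact (hne τ' hτ' x' y' c' u' a hcu' (hrow τ hτ x y a hy e ha2) ha3).elim
      · have : a = a' := by
          by_contra hne'
          exact Set.disjoint_left.1 (h.adis a (hrow τ hτ x y a hy e ha2) a' (hrow τ' hτ' x' y' a' hy' e' ha2') hne') ha3 ha3'
        subst this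
        exact Or.inr ⟨a, ⟨e, ha1, ha2⟩, ⟨e', ha1', ha2'⟩⟩
  let U : ℕ → ℕ → ℕ → Set V := fun τ x y => {z | Rch r (S τ x y) (P τ x) z ∧ Rch r (S τ x y) z (P (τ+1) y)}
  have hUS : ∀ τ x y z, z ∈ U τ x y → z ∈ S τ x y := fun τ x y z hz => hz.1.right
  refine ⟨P, U, ?_, ?_, ?_, ?_, ?_, ?_, ?_, ?_⟩
  · intro τ hτ x hx y hy hxy
    exact (hreach τ hτ x hx y hy hxy).between
  · intro τ hτ x hx y hy hxy w hw
    refine hw.1.between.mono ?_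
    rintro z ⟨h1, h2⟩
    exact ⟨h1, h2.trans hw.2⟩
  · intro τ hτ x hx y hy hxy w hw
    refine hw.2.between.mono ?_
    rintro z ⟨h1, h2⟩
    exact ⟨hw.1.trans h1, h2⟩
  · rintro τ hτ x hx y hy x' hx' y' hy' ⟨g1, g2⟩ ⟨g3, g4⟩ hxx hyy z hz hz'
    rcases hcommon τ hτ τ hτ x y x' y' hy hy' z (hUS _ _ _ _ hz) (hUS _ _ _ _ hz') with
      ⟨c, u, -, ⟨hc, a1, a2, a3⟩, ⟨-, b1, b2, b3⟩⟩ | ⟨a, ⟨e, a1, a2⟩, ⟨e', b1, b2⟩⟩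
    · rcases a3 with ⟨a3, a4⟩ | ⟨a3, a4⟩ | ⟨a3, a4, a5, a6⟩
      · rcases b3 with ⟨b3, b4⟩ | ⟨b3, b4⟩ | ⟨b3, b4, b5, b6⟩
        · have := hJinj x hx x' hx' (a3.symm.trans b3); omega
        · have := hJinj x hx y' hy' (a3.symm.trans b3); omega
        · exact b4 x hx a3
      · rcases b3 with ⟨b3, b4⟩ | ⟨b3, b4⟩ | ⟨b3, b4, b5, b6⟩
        · have := hJinj y hy x' hx' (a3.symm.trans b3)
          have e1 := a4 (by omega)
          have e2 := b4 (by omega)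
          have := ho2 x x' hxx (by omega)
          have := h.mono hc (show B τ + off x' + q ≤ B τ + off x by omega)
            (by have := hBlt τ hτ; have := ho1 x (by omega); omega)
          omega
        · have := hJinj y hy y' hy' (a3.symm.trans b3); omega
        · exact b4 y hy a3
      · rcases b3 with ⟨b3, b4⟩ | ⟨b3, b4⟩ | ⟨b3, b4, b5, b6⟩
        · exact a4 x' hx' b3
        · exact a4 y' hy' b3
        · have := ho2 x x' hxx (by omega)
          have := h.mono hc (show B τ + off x' + q ≤ B τ + off x by omega)
            (by have := hBlt τ hτ; have := ho1 x (by omega); omega)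
          omega
    · have := ho2 x x' hxx (by omega)
      omega
  · rintro τ hτ x hx y hy x' hx' y' hy' ⟨g1, g2⟩ ⟨g3, g4⟩ z hz hz'
    rcases hcommon τ (by omega) (τ+1) hτ x y x' y' hy hy' z (hUS _ _ _ _ hz) (hUS _ _ _ _ hz') with
      ⟨c, u, hzc, ⟨hc, a1, a2, a3⟩, ⟨-, b1, b2, b3⟩⟩ | ⟨a, ⟨e, a1, a2⟩, ⟨e', b1, b2⟩⟩
    · rw [hB1] at b1 b2 b3
      have hb1 := hBlt τ (by omega)
      have hb2 := hBlt (τ+1) (by omega)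
      rw [hB1] at hb2
      have hcx : c = J x' := by
        rcases b3 with ⟨b3, b4⟩ | ⟨b3, b4⟩ | ⟨b3, b4, b5, b6⟩
        · exact b3
        · rcases Nat.eq_or_lt_of_le g3 with e | e
          · rw [e]; exact b3
          · have := b4 (by omega)
            have := h.mono hc (show B τ + H ≤ B τ + H + off x' by omega) (by have := ho1 x' (by omega); omega)
            omega
        · have := h.mono hc (show B τ + H ≤ B τ + H + off x' by omega) (by have := ho1 x' (by omega); omega)
          omega
      refine ⟨?_, ?_⟩
      · rcases a3 with ⟨a3, a4⟩ | ⟨a3, a4⟩ | ⟨a3, a4, a5, a6⟩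
        · have := hJinj x hx x' hx' (a3.symm.trans hcx)
          rcases Nat.eq_or_lt_of_le g1 with e | e
          · omega
          · have := a4 (by omega)
            have := h.smono hc (show B τ + off x + q < B τ + H by have := ho1 x (by omega); omega) (by omega)
            omega
        · exact (hJinj y hy x' hx' (a3.symm.trans hcx)).symm
        · exact (a4 x' hx' hcx).elim
      · have : u = W c (B τ + H) := by omega
        rw [hzc, this, hcx]
        simp only [P, hB1]
    · have := ho1 x (by omega)
      have := hB1 τ
      omega
  · rintro τ τ' hττ hτ' x hx y hy x' hx' y' hy' ⟨g1, g2⟩ ⟨g3, g4⟩ z hz hz'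
    have hB2 := hBm _ _ hττ
    rw [hB1, hB1] at hB2
    rcases hcommon τ (by omega) τ' hτ' x y x' y' hy hy' z (hUS _ _ _ _ hz) (hUS _ _ _ _ hz') with
      ⟨c, u, hzc, ⟨hc, a1, a2, a3⟩, ⟨-, b1, b2, b3⟩⟩ | ⟨a, ⟨e, a1, a2⟩, ⟨e', b1, b2⟩⟩
    · have := h.smono hc (show B τ + H < B τ' by omega) (by have := hBlt τ' hτ'; omega)
      omega
    · have := ho1 x (by omega)
      omega
  · refine ⟨fun x => {z | ∃ u ≤ len (J x), z = Q (J x) u}, fun x => Q (J x) (len (J x)), ?_, ?_⟩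
    · intro x hx
      refine ⟨hG.en _ (hJq x hx), ?_⟩
      exact Rch.of_path (h.wle _ (hJq x hx)) (fun i _ hi => (hG.path _ (hJq x hx)).step i hi) (fun i _ hi => ⟨i, hi, rfl⟩)
    · intro x hx x' hx' hne
      rw [Set.disjoint_left]
      rintro z ⟨u, hu, rfl⟩ ⟨u', hu', he⟩
      exact hne (hJinj x hx x' hx' (hG.dis _ (hJq x hx) _ (hJq x' hx') u hu u' hu' he))
  · refine ⟨fun x => {z | ∃ u ≤ len (J x), z = Q (J x) u}, fun x => Q (J x) 0, ?_, ?_⟩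
    · intro x hx
      refine ⟨hG.st _ (hJq x hx), ?_⟩
      have m1 := h.wle _ (hJq x hx)
      have m2 := h.mono (hJq x hx) (hBm 0 N (by omega)) le_rfl
      exact Rch.of_path (by omega) (fun i _ hi => (hG.path _ (hJq x hx)).step i (by omega)) (fun i _ hi => ⟨i, by omega, rfl⟩)
    · intro x hx x' hx' hne
      rw [Set.disjoint_left]
      rintro z ⟨u, hu, rfl⟩ ⟨u', hu', he⟩
      exact hne (hJinj x hx x' hx' (hG.dis _ (hJq x hx) _ (hJq x' hx') u hu u' hu' he))

end MeshSec

section Final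
variable {V : Type} {r : V → V → Prop}

theorem mesh3 {T : Set V} {m N : ℕ} {P : ℕ → ℕ → V} {U : ℕ → ℕ → ℕ → Set V}
    (h : Mesh r (fun x y => x ≤ y ∧ y ≤ x + 1) T (m+N+1) (2*N) P U) :
    ∃ P' U', Mesh r (fun x y => x ≤ y + 1 ∧ y ≤ x + 1) T m N P' U' := by
  obtain ⟨mid, hm1, hm2⟩ : ∃ mid : ℕ → ℕ → ℕ, (∀ x y, y < x → mid x y = x) ∧ (∀ x y, x ≤ y → mid x y = x + 1) :=
    ⟨fun x y => if y < x then x else x + 1, fun x y h => by simp [h], fun x y h => by simp [Nat.not_lt.2 h]⟩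
  have hmid : ∀ x y, x ≤ y + 1 → y ≤ x + 1 → x ≤ mid x y ∧ mid x y ≤ x + 1 ∧ mid x y ≤ y + 1 ∧ y ≤ mid x y := by
    intro x y h1 h2
    rcases Nat.lt_or_ge y x with h3 | h3
    · rw [hm1 x y h3]; omega
    · rw [hm2 x y h3]; omega
  have hmidlt : ∀ x y x' y', x < x' → y < y' → mid x y < mid x' y' := by
    intro x y x' y' h1 h2
    rcases Nat.lt_or_ge y x with h3 | h3 <;> rcases Nat.lt_or_ge y' x' with h4 | h4
    · rw [hm1 x y h3, hm1 _ _ h4]; omega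
    · rw [hm1 x y h3, hm2 _ _ h4]; omega
    · rw [hm2 x y h3, hm1 _ _ h4]; omega
    · rw [hm2 x y h3, hm2 _ _ h4]; omega
  let P' : ℕ → ℕ → V := fun τ x => P (2*τ) (x+τ)
  let U' : ℕ → ℕ → ℕ → Set V := fun τ x y => U (2*τ) (x+τ) (mid x y + τ) ∪ U (2*τ+1) (mid x y + τ) (y+1+τ)
  have hP' : ∀ τ y, P' (τ+1) y = P (2*τ+1+1) (y+1+τ) := by
    intro τ y
    simp only [P']
    rw [show 2*(τ+1) = 2*τ+1+1 by ring, show y + (τ+1) = y+1+τ by ring]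
  have r1 : ∀ τ < N, ∀ x < m, ∀ y < m, (x ≤ y + 1 ∧ y ≤ x + 1) →
      Rch r (U (2*τ) (x+τ) (mid x y + τ)) (P' τ x) (P (2*τ+1) (mid x y + τ)) := by
    intro τ hτ x hx y hy hxy
    have := hmid x y hxy.1 hxy.2
    exact h.rch _ (by omega) _ (by omega) _ (by omega) (by omega)
  have r2 : ∀ τ < N, ∀ x < m, ∀ y < m, (x ≤ y + 1 ∧ y ≤ x + 1) →
      Rch r (U (2*τ+1) (mid x y + τ) (y+1+τ)) (P (2*τ+1) (mid x y + τ)) (P' (τ+1) y) := by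
    intro τ hτ x hx y hy hxy
    have := hmid x y hxy.1 hxy.2
    rw [hP']
    exact h.rch _ (by omega) _ (by omega) _ (by omega) (by omega)
  refine ⟨P', U', ?_, ?_, ?_, ?_, ?_, ?_, ?_, ?_⟩
  · intro τ hτ x hx y hy hxy
    exact ((r1 τ hτ x hx y hy hxy).mono Set.subset_union_left).trans ((r2 τ hτ x hx y hy hxy).mono Set.subset_union_right)
  · intro τ hτ x hx y hy hxy w hw
    have := hmid x y hxy.1 hxy.2
    rcases hw with hw | hw
    · exact (h.tto _ (by omega) _ (by omega) _ (by omega) (by omega) w hw).mono Set.subset_union_left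
    · exact ((r1 τ hτ x hx y hy hxy).mono Set.subset_union_left).trans
        ((h.tto _ (by omega) _ (by omega) _ (by omega) (by omega) w hw).mono Set.subset_union_right)
  · intro τ hτ x hx y hy hxy w hw
    have := hmid x y hxy.1 hxy.2
    rcases hw with hw | hw
    · exact ((h.fro _ (by omega) _ (by omega) _ (by omega) (by omega) w hw).mono Set.subset_union_left).trans
        ((r2 τ hτ x hx y hy hxy).mono Set.subset_union_right)
    · rw [hP']
      exact (h.fro _ (by omega) _ (by omega) _ (by omega) (by omega) w hw).mono Set.subset_union_right
  · intro τ hτ x hx y hy x' hx' y' hy' hxy hxy' hxx hyy z hz hz'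
    have a1 := hmid x y hxy.1 hxy.2
    have a2 := hmid x' y' hxy'.1 hxy'.2
    have a3 := hmidlt x y x' y' hxx hyy
    rcases hz with hz | hz <;> rcases hz' with hz' | hz'
    · exact h.same _ (by omega) _ (by omega) _ (by omega) _ (by omega) _ (by omega) (by omega) (by omega) (by omega) (by omega) z hz hz'
    · have := (h.next _ (by omega) _ (by omega) _ (by omega) _ (by omega) _ (by omega) (by omega) (by omega) z hz hz').1
      omega
    · have := (h.next _ (by omega) _ (by omega) _ (by omega) _ (by omega) _ (by omega) (by omega) (by omega) z hz' hz).1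
      omega
    · exact h.same _ (by omega) _ (by omega) _ (by omega) _ (by omega) _ (by omega) (by omega) (by omega) (by omega) (by omega) z hz hz'
  · intro τ hτ x hx y hy x' hx' y' hy' hxy hxy' z hz hz'
    have a1 := hmid x y hxy.1 hxy.2
    have a2 := hmid x' y' hxy'.1 hxy'.2
    rw [hP']
    rcases hz with hz | hz <;> rcases hz' with hz' | hz'
    · exact (h.far _ _ (by omega) (by omega) _ (by omega) _ (by omega) _ (by omega) _ (by omega) (by omega) (by omega) z hz hz').elim
    · exact (h.far _ _ (by omega) (by omega) _ (by omega) _ (by omega) _ (by omega) _ (by omega) (by omega) (by omega) z hz hz').elim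
    · rw [show 2*(τ+1) = 2*τ+1+1 by ring] at hz'
      have := h.next _ (by omega) _ (by omega) _ (by omega) _ (by omega) _ (by omega) (by omega) (by omega) z hz hz'
      refine ⟨by omega, ?_⟩
      rw [this.2, show x' + (τ+1) = x' + 1 + τ by ring]
    · exact (h.far _ _ (by omega) (by omega) _ (by omega) _ (by omega) _ (by omega) _ (by omega) (by omega) (by omega) z hz hz').elim
  · intro τ τ' hττ hτ' x hx y hy x' hx' y' hy' hxy hxy' z hz hz'
    have a1 := hmid x y hxy.1 hxy.2
    have a2 := hmid x' y' hxy'.1 hxy'.2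
    rcases hz with hz | hz <;> rcases hz' with hz' | hz' <;>
    exact (h.far _ _ (by omega) (by omega) _ (by omega) _ (by omega) _ (by omega) _ (by omega) (by omega) (by omega) z hz hz').elim
  · obtain ⟨E, b, h1, h2⟩ := h.dn
    exact ⟨fun x => E (x+N), fun x => b (x+N), fun x hx => h1 _ (by omega), fun x hx x' hx' hne => h2 _ (by omega) _ (by omega) (by omega)⟩
  · obtain ⟨E, b, h1, h2⟩ := h.up
    exact ⟨E, b, fun x hx => h1 _ (by omega), fun x hx x' hx' hne => h2 _ (by omega) _ (by omega) (by omega)⟩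

abbrev Mesh3 (r : V → V → Prop) (T : Set V) (m N : ℕ) (P : ℕ → ℕ → V) (U : ℕ → ℕ → ℕ → Set V) : Prop :=
  Mesh r (fun x y => x ≤ y + 1 ∧ y ≤ x + 1) T m N P U

def Box (U : ℕ → ℕ → ℕ → Set V) (m N α β : ℕ) : Set V :=
  {z | ∃ τ x y, α ≤ τ ∧ τ < β ∧ τ < N ∧ x < m ∧ y < m ∧ x ≤ y + 1 ∧ y ≤ x + 1 ∧ z ∈ U τ x y}

def CoB (P : ℕ → ℕ → V) (U : ℕ → ℕ → ℕ → Set V) (m N α β : ℕ) : Set V :=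
  {z | z ∈ Box U m N α β ∧ ∀ x < m, z ≠ P α x ∧ z ≠ P β x}

variable {T : Set V} {m N : ℕ} {P : ℕ → ℕ → V} {U : ℕ → ℕ → ℕ → Set V}

theorem Box.sub {α β α' β' : ℕ} (h1 : α' ≤ α) (h2 : β ≤ β') : Box U m N α β ⊆ Box U m N α' β' := by
  rintro z ⟨τ, x, y, a1, a2, a3⟩
  exact ⟨τ, x, y, by omega, by omega, a3⟩

theorem Mesh.box_far (h : Mesh3 r T m N P U) {α β α' β' : ℕ} (hb : β + 1 ≤ α') :
    Disjoint (Box U m N α β) (Box U m N α' β') := by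
  rw [Set.disjoint_left]
  rintro z ⟨τ, x, y, a1, a2, a3, a4, a5, a6, a7, a8⟩ ⟨τ', x', y', b1, b2, b3, b4, b5, b6, b7, b8⟩
  exact h.far τ τ' (by omega) b3 x a4 y a5 x' b4 y' b5 ⟨a6, a7⟩ ⟨b6, b7⟩ z a8 b8

theorem Mesh.box_adj (h : Mesh3 r T m N P U) {α β γ : ℕ} {z : V} (hz : z ∈ Box U m N α β) (hz' : z ∈ Box U m N β γ) :
    ∃ x < m, z = P β x := by
  obtain ⟨τ, x, y, a1, a2, a3, a4, a5, a6, a7, a8⟩ := hz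
  obtain ⟨τ', x', y', b1, b2, b3, b4, b5, b6, b7, b8⟩ := hz'
  by_cases hf : τ + 2 ≤ τ'
  · exact (h.far τ τ' hf b3 x a4 y a5 x' b4 y' b5 ⟨a6, a7⟩ ⟨b6, b7⟩ z a8 b8).elim
  · have e1 : τ' = τ + 1 := by omega
    have e2 : τ + 1 = β := by omega
    subst e1
    have := h.next τ b3 x a4 y a5 x' b4 y' b5 ⟨a6, a7⟩ ⟨b6, b7⟩ z a8 b8
    exact ⟨x', b4, by rw [← e2]; exact this.2⟩

theorem Mesh.box_co (h : Mesh3 r T m N P U) {α β γ : ℕ} : Disjoint (Box U m N γ α) (CoB P U m N α β) := by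
  rw [Set.disjoint_left]
  rintro z hz ⟨h1, h2⟩
  obtain ⟨x, hx, he⟩ := h.box_adj hz h1
  exact (h2 x hx).1 he

theorem Mesh.box_co' (h : Mesh3 r T m N P U) {α β γ : ℕ} : Disjoint (Box U m N β γ) (CoB P U m N α β) := by
  rw [Set.disjoint_left]
  rintro z hz ⟨h1, h2⟩
  obtain ⟨x, hx, he⟩ := h.box_adj h1 hz
  exact (h2 x hx).2 he

def Traj (U : ℕ → ℕ → ℕ → Set V) (f : ℕ → ℕ) (α β : ℕ) : Set V := {z | ∃ τ, α ≤ τ ∧ τ < β ∧ z ∈ U τ (f τ) (f (τ+1))}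

theorem Traj.sub {f : ℕ → ℕ} {α β α' β' : ℕ} (h1 : α' ≤ α) (h2 : β ≤ β') : Traj U f α β ⊆ Traj U f α' β' := by
  rintro z ⟨τ, a1, a2, a3⟩
  exact ⟨τ, by omega, by omega, a3⟩

theorem Mesh.traj_rch (h : Mesh3 r T m N P U) {f : ℕ → ℕ} {α β : ℕ} (hab : α < β) (hb : β ≤ N)
    (hf : ∀ τ, α ≤ τ → τ ≤ β → f τ < m) (hs : ∀ τ, α ≤ τ → τ < β → f τ ≤ f (τ+1) + 1 ∧ f (τ+1) ≤ f τ + 1) :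
    Rch r (Traj U f α β) (P α (f α)) (P β (f β)) := by
  induction β, hab using Nat.le_induction with
  | base =>
    refine (h.rch α (by omega) _ (hf _ le_rfl (by omega)) _ (hf _ (by omega) le_rfl) (hs _ le_rfl (by omega))).mono ?_
    intro z hz
    exact ⟨α, le_rfl, by omega, hz⟩
  | succ β hab ih =>
    have hab : α + 1 ≤ β := hab
    refine ((ih (by omega) (fun τ h1 h2 => hf τ h1 (by omega)) (fun τ h1 h2 => hs τ h1 (by omega))).mono (Traj.sub le_rfl (by omega))).trans ?_
    refine (h.rch β (by omega) _ (hf _ (by omega) (by omega)) _ (hf _ (by omega) le_rfl) (hs _ (by omega) (by omega))).mono ?_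
    intro z hz
    exact ⟨β, by omega, by omega, hz⟩

theorem Mesh.traj_box {f : ℕ → ℕ} {α β : ℕ} (hb : β ≤ N)
    (hf : ∀ τ, α ≤ τ → τ ≤ β → f τ < m) (hs : ∀ τ, α ≤ τ → τ < β → f τ ≤ f (τ+1) + 1 ∧ f (τ+1) ≤ f τ + 1) :
    Traj U f α β ⊆ Box U m N α β := by
  rintro z ⟨τ, a1, a2, a3⟩
  exact ⟨τ, f τ, f (τ+1), a1, a2, by omega, hf _ a1 (by omega), hf _ (by omega) (by omega), (hs τ a1 a2).1, (hs τ a1 a2).2, a3⟩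

theorem Mesh.traj_dis (h : Mesh3 r T m N P U) {f g : ℕ → ℕ} {α β : ℕ} (hb : β ≤ N)
    (hf : ∀ τ, α ≤ τ → τ ≤ β → f τ < m) (hs : ∀ τ, α ≤ τ → τ < β → f τ ≤ f (τ+1) + 1 ∧ f (τ+1) ≤ f τ + 1)
    (hg : ∀ τ, α ≤ τ → τ ≤ β → g τ < m) (hs' : ∀ τ, α ≤ τ → τ < β → g τ ≤ g (τ+1) + 1 ∧ g (τ+1) ≤ g τ + 1)
    (hlt : ∀ τ, α ≤ τ → τ ≤ β → f τ < g τ) : Disjoint (Traj U f α β) (Traj U g α β) := by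
  rw [Set.disjoint_left]
  rintro z ⟨τ, a1, a2, a3⟩ ⟨τ', b1, b2, b3⟩
  have c1 := hf τ a1 (by omega)
  have c2 := hf (τ+1) (by omega) (by omega)
  have c3 := hg τ' b1 (by omega)
  have c4 := hg (τ'+1) (by omega) (by omega)
  rcases lt_trichotomy τ τ' with e | e | e
  · by_cases hf' : τ + 2 ≤ τ'
    · exact h.far τ τ' hf' (by omega) _ c1 _ c2 _ c3 _ c4 (hs τ a1 a2) (hs' τ' b1 b2) z a3 b3
    · have e1 : τ' = τ + 1 := by omega
      subst e1
      have := (h.next τ (by omega) _ c1 _ c2 _ c3 _ c4 (hs τ a1 a2) (hs' _ b1 b2) z a3 b3).1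
      have := hlt (τ+1) (by omega) (by omega)
      omega
  · subst e
    exact h.same τ (by omega) _ c1 _ c2 _ c3 _ c4 (hs τ a1 a2) (hs' _ b1 b2) (hlt _ a1 (by omega)) (hlt _ (by omega) (by omega)) z a3 b3
  · by_cases hf' : τ' + 2 ≤ τ
    · exact h.far τ' τ hf' (by omega) _ c3 _ c4 _ c1 _ c2 (hs' τ' b1 b2) (hs τ a1 a2) z b3 a3
    · have e1 : τ = τ' + 1 := by omega
      subst e1
      have := (h.next τ' (by omega) _ c3 _ c4 _ c1 _ c2 (hs' _ b1 b2) (hs _ a1 a2) z b3 a3).1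
      have := hlt (τ'+1) (by omega) (by omega)
      omega

theorem Mesh.route (h : Mesh3 r T m N P U) {k : ℕ} {a b : ℕ → ℕ} {α β : ℕ} (hab : α + 2 * m ≤ β) (hb : β ≤ N)
    (ha : ∀ i < k, a i < m) (hbm : ∀ i < k, b i < m) (ham : ∀ i j, i < j → j < k → a i < a j)
    (hbmm : ∀ i j, i < j → j < k → b i < b j) :
    ∃ W : ℕ → Set V, (∀ i < k, Rch r (W i) (P α (a i)) (P β (b i)) ∧ W i ⊆ Box U m N α β) ∧
      ∀ i < k, ∀ j < k, i ≠ j → Disjoint (W i) (W j) := by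
  have hge : ∀ i < k, i ≤ a i ∧ i ≤ b i := by
    intro i
    induction i with
    | zero => intro _; omega
    | succ i ih =>
      intro hi
      have := ih (by omega)
      have := ham i (i+1) (by omega) hi
      have := hbmm i (i+1) (by omega) hi
      omega
  let f : ℕ → ℕ → ℕ := fun i τ => max i (max (a i - (τ - α)) (b i - (β - τ)))
  have hf : ∀ i < k, ∀ τ, α ≤ τ → τ ≤ β → f i τ < m := by
    intro i hi τ h1 h2
    have := ha i hi; have := hbm i hi; have := hge i hi
    simp only [f]; omega
  have hs : ∀ i < k, ∀ τ, α ≤ τ → τ < β → f i τ ≤ f i (τ+1) + 1 ∧ f i (τ+1) ≤ f i τ + 1 := by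
    intro i hi τ h1 h2
    simp only [f]; omega
  have hlt : ∀ i j, i < j → j < k → ∀ τ, α ≤ τ → τ ≤ β → f i τ < f j τ := by
    intro i j hij hj τ h1 h2
    have := ham i j hij hj; have := hbmm i j hij hj
    simp only [f]; omega
  refine ⟨fun i => Traj U (f i) α β, ?_, ?_⟩
  · intro i hi
    have a1 := ha i hi; have a2 := hbm i hi; have a3 := hge i hi
    refine ⟨?_, Mesh.traj_box hb (hf i hi) (hs i hi)⟩
    have := h.traj_rch (by omega) hb (hf i hi) (hs i hi)
    rwa [show f i α = a i by simp only [f]; omega, show f i β = b i by simp only [f]; omega] at this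
  · intro i hi j hj hij
    rcases Nat.lt_or_gt_of_ne hij with e | e
    · exact h.traj_dis hb (hf i hi) (hs i hi) (hf j hj) (hs j hj) (hlt i j e hj)
    · exact (h.traj_dis hb (hf j hj) (hs j hj) (hf i hi) (hs i hi) (hlt j i e hi)).symm

theorem Mesh.move (h : Mesh3 r T m N P U) {α β x y : ℕ} (hab : α + 2 * m ≤ β) (hb : β ≤ N) (hx : x < m) (hy : y < m) :
    Rch r (Box U m N α β) (P α x) (P β y) := by
  obtain ⟨W, h1, -⟩ := h.route (k := 1) (a := fun _ => x) (b := fun _ => y) hab hb (fun _ _ => hx) (fun _ _ => hy)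
    (by omega) (by omega)
  exact (h1 0 (by omega)).1.mono (h1 0 (by omega)).2

theorem hit_card {X : Finset V} {A : ℕ → Set V} {S : Finset ℕ}
    (hS : ∀ i ∈ S, ∃ z ∈ X, z ∈ A i) (hd : ∀ i ∈ S, ∀ j ∈ S, i ≠ j → Disjoint (A i) (A j)) : S.card ≤ X.card := by
  classical
  choose z hz hz' using hS
  refine Finset.card_le_card_of_forall_subsingleton (fun i w => w ∈ A i) (fun i hi => ⟨z i hi, hz i hi, hz' i hi⟩) ?_
  rintro w _ i ⟨hi, hi'⟩ j ⟨hj, hj'⟩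
  by_contra hne
  exact Set.disjoint_left.1 (hd i hi j hj hne) hi' hj'

end Final

section FinalL
variable {V : Type} {r : V → V → Prop}
variable {T : Set V} {m N : ℕ} {P : ℕ → ℕ → V} {U : ℕ → ℕ → ℕ → Set V}

theorem Mesh.pmem (h : Mesh3 r T m N P U) {τ x : ℕ} (hτ : τ < N) (hx : x < m) : P τ x ∈ U τ x x :=
  (h.rch τ hτ x hx x hx ⟨by omega, by omega⟩).left

theorem Mesh.pne (h : Mesh3 r T m N P U) {τ τ' x y : ℕ} (hτ : τ + 2 ≤ τ') (hτ' : τ' < N) (hx : x < m) (hy : y < m) :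
    P τ x ≠ P τ' y := by
  intro he
  have h1 := h.pmem (show τ < N by omega) hx
  have h2 := h.pmem hτ' hy
  rw [← he] at h2
  exact h.far τ τ' hτ hτ' x hx x hx y hy y hy ⟨by omega, by omega⟩ ⟨by omega, by omega⟩ _ h1 h2

theorem link_pack (h : Mesh3 r T m N P U) {n α β : ℕ} (hab : α + 2 * m ≤ β) (hb : β < N) (hm : 0 < m)
    {S : ℕ → Set V} {a b σ : ℕ → ℕ} (ha : ∀ i < 2 * n, a i < m) (hbm : ∀ i < 2 * n, b i < m)
    (hbb : ∀ i j, i < j → j < 2 * n → b i < b j)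
    (haa : ∀ i j, i < j → j < 2 * n → a (σ i) < a (σ j))
    (hσ : (∀ i < 2 * n, σ i = i) ∨ (∀ i < 2 * n, σ i = 2 * n - 1 - i))
    (hS : ∀ i < 2 * n, Rch r (S i) (P β (b i)) (P α (a i)))
    (hSd : ∀ i < 2 * n, ∀ j < 2 * n, i ≠ j → Disjoint (S i) (S j))
    (hSc : ∀ i < 2 * n, ∀ z ∈ S i, z ∈ Box U m N α β → z = P β (b i) ∨ z = P α (a i)) : Pack r n := by
  have s1 : ∀ i < 2 * n, σ i < 2 * n ∧ σ (σ i) = i ∧ (σ i = i ∨ σ i = 2 * n - 1 - i) := by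
    intro i hi
    rcases hσ with hσ | hσ
    · rw [hσ i hi, hσ i hi]; omega
    · rw [hσ i hi, hσ _ (by omega)]; omega
  obtain ⟨W, hW, hWd⟩ := h.route (k := 2 * n) (a := fun i => a (σ i)) (b := b) hab hb.le
    (fun i hi => ha _ (s1 i hi).1) hbm haa hbb
  have hWS : ∀ p < 2 * n, ∀ q < 2 * n, p ≠ q → p ≠ 2 * n - 1 - q → Disjoint (W p) (S q) := by
    intro p hp q hq h1 h2
    rw [Set.disjoint_left]
    intro z hz hz'
    obtain ⟨c1, c2, c3⟩ := s1 q hq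
    rcases hSc q hq z hz' ((hW p hp).2 hz) with e | e
    · have := (hW q hq).1.right
      rw [← e] at this
      exact Set.disjoint_left.1 (hWd p hp q hq h1) hz this
    · have := (hW _ c1).1.left
      rw [c2, ← e] at this
      exact Set.disjoint_left.1 (hWd p hp _ c1 (by omega)) hz this
  have key : ∀ p < 2 * n, ∀ q < 2 * n, p ≠ q → p ≠ 2 * n - 1 - q → Disjoint (W p ∪ S p) (W q ∪ S q) := by
    intro p hp q hq h1 h2
    rw [Set.disjoint_union_left, Set.disjoint_union_right, Set.disjoint_union_right]
    exact ⟨⟨hWd p hp q hq h1, hWS p hp q hq h1 h2⟩, (hWS q hq p hp (by omega) (by omega)).symm, hSd p hp q hq h1⟩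
  refine ⟨fun i => (W i ∪ S i) ∪ (W (2*n-1-i) ∪ S (2*n-1-i)), ?_, ?_⟩
  · intro i hi
    obtain ⟨c1, c2, c3⟩ := s1 i (by omega)
    have sub : ∀ q, (q = i ∨ q = 2*n-1-i) → W q ⊆ (W i ∪ S i) ∪ (W (2*n-1-i) ∪ S (2*n-1-i)) ∧
        S q ⊆ (W i ∪ S i) ∪ (W (2*n-1-i) ∪ S (2*n-1-i)) := by
      rintro q (rfl | rfl)
      · exact ⟨fun z hz => Or.inl (Or.inl hz), fun z hz => Or.inl (Or.inr hz)⟩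
      · exact ⟨fun z hz => Or.inr (Or.inl hz), fun z hz => Or.inr (Or.inr hz)⟩
    have r1 := (hS i (by omega)).mono (sub i (Or.inl rfl)).2
    have r2 := (hW _ c1).1.mono (sub _ c3).1
    rw [c2] at r2
    have r3 := (hS _ c1).mono (sub _ c3).2
    have r4 := (hW i (by omega)).1.mono (sub i (Or.inl rfl)).1
    refine HasCyc.of_rch r1 (r2.trans (r3.trans r4)) ?_
    exact (h.pne (by omega) hb (ha _ (by omega)) (hbm _ (by omega))).symm
  · intro i hi j hj hij
    exact Set.disjoint_union_left.2 ⟨Set.disjoint_union_right.2 ⟨key i (by omega) j (by omega) (by omega) (by omega),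
      key i (by omega) _ (by omega) (by omega) (by omega)⟩,
      Set.disjoint_union_right.2 ⟨key _ (by omega) j (by omega) (by omega) (by omega),
      key _ (by omega) _ (by omega) (by omega) (by omega)⟩⟩

theorem case_link (n : ℕ) : ∃ s, ∀ {V : Type} {r : V → V → Prop} {T : Set V} {m N : ℕ} {P : ℕ → ℕ → V}
    {U : ℕ → ℕ → ℕ → Set V} {α β : ℕ}, Mesh3 r T m N P U → α + 2 * m ≤ β → β < N → 0 < m →
    (∃ S u v, Linkage (fun x y => r x y ∧ x ∉ CoB P U m N α β ∧ y ∉ CoB P U m N α β)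
      {z | ∃ x < m, z = P β x} {z | ∃ x < m, z = P α x} s S u v) → Pack r n := by
  obtain ⟨s, hs1, hs⟩ := ramsey (Bool × Bool) (2 * n)
  refine ⟨s, ?_⟩
  intro V r T m N P U α β h hab hb hm hL
  obtain ⟨S, u, v, hL⟩ := hL
  have trim : ∀ i : ℕ, ∃ S' : Set V, ∃ a b : ℕ, i < s → a < m ∧ b < m ∧ Rch r S' (P β b) (P α a) ∧ S' ⊆ S i ∧
      ∀ z ∈ S', z ∈ Box U m N α β → z = P β b ∨ z = P α a := by
    intro i
    by_cases hi : i < s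
    swap
    · exact ⟨∅, 0, 0, fun h => absurd h hi⟩
    have bnc : ∀ z, (∃ x < m, z = P β x) → z ∉ CoB P U m N α β := by
      rintro z ⟨x, hx, rfl⟩ hz
      exact (hz.2 x hx).2 rfl
    have h1 := (hL.hr i hi).stay (Z := (CoB P U m N α β)ᶜ) (bnc _ (hL.hs i hi)) (fun x y _ _ _ hr => hr.2.2)
    have h1 := h1.mono_rel (r' := r) (fun x y hr => hr.1)
    obtain ⟨w, ⟨b, hbm, rfl⟩, h2, h2'⟩ := h1.last (A := {z | ∃ x < m, z = P β x}) (hL.hs i hi)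
    obtain ⟨w, ⟨a, ham, rfl⟩, h3, h3'⟩ := h2.first (B := {z | ∃ x < m, z = P α x}) (hL.ht i hi)
    have sub1 : ((S i ∩ (CoB P U m N α β)ᶜ) \ {z | ∃ x < m, z = P β x}) ∪ {P β b} ⊆ S i ∩ (CoB P U m N α β)ᶜ := by
      rintro z (hz | hz)
      · exact hz.1
      · rw [hz]; exact h2'.right
    have sub2 := h3'.left
    refine ⟨_, a, b, fun _ => ⟨ham, hbm, h3, ?_, ?_⟩⟩
    · rintro z (hz | hz)
      · exact (sub1 hz.1).1
      · rw [hz]; exact (sub1 sub2).1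
    · rintro z (hz | hz) hzB
      · have hzc := (sub1 hz.1).2
        rcases hz.1 with h4 | h4
        · exact (hzc ⟨hzB, fun x hx => ⟨fun e => hz.2 ⟨x, hx, e⟩, fun e => h4.2 ⟨x, hx, e⟩⟩⟩).elim
        · exact Or.inl h4
      · exact Or.inr hz
  choose S' a b htr using trim
  have hd : ∀ i < s, ∀ j < s, i ≠ j → Disjoint (S' i) (S' j) := fun i hi j hj hij =>
    (hL.hd i hi j hj hij).mono (htr i hi).2.2.2.1 (htr j hj).2.2.2.1
  have binj : ∀ i < s, ∀ j < s, i ≠ j → b i ≠ b j := by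
    intro i hi j hj hij he
    have h1 := (htr i hi).2.2.1.left
    have h2 := (htr j hj).2.2.1.left
    rw [← he] at h2
    exact Set.disjoint_left.1 (hd i hi j hj hij) h1 h2
  have ainj : ∀ i < s, ∀ j < s, i ≠ j → a i ≠ a j := by
    intro i hi j hj hij he
    have h1 := (htr i hi).2.2.1.right
    have h2 := (htr j hj).2.2.1.right
    rw [← he] at h2
    exact Set.disjoint_left.1 (hd i hi j hj hij) h1 h2
  obtain ⟨g, hg, hgs, ⟨c1, c2⟩, hc⟩ := hs (fun i j => (decide (b i < b j), decide (a i < a j)))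
  have ginj : ∀ i j, i < j → g i < g j := fun i j h => hg h
  -- orient
  obtain ⟨e, es, einj, eb, ea⟩ : ∃ e : ℕ → ℕ, (∀ i < 2 * n, e i < s) ∧ (∀ i < 2 * n, ∀ j < 2 * n, i ≠ j → e i ≠ e j) ∧
      (∀ i j, i < j → j < 2 * n → b (e i) < b (e j)) ∧
      ((∀ i j, i < j → j < 2 * n → a (e i) < a (e j)) ∨ (∀ i j, i < j → j < 2 * n → a (e j) < a (e i))) := by
    have hg' : ∀ i < 2 * n, ∀ j < 2 * n, i ≠ j → g i ≠ g j := fun i _ j _ h => hg.injective.ne h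
    have ha' : (∀ i j, i < j → j < 2 * n → a (g i) < a (g j)) ∨ (∀ i j, i < j → j < 2 * n → a (g j) < a (g i)) := by
      cases c2 with
      | true => exact Or.inl fun i j h1 h2 => by simpa using (Prod.ext_iff.1 (hc i j h1 h2)).2
      | false =>
        refine Or.inr fun i j h1 h2 => ?_
        have h3 := (Prod.ext_iff.1 (hc i j h1 h2)).2
        have h4 := ainj _ (hgs i (by omega)) _ (hgs j h2) (hg' i (by omega) j h2 (by omega))
        simp at h3
        omega
    cases c1 with
    | true =>
      exact ⟨g, hgs, hg', fun i j h1 h2 => by simpa using (Prod.ext_iff.1 (hc i j h1 h2)).1, ha'⟩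
    | false =>
      refine ⟨fun i => g (2 * n - 1 - i), fun i hi => hgs _ (by omega), fun i hi j hj hij => hg' _ (by omega) _ (by omega) (by omega), ?_, ?_⟩
      · intro i j h1 h2
        have h3 := (Prod.ext_iff.1 (hc (2*n-1-j) (2*n-1-i) (by omega) (by omega))).1
        have h4 := binj _ (hgs (2*n-1-i) (by omega)) _ (hgs (2*n-1-j) (by omega)) (hg' _ (by omega) _ (by omega) (by omega))
        simp at h3
        show b (g (2*n-1-i)) < b (g (2*n-1-j))
        omega
      · rcases ha' with ha' | ha'
        · exact Or.inr fun i j h1 h2 => ha' _ _ (by omega) (by omega)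
        · exact Or.inl fun i j h1 h2 => ha' _ _ (by omega) (by omega)
  obtain ⟨σ, hσ, hσa⟩ : ∃ σ : ℕ → ℕ, ((∀ i < 2 * n, σ i = i) ∨ (∀ i < 2 * n, σ i = 2 * n - 1 - i)) ∧
      ∀ i j, i < j → j < 2 * n → a (e (σ i)) < a (e (σ j)) := by
    rcases ea with ea | ea
    · exact ⟨id, Or.inl fun _ _ => rfl, ea⟩
    · exact ⟨fun i => 2*n-1-i, Or.inr fun _ _ => rfl, fun i j h1 h2 => ea (2*n-1-j) (2*n-1-i) (by omega) (by omega)⟩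
  exact link_pack h hab hb hm (S := fun i => S' (e i)) (a := fun i => a (e i)) (b := fun i => b (e i)) (σ := σ)
    (fun i hi => (htr _ (es i hi)).1) (fun i hi => (htr _ (es i hi)).2.1) eb hσa hσ (fun i hi => (htr _ (es i hi)).2.2.1)
    (fun i hi j hj hij => hd _ (es i hi) _ (es j hj) (einj i hi j hj hij)) (fun i hi => (htr _ (es i hi)).2.2.2.2)

end FinalL

section FinalM
variable {V : Type} {r : V → V → Prop}
variable {m N : ℕ} {P : ℕ → ℕ → V} {U : ℕ → ℕ → ℕ → Set V}

theorem Mesh.ret {T : Finset V} (h : Mesh3 r (↑T : Set V) m N P U) (hT : Linked r T) {X : Finset V}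
    (hX : 4 * X.card + 1 ≤ m) (hN : 0 < N) : ∃ c < m, ∃ c' < m, Disjoint (Traj U (fun _ => c) 0 N) (↑X : Set V) ∧
      Disjoint (Traj U (fun _ => c') 0 N) (↑X : Set V) ∧ Rch r (↑X : Set V)ᶜ (P N c) (P 0 c') := by
  classical
  obtain ⟨E, b, hE, hEd⟩ := h.dn
  obtain ⟨F, b', hF, hFd⟩ := h.up
  let A : ℕ → Set V := fun c => Traj U (fun _ => c) 0 N
  have hAd : ∀ x < m, ∀ x' < m, x ≠ x' → Disjoint (A x) (A x') := by
    have : ∀ x < m, ∀ x' < m, x < x' → Disjoint (A x) (A x') := by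
      intro x hx x' hx' hlt
      exact h.traj_dis le_rfl (fun _ _ _ => hx) (fun _ _ _ => ⟨by omega, by omega⟩) (fun _ _ _ => hx')
        (fun _ _ _ => ⟨by omega, by omega⟩) (fun _ _ _ => hlt)
    intro x hx x' hx' hne
    rcases Nat.lt_or_gt_of_ne hne with e | e
    · exact this x hx x' hx' e
    · exact (this x' hx' x hx e).symm
  have bad : ∀ B : ℕ → Set V, (∀ x < m, ∀ x' < m, x ≠ x' → Disjoint (B x) (B x')) →
      ((Finset.range m).filter (fun i => ∃ z ∈ X, z ∈ B i)).card ≤ X.card := by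
    intro B hB
    refine hit_card (A := B) (fun i hi => (Finset.mem_filter.1 hi).2) ?_
    intro i hi j hj hij
    exact hB i (Finset.mem_range.1 (Finset.mem_filter.1 hi).1) j (Finset.mem_range.1 (Finset.mem_filter.1 hj).1) hij
  have b1 := bad A hAd
  have b2 := bad E hEd
  have b3 := bad F hFd
  set B1 := (Finset.range m).filter (fun i => ∃ z ∈ X, z ∈ A i)
  set B2 := (Finset.range m).filter (fun i => ∃ z ∈ X, z ∈ E i)
  set B3 := (Finset.range m).filter (fun i => ∃ z ∈ X, z ∈ F i)
  let G := Finset.range m \ (B1 ∪ B2 ∪ B3)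
  have hG : X.card + 1 ≤ G.card := by
    have h1 := Finset.le_card_sdiff (B1 ∪ B2 ∪ B3) (Finset.range m)
    have h2 := Finset.card_union_le (B1 ∪ B2) B3
    have h3 := Finset.card_union_le B1 B2
    rw [Finset.card_range] at h1
    simp only [G]
    omega
  have hGm : ∀ c ∈ G, c < m ∧ Disjoint (A c) (↑X : Set V) ∧ Disjoint (E c) (↑X : Set V) ∧ Disjoint (F c) (↑X : Set V) := by
    intro c hc
    have h1 := Finset.mem_sdiff.1 hc
    have h2 := h1.2
    rw [Finset.mem_union, Finset.mem_union, not_or, not_or] at h2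
    refine ⟨Finset.mem_range.1 h1.1, ?_, ?_, ?_⟩
    · exact Set.disjoint_left.2 fun z hz hz' => h2.1.1 (Finset.mem_filter.2 ⟨h1.1, z, hz', hz⟩)
    · exact Set.disjoint_left.2 fun z hz hz' => h2.1.2 (Finset.mem_filter.2 ⟨h1.1, z, hz', hz⟩)
    · exact Set.disjoint_left.2 fun z hz hz' => h2.2 (Finset.mem_filter.2 ⟨h1.1, z, hz', hz⟩)
  have binj : Set.InjOn b ↑G := by
    intro x hx y hy he
    by_contra hne
    have h1 := (hE x (hGm x hx).1).2.right
    have h2 := (hE y (hGm y hy).1).2.right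
    rw [← he] at h2
    exact Set.disjoint_left.1 (hEd x (hGm x hx).1 y (hGm y hy).1 hne) h1 h2
  have binj' : Set.InjOn b' ↑G := by
    intro x hx y hy he
    by_contra hne
    have h1 := (hF x (hGm x hx).1).2.left
    have h2 := (hF y (hGm y hy).1).2.left
    rw [← he] at h2
    exact Set.disjoint_left.1 (hFd x (hGm x hx).1 y (hGm y hy).1 hne) h1 h2
  have cb := Finset.card_image_of_injOn binj
  have cb' := Finset.card_image_of_injOn binj'
  obtain ⟨S, s, t, hL⟩ := hT (G.image b) (G.image b')
    (by
      intro z hz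
      obtain ⟨c, hc, rfl⟩ := Finset.mem_image.1 hz
      exact (hE c (hGm c hc).1).1)
    (by
      intro z hz
      obtain ⟨c, hc, rfl⟩ := Finset.mem_image.1 hz
      exact (hF c (hGm c hc).1).1) (by rw [cb, cb'])
  rw [cb] at hL
  obtain ⟨i, hi, hiX⟩ : ∃ i < G.card, ∀ z ∈ X, z ∉ S i := by
    by_contra hcon
    push Not at hcon
    have := hit_card (X := X) (A := S) (S := Finset.range G.card) (fun i hi => hcon i (Finset.mem_range.1 hi))
      (fun i hi j hj hij => hL.hd i (Finset.mem_range.1 hi) j (Finset.mem_range.1 hj) hij)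
    rw [Finset.card_range] at this
    omega
  obtain ⟨c, hc, ec⟩ := Finset.mem_image.1 (Finset.mem_coe.1 (hL.hs i hi))
  obtain ⟨c', hc', ec'⟩ := Finset.mem_image.1 (Finset.mem_coe.1 (hL.ht i hi))
  obtain ⟨g1, g2, g3, g4⟩ := hGm c hc
  obtain ⟨g1', g2', g3', g4'⟩ := hGm c' hc'
  refine ⟨c, g1, c', g1', g2, g2', ?_⟩
  have r1 := (hE c g1).2.mono g3.subset_compl_right
  have r2 := (hL.hr i hi).mono (S' := (↑X : Set V)ᶜ) (fun z hz hz' => hiX z hz' hz)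
  have r3 := (hF c' g1').2.mono g4'.subset_compl_right
  rw [← ec, ← ec'] at r2
  exact r1.trans (r2.trans r3)

variable {T : Set V}

theorem Mesh.core_out (h : Mesh3 r T m N P U) {d c : ℕ} (hd : d + 6 * m ≤ N) (hc : c < m) {w : V}
    (hw : w ∈ CoB P U m N (d + 2 * m) (d + 4 * m)) : Rch r (Box U m N d (d + 6 * m)) w (P (d + 6 * m) c) := by
  obtain ⟨τ, x, y, a1, a2, a3, a4, a5, a6, a7, a8⟩ := hw.1
  have r1 := h.fro τ a3 x a4 y a5 ⟨a6, a7⟩ w a8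
  have r2 := h.move (α := τ + 1) (β := d + 6 * m) (by omega) hd a5 hc
  exact (r1.mono (S' := Box U m N d (d + 6 * m)) fun z hz => ⟨τ, x, y, by omega, by omega, a3, a4, a5, a6, a7, hz⟩).trans
    (r2.mono (Box.sub (by omega) le_rfl))

theorem Mesh.core_in (h : Mesh3 r T m N P U) {d c : ℕ} (hd : d + 6 * m ≤ N) (hc : c < m) {w : V}
    (hw : w ∈ CoB P U m N (d + 2 * m) (d + 4 * m)) : Rch r (Box U m N d (d + 6 * m)) (P d c) w := by
  obtain ⟨τ, x, y, a1, a2, a3, a4, a5, a6, a7, a8⟩ := hw.1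
  have r1 := h.tto τ a3 x a4 y a5 ⟨a6, a7⟩ w a8
  have r2 := h.move (α := d) (β := τ) (by omega) (by omega) hc a4
  exact (r2.mono (Box.sub le_rfl (by omega))).trans
    (r1.mono fun z hz => ⟨τ, x, y, by omega, by omega, a3, a4, a5, a6, a7, hz⟩)

theorem final (n : ℕ) : ∃ m N, ∀ {V : Type} [Finite V] [Nonempty V] {r : V → V → Prop} {T : Finset V},
    Linked r T → (∃ P U, Mesh3 r (↑T : Set V) m N P U) → Pack r n := by
  classical
  obtain ⟨s, hs⟩ := case_link n
  obtain ⟨K, hK, hind⟩ := independent s (2 * n)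
  obtain ⟨m, hm⟩ : ∃ m, m = 4 * (2 * n * s) + 2 := ⟨_, rfl⟩
  obtain ⟨d, hd⟩ : ∃ d : ℕ → ℕ, ∀ k, d k = k * (6 * m + 1) := ⟨_, fun _ => rfl⟩
  have dlt : ∀ k k', k < k' → d k + 6 * m + 1 ≤ d k' := by
    intro k k' h
    rw [hd, hd]
    have := Nat.mul_le_mul_right (6 * m + 1) (show k + 1 ≤ k' from h)
    rw [Nat.add_mul, Nat.one_mul] at this
    omega
  refine ⟨m, d K, ?_⟩
  rintro V _ _ r T hT ⟨P, U, h⟩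
  obtain ⟨N, hN⟩ : ∃ N, N = d K := ⟨_, rfl⟩
  rw [← hN] at h
  have dN : ∀ k < K, d k + 6 * m + 1 ≤ N := fun k hk => hN ▸ dlt k K hk
  let Co : ℕ → Set V := fun k => CoB P U m N (d k + 2 * m) (d k + 4 * m)
  let D : ℕ → Set V := fun k => Box U m N (d k) (d k + 6 * m)
  have CoD : ∀ k, Co k ⊆ D k := fun k z hz => Box.sub (by omega) (by omega) hz.1
  by_cases hlk : ∃ k < K, ∃ S u v, Linkage (fun x y => r x y ∧ x ∉ Co k ∧ y ∉ Co k)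
      {z | ∃ x < m, z = P (d k + 4 * m) x} {z | ∃ x < m, z = P (d k + 2 * m) x} s S u v
  · obtain ⟨k, hk, hlk⟩ := hlk
    have := dN k hk
    exact hs h (by omega) (by omega) (by omega) hlk
  have cuts : ∀ k, ∃ X : Finset V, k < K → X.card < s ∧ ∀ x < m, ∀ y < m,
      ¬ Rch (fun x y => r x y ∧ x ∉ Co k ∧ y ∉ Co k) (↑X : Set V)ᶜ (P (d k + 4 * m) x) (P (d k + 2 * m) y) := by
    intro k
    by_cases hk : k < K
    · rcases menger (fun x y => r x y ∧ x ∉ Co k ∧ y ∉ Co k) {z | ∃ x < m, z = P (d k + 4 * m) x}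
        {z | ∃ x < m, z = P (d k + 2 * m) x} s with h1 | ⟨X, h1, h2⟩
      · exact (hlk ⟨k, hk, h1⟩).elim
      · exact ⟨X, fun _ => ⟨h1, fun x hx y hy => h2 _ ⟨x, hx, rfl⟩ _ ⟨y, hy, rfl⟩⟩⟩
    · exact ⟨∅, fun h => absurd h hk⟩
  choose X hX using cuts
  obtain ⟨g, hg, hgK, hρ⟩ := hind (fun k j => ∃ z ∈ X k, z ∈ D j) (by
    intro k hk A hA
    refine (hit_card (X := X k) (A := D) (fun j hj => (hA j hj).2.2) ?_).trans_lt (hX k hk).1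
    intro i hi j hj hij
    rcases Nat.lt_or_gt_of_ne hij with e | e
    · exact h.box_far (by have := dlt _ _ e; omega)
    · exact (h.box_far (by have := dlt _ _ e; omega)).symm)
  have gd : ∀ i j, i < j → d (g i) + 6 * m + 1 ≤ d (g j) := fun i j h => dlt _ _ (hg h)
  have gN : ∀ i < 2 * n, d (g i) + 6 * m + 1 ≤ N := fun i hi => dN _ (hgK i hi)
  have hXD : ∀ i < 2 * n, ∀ j < 2 * n, i ≠ j → ∀ z ∈ D (g j), z ∉ X (g i) :=
    fun i hi j hj hij z hz hz' => hρ i hi j hj hij ⟨z, hz', hz⟩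
  by_cases hn : n = 0
  · subst hn
    exact ⟨fun _ => ∅, by omega, by omega⟩
  obtain ⟨c, hc, c', hc', hcX, hcX', hret⟩ := h.ret hT (X := (Finset.range (2 * n)).biUnion fun i => X (g i)) (by
    have : ((Finset.range (2 * n)).biUnion fun i => X (g i)).card ≤ (Finset.range (2 * n)).card * s :=
      Finset.card_biUnion_le_card_mul _ _ _ fun i hi => (hX _ (hgK i (Finset.mem_range.1 hi))).1.le
    rw [Finset.card_range] at this
    omega) (by have := gN 0 (by omega); omega)
  have hsub : ∀ i < 2 * n, ∀ z ∈ X (g i), z ∈ (↑((Finset.range (2 * n)).biUnion fun i => X (g i)) : Set V) := by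
    intro i hi z hz
    rw [Finset.mem_coe, Finset.mem_biUnion]
    exact ⟨i, Finset.mem_range.2 hi, hz⟩
  generalize ((Finset.range (2 * n)).biUnion fun i => X (g i)) = Y at hcX hcX' hret hsub
  have tX : ∀ c, Disjoint (Traj U (fun _ => c) 0 N) (↑Y : Set V) → ∀ i < 2 * n, ∀ α β, β ≤ N →
      ∀ z ∈ Traj U (fun _ => c) α β, z ∉ X (g i) := fun c hc i hi α β hb z hz hz' =>
    Set.disjoint_left.1 hc (Traj.sub (by omega) hb hz) (hsub i hi z hz')
  have tr : ∀ c < m, ∀ α β, α < β → β ≤ N → Rch r (Traj U (fun _ => c) α β) (P α c) (P β c) := fun c hc α β h1 h2 =>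
    h.traj_rch h1 h2 (fun _ _ _ => hc) (fun _ _ _ => ⟨by omega, by omega⟩)
  have tb : ∀ c < m, ∀ α β, β ≤ N → Traj U (fun _ => c) α β ⊆ Box U m N α β := fun c hc α β h2 =>
    Mesh.traj_box h2 (fun _ _ _ => hc) (fun _ _ _ => ⟨by omega, by omega⟩)
  have DCo : ∀ i j, i < j → ∀ z, z ∈ D (g i) → z ∈ D (g j) → False := fun i j hij z h1 h2 =>
    Set.disjoint_left.1 (h.box_far (gd i j hij)) h1 h2
  obtain ⟨L, p, p0, pL, pr, pm, pinj⟩ := hret.path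
  refine weave (n := n) (Co := fun i => Co (g i)) (X := fun i => ↑(X (g i)))
    (Reg := fun i => Box U m N (d (g i)) (d (g (i+1)) + 6 * m))
    (Low := fun i w => ∃ x < m, Rch r (↑(X (g i)) ∪ Co (g i))ᶜ (P (d (g i) + 4 * m) x) w)
    (Up := fun i w => ∃ x < m, Rch r (↑(X (g i)) ∪ Co (g i))ᶜ w (P (d (g i) + 2 * m) x))
    (p := p) (L := L) ⟨pr, fun i hi j hj => pinj i j hi hj⟩ ?_ ?_ ?_ ?_ ?_ ?_ ?_ ?_ ?_ ?_ ?_ ?_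
  · intro k hk u hu hz
    exact pm u hu (hsub k hk _ hz)
  · rintro k hk w v ⟨x, hx, h1⟩ hwv hv1 hv2
    exact ⟨x, hx, h1.trans (Rch.step h1.right (by rintro (h2 | h2); exacts [hv1 h2, hv2 h2]) hwv)⟩
  · rintro k hk w v ⟨x, hx, h1⟩ hwv hv1 hv2
    exact ⟨x, hx, (Rch.step (by rintro (h2 | h2); exacts [hv1 h2, hv2 h2]) h1.left hwv).trans h1⟩
  · rintro k hk w ⟨x, hx, h1⟩ ⟨y, hy, h2⟩
    refine (hX _ (hgK k hk)).2 x hx y hy ?_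
    refine ((h1.trans h2).mono_rel' ?_).mono (fun z hz hz' => hz (Or.inl hz'))
    intro a ha b hb hab
    exact ⟨hab, fun h3 => ha (Or.inr h3), fun h3 => hb (Or.inr h3)⟩
  · intro k hk
    have := gN k hk
    refine ⟨c, hc, ?_⟩
    rw [p0]
    refine (tr c hc _ _ (by omega) le_rfl).mono ?_
    rintro z hz (h1 | h1)
    · exact tX c hcX k hk _ _ le_rfl z hz h1
    · exact Set.disjoint_left.1 h.box_co' (tb c hc _ _ le_rfl hz) h1
  · intro k hk
    have := gN k hk
    refine ⟨c', hc', ?_⟩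
    rw [pL]
    refine (tr c' hc' _ _ (by omega) (by omega)).mono ?_
    rintro z hz (h1 | h1)
    · exact tX c' hcX' k hk _ _ (by omega) z hz h1
    · exact Set.disjoint_left.1 h.box_co (tb c' hc' _ _ (by omega) hz) h1
  · intro j k hjk hk w hw
    have a1 := gN k hk
    have a2 := gd j k hjk
    refine ⟨c', hc', ?_⟩
    refine ((h.core_out (by omega) hc' hw).mono ?_).trans ((tr c' hc' _ _ (by omega) (by omega)).mono ?_)
    · rintro z hz (h1 | h1)
      · exact hXD k hk j (by omega) (by omega) z hz h1
      · exact DCo j k hjk z hz (CoD _ h1)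
    · rintro z hz (h1 | h1)
      · exact tX c' hcX' k hk _ _ (by omega) z hz h1
      · exact Set.disjoint_left.1 h.box_co (tb c' hc' _ _ (by omega) hz) h1
  · intro k j hkj hj w hw
    have a1 := gN j hj
    have a2 := gd k j hkj
    refine ⟨c, hc, ?_⟩
    refine ((tr c hc _ (d (g j)) (by omega) (by omega)).mono ?_).trans ((h.core_in (by omega) hc hw).mono ?_)
    · rintro z hz (h1 | h1)
      · exact tX c hcX k (by omega) _ _ (by omega) z hz h1
      · exact Set.disjoint_left.1 h.box_co' (tb c hc _ _ (by omega) hz) h1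
    · rintro z hz (h1 | h1)
      · exact hXD k (by omega) j hj (by omega) z hz h1
      · exact DCo k j hkj z (CoD _ h1) hz
  · intro k hk w hw v hv
    have a1 := gN (k+1) hk
    have a2 := gd k (k+1) (by omega)
    refine ⟨D (g k) ∪ Traj U (fun _ => c) (d (g k) + 6 * m) (d (g (k+1))) ∪ D (g (k+1)), ?_, ?_, ?_⟩
    · rintro z ((hz | hz) | hz)
      · exact Box.sub le_rfl (by omega) hz
      · exact Box.sub (by omega) (by omega) (tb c hc _ _ (by omega) hz)
      · exact Box.sub (by omega) le_rfl hz
    · exact ((h.core_out (by omega) hc hw).mono fun z hz => Or.inl (Or.inl hz)).trans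
        (((tr c hc _ _ (by omega) (by omega)).mono fun z hz => Or.inl (Or.inr hz)).trans
        ((h.core_in (by omega) hc hv).mono fun z hz => Or.inr hz))
    · intro j hj h1 h2
      rw [Set.disjoint_left]
      rintro z ((hz | hz) | hz)
      · exact hXD j hj k (by omega) h1 z hz
      · exact tX c hcX j hj _ _ (by omega) z hz
      · exact hXD j hj (k+1) hk h2 z hz
  · intro k hk j hj h1 h2
    have key : Disjoint (Box U m N (d (g k)) (d (g (k+1)) + 6 * m)) (D (g j)) := by
      rcases Nat.lt_or_ge j k with e | e
      · exact (h.box_far (by have := gd j k e; omega)).symm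
      · exact h.box_far (by have := gd (k+1) j (by omega); omega)
    exact key.mono_right (CoD _)
  · intro k i h1 h2
    exact h.box_far (by have := gd (k+1) i (by omega); omega)
  · intro k j h1 h2
    exact (h.box_far (by have := gd k j h1; omega)).mono (CoD _) (CoD _)

theorem erdosPosa_pack (k : ℕ) : ∃ t : ℕ, ∀ (V : Type) [Finite V] (r : V → V → Prop),
    Pack r k ∨ ∃ X : Finset V, X.card ≤ t ∧ ¬ HasCyc r (↑X : Set V)ᶜ := by
  classical
  induction k with
  | zero => exact ⟨0, fun V _ r => Or.inl ⟨fun _ => ∅, by omega, by omega⟩⟩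
  | succ n ih =>
    obtain ⟨t0, ht0⟩ := ih
    obtain ⟨m, N, hfin⟩ := final (n+1)
    obtain ⟨q, M, hmg⟩ := mesh_of_grid (m+N+1) (2*N)
    obtain ⟨K, hK⟩ := grid_exists (n+1) q M
    refine ⟨K + 2 * t0, fun V _ r => ?_⟩
    by_contra hcon
    push Not at hcon
    obtain ⟨h1, h2⟩ := hcon
    have : Nonempty V := by
      obtain ⟨u, -⟩ := h2 ∅ (by simp)
      exact ⟨u⟩
    rcases hK (V := V) (r := r) (n0 := n) (t0 := t0) (fun r' => ht0 V r') h1 (by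
      intro Y hY
      by_contra hc
      exact hY (h2 Y (by omega))) with h3 | ⟨T, hT, hgr⟩
    · exact h1 h3
    · obtain ⟨P, U, hmesh⟩ := hmg hgr
      exact h1 (hfin (hT T (Finset.Subset.refl _)) (mesh3 hmesh))

end FinalM

theorem dicycles_vertex_erdosPosa (k : ℕ) :
    ∃ t : ℕ, ∀ (V : Type) [Fintype V] [DecidableEq V] (G : Digraph V),
      (∀ v, ¬ G.Adj v v) →
      (∃ C : Fin k → List V, (∀ i, G.IsDicycle (C i)) ∧
        ∀ i j, i ≠ j → ∀ v ∈ C i, v ∉ C j) ∨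
      (∃ X : Finset V, X.card ≤ t ∧
        ∀ l : List V, (∀ v ∈ l, v ∉ X) → ¬ G.IsDicycle l) := by
  obtain ⟨t, ht⟩ := erdosPosa_pack k
  refine ⟨t, ?_⟩
  intro V _ _ G hG
  rcases ht V G.Adj with ⟨f, h1, h2⟩ | ⟨X, h1, h2⟩
  · left
    choose C hC hC' using fun i : Fin k => (h1 i i.2).dicycle hG
    refine ⟨C, hC, ?_⟩
    intro i j hij v hv hv'
    exact Set.disjoint_left.1 (h2 i i.2 j j.2 (fun e => hij (Fin.ext e))) (hC' i v hv) (hC' j v hv')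
  · right
    refine ⟨X, h1, fun l hl hc => h2 ((HasCyc.of_dicycle hc).mono ?_)⟩
    intro v hv hv'
    exact hl v hv hv'
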